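/- arXiv:1102.1023 — 2 statements merged into one kernel-verified Lean document; each statement's English description precedes it below -/
import Mathlib

section
/- Let G be a finite simple graph that is vertex-critical with respect to chromatic number (i.e., χ(G-v) < χ(G) for every vertex v). If χ(G) ≥ Δ(G) ≥ 6 and the clique number of the subgraph of G induced on vertices of degree at least χ(G) is at most ⌊Δ(G)/2⌋ - 2, then G is isomorphic to the complete graph K_{χ(G)}. -/
open SimpleGraph

set_option linter.unusedSectionVars false
set_option linter.unusedDecidableInType false
set_option linter.unusedFintypeInType false

namespace RabernM

variable {V : Type*} [Fintype V] [DecidableEq V] (G : SimpleGraph V) [DecidableRel G.Adj]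

/-- `c` is proper on `U`. -/
def Prp {k : ℕ} (c : V → Fin k) (U : Finset V) : Prop :=
  ∀ u ∈ U, ∀ v ∈ U, G.Adj u v → c u ≠ c v

/-- `G[U]` is `k`-colourable. -/
def Col (U : Finset V) (k : ℕ) : Prop := ∃ c : V → Fin k, Prp G c U

/-- `G[U]` is minimally non-`k`-colourable. -/
def Crit (A : Finset V) (k : ℕ) : Prop :=
  ¬ Col G A k ∧ ∀ v ∈ A, Col G (A.erase v) k

/-- The number of neighbours of `v` in `S`. -/
def dg (S : Finset V) (v : V) : ℕ := (S.filter (G.Adj v)).card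

variable {G}

theorem Prp.mono {k : ℕ} {c : V → Fin k} {U W : Finset V} (h : Prp G c W) (hs : U ⊆ W) :
    Prp G c U := fun u hu v hv => h u (hs hu) v (hs hv)

theorem Col.mono {k : ℕ} {U W : Finset V} (h : Col G W k) (hs : U ⊆ W) :
    Col G U k := let ⟨c, hc⟩ := h; ⟨c, hc.mono hs⟩

theorem dg_mono {S T : Finset V} (h : S ⊆ T) (v : V) : dg G S v ≤ dg G T v :=
  Finset.card_le_card (Finset.filter_subset_filter _ h)

theorem Crit.col_of_ssubset {k : ℕ} {A S : Finset V} (h : Crit G A k) (hs : S ⊆ A)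
    (hne : S ≠ A) : Col G S k := by
  obtain ⟨v, hv, hvS⟩ : ∃ v ∈ A, v ∉ S := by
    by_contra hcon
    push Not at hcon
    exact hne (Finset.Subset.antisymm hs hcon)
  refine (h.2 v hv).mono ?_
  intro u hu
  exact Finset.mem_erase.2 ⟨fun e => hvS (e ▸ hu), hs hu⟩

theorem step {k : ℕ} {c : V → Fin k} {U : Finset V} (h : Prp G c U) {v : V} (hv : v ∉ U)
    (hf : ((U.filter (G.Adj v)).image c).card < k) :
    ∃ c' : V → Fin k, Prp G c' (insert v U) ∧ ∀ u, u ≠ v → c' u = c u := by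
  obtain ⟨a, ha⟩ : ∃ a : Fin k, a ∉ (U.filter (G.Adj v)).image c := by
    by_contra hcon
    push Not at hcon
    have : (U.filter (G.Adj v)).image c = Finset.univ := by
      ext a; simp only [Finset.mem_univ, iff_true]; exact hcon a
    rw [this] at hf
    simp at hf
  refine ⟨Function.update c v a, ?_, fun u hu => Function.update_of_ne hu _ _⟩
  have key : ∀ u ∈ U, G.Adj v u → c u ≠ a := by
    intro u hu hvu e
    exact ha (Finset.mem_image.2 ⟨u, Finset.mem_filter.2 ⟨hu, hvu⟩, e⟩)
  have nv : ∀ u ∈ U, u ≠ v := fun u hu e => hv (e ▸ hu)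
  intro p hp q hq hpq
  rcases Finset.mem_insert.1 hp with hp' | hp'
  · subst hp'
    rcases Finset.mem_insert.1 hq with rfl | hq'
    · exact absurd hpq (G.irrefl)
    · rw [Function.update_self, Function.update_of_ne (nv q hq')]
      exact (key q hq' hpq).symm
  · rcases Finset.mem_insert.1 hq with rfl | hq'
    · rw [Function.update_self, Function.update_of_ne (nv p hp')]
      exact key p hp' hpq.symm
    · rw [Function.update_of_ne (nv p hp'), Function.update_of_ne (nv q hq')]
      exact h p hp' q hq' hpq

theorem step_unc {k : ℕ} {c : V → Fin k} {U W : Finset V} (h : Prp G c U) (hUW : U ⊆ W)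
    {v : V} (hv : v ∉ U) (hd : dg G W v ≤ k) {w : V} (hw : w ∈ W) (hwU : w ∉ U)
    (hvw : G.Adj v w) :
    ∃ c' : V → Fin k, Prp G c' (insert v U) ∧ ∀ u, u ≠ v → c' u = c u := by
  refine step h hv (lt_of_le_of_lt Finset.card_image_le (lt_of_lt_of_le ?_ hd))
  refine Finset.card_lt_card (Finset.ssubset_iff_of_subset (Finset.filter_subset_filter _ hUW) |>.2 ?_)
  exact ⟨w, by simp [hw, hvw], by simp [hwU]⟩

theorem step_rep {k : ℕ} {c : V → Fin k} {U W : Finset V} (h : Prp G c U) (hUW : U ⊆ W)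
    {v : V} (hv : v ∉ U) (hd : dg G W v ≤ k) {w w' : V} (hw : w ∈ U) (hw' : w' ∈ U)
    (hvw : G.Adj v w) (hvw' : G.Adj v w') (hne : w ≠ w') (hc : c w = c w') :
    ∃ c' : V → Fin k, Prp G c' (insert v U) ∧ ∀ u, u ≠ v → c' u = c u := by
  refine step h hv (lt_of_lt_of_le ?_ ((dg_mono hUW v).trans hd))
  have : (U.filter (G.Adj v)).image c = ((U.filter (G.Adj v)).erase w).image c := by
    ext a
    simp only [Finset.mem_image, Finset.mem_erase]
    constructor
    · rintro ⟨u, hu, rfl⟩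
      by_cases e : u = w
      · exact ⟨w', ⟨hne.symm, by simp [hw', hvw']⟩, by rw [e, hc]⟩
      · exact ⟨u, ⟨e, hu⟩, rfl⟩
    · rintro ⟨u, hu, rfl⟩
      exact ⟨u, hu.2, rfl⟩
  rw [this]
  refine lt_of_le_of_lt Finset.card_image_le ?_
  exact Finset.card_erase_lt_of_mem (by simp [hw, hvw])

theorem Crit.le_dg {k : ℕ} {A : Finset V} (h : Crit G A k) {v : V} (hv : v ∈ A) :
    k ≤ dg G A v := by
  by_contra hcon
  push Not at hcon
  obtain ⟨c, hc⟩ := h.2 v hv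
  obtain ⟨c', hc', -⟩ := step hc (Finset.notMem_erase v A)
    (lt_of_le_of_lt Finset.card_image_le (lt_of_le_of_lt (dg_mono (Finset.erase_subset v A) v) hcon))
  rw [Finset.insert_erase hv] at hc'
  exact h.1 ⟨c', hc'⟩

theorem Crit.conn {k : ℕ} {A S : Finset V} (h : Crit G A k) (hs : S ⊆ A) (hne : S.Nonempty)
    (hcl : ∀ u ∈ S, ∀ v ∈ A, G.Adj u v → v ∈ S) : S = A := by
  by_contra hSA
  obtain ⟨c, hc⟩ := h.col_of_ssubset hs hSA
  obtain ⟨c', hc'⟩ := h.col_of_ssubset (S := A \ S) Finset.sdiff_subset (by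
    intro e
    obtain ⟨x, hx⟩ := hne
    have := hs hx
    rw [← e] at this
    exact (Finset.mem_sdiff.1 this).2 hx)
  refine h.1 ⟨fun v => if v ∈ S then c v else c' v, ?_⟩
  intro u hu v hv huv
  by_cases h1 : u ∈ S
  · have h2 := hcl u h1 v hv huv
    simpa [h1, h2] using hc u h1 v h2 huv
  · have h2 : v ∉ S := fun h2 => h1 (hcl v h2 u hu huv.symm)
    simpa [h1, h2] using hc' u (by simp [hu, h1]) v (by simp [hv, h2]) huv

theorem Crit.conn2 {k : ℕ} {A S : Finset V} (h : Crit G A k) {x : V} (hx : x ∈ A)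
    (hs : S ⊆ A.erase x) (hne : S.Nonempty)
    (hcl : ∀ u ∈ S, ∀ v ∈ A, v ≠ x → G.Adj u v → v ∈ S) : S = A.erase x := by
  by_contra hSA
  have hxS : x ∉ S := fun e => Finset.notMem_erase x A (hs e)
  have hSA' : S ⊆ A := hs.trans (Finset.erase_subset _ _)
  obtain ⟨c, hc⟩ := h.col_of_ssubset (S := insert x S) (by
    intro u hu
    rcases Finset.mem_insert.1 hu with rfl | hu
    · exact hx
    · exact hSA' hu) (by
    intro e
    apply hSA
    rw [← e, Finset.erase_insert hxS])
  obtain ⟨c', hc'⟩ := h.col_of_ssubset (S := A \ S) Finset.sdiff_subset (by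
    intro e
    obtain ⟨y, hy⟩ := hne
    have := hSA' hy
    rw [← e] at this
    exact (Finset.mem_sdiff.1 this).2 hy)
  refine h.1 ⟨fun v => if v ∈ S then Equiv.swap (c x) (c' x) (c v) else c' v, ?_⟩
  have cross : ∀ u ∈ S, ∀ v ∈ A, v ∉ S → G.Adj u v →
      Equiv.swap (c x) (c' x) (c u) ≠ c' v := by
    intro u hu v hv hvS huv
    have hvx : v = x := by
      by_contra hne
      exact hvS (hcl u hu v hv hne huv)
    subst hvx
    intro e
    have e2 : Equiv.swap (c v) (c' v) (c u) = Equiv.swap (c v) (c' v) (c v) := by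
      rw [e, Equiv.swap_apply_left]
    exact hc u (by simp [hu]) v (by simp) huv ((Equiv.swap _ _).injective e2)
  intro u hu v hv huv
  by_cases h1 : u ∈ S
  · by_cases h2 : v ∈ S
    · have := hc u (by simp [h1]) v (by simp [h2]) huv
      simp only [h1, h2, if_true]
      exact fun e => this ((Equiv.swap _ _).injective e)
    · simpa [h1, h2] using cross u h1 v hv h2 huv
  · by_cases h2 : v ∈ S
    · simpa [h1, h2] using (cross v h2 u hu h1 huv.symm).symm
    · simpa [h1, h2] using hc' u (by simp [hu, h1]) v (by simp [hv, h2]) huv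

/-- Greedy colouring along a path ending (uncoloured) at `b`. -/
theorem greedy {k : ℕ} {W : Finset V} (hd : ∀ v ∈ W, dg G W v ≤ k) :
    ∀ (t : List V) (b : V) (U : Finset V) (c : V → Fin k), Prp G c U → U ⊆ W →
      (b :: t).IsChain G.Adj → (b :: t).Nodup → (∀ v ∈ b :: t, v ∈ W ∧ v ∉ U) →
      ∃ c' : V → Fin k, Prp G c' (U ∪ t.toFinset) ∧ ∀ u ∈ U, c' u = c u := by
  intro t
  induction t with
  | nil =>
    intro b U c hc _ _ _ _
    exact ⟨c, by simpa using hc, fun _ _ => rfl⟩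
  | cons a t ih =>
    intro b U c hc hUW hch hnd hm
    obtain ⟨c1, hc1, h1⟩ := ih a U c hc hUW (List.isChain_cons_cons.1 hch).2
      (List.nodup_cons.1 hnd).2 (fun v hv => hm v (List.mem_cons_of_mem _ hv))
    have hba : G.Adj a b := ((List.isChain_cons_cons.1 hch).1).symm
    have hb := hm b (by simp)
    have ha := hm a (by simp)
    have hsub : U ∪ t.toFinset ⊆ W := by
      intro v hv
      rcases Finset.mem_union.1 hv with hv | hv
      · exact hUW hv
      · exact (hm v (by simp [List.mem_toFinset.1 hv])).1
    have hn1 : a ∉ t := (List.nodup_cons.1 (List.nodup_cons.1 hnd).2).1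
    have hn2 : b ∉ t := fun e => (List.nodup_cons.1 hnd).1 (List.mem_cons_of_mem _ e)
    obtain ⟨c2, hc2, h2⟩ := step_unc hc1 hsub (v := a) (by simp [ha.2, hn1]) (hd a ha.1)
      (w := b) hb.1 (by simp [hb.2, hn2]) hba
    refine ⟨c2, ?_, ?_⟩
    · have : U ∪ (a :: t).toFinset = insert a (U ∪ t.toFinset) := by
        ext v; simp
      rw [this]; exact hc2
    · intro u hu
      rw [h2 u (fun e => ha.2 (e ▸ hu)), h1 u hu]

theorem split_first {P : V → Prop} : ∀ (l : List V), (∃ x ∈ l, P x) →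
    ∃ l1 a l2, l = l1 ++ a :: l2 ∧ P a ∧ ∀ x ∈ l1, ¬ P x := by
  intro l
  induction l with
  | nil => rintro ⟨x, hx, -⟩; simp at hx
  | cons b l ih =>
    intro h
    by_cases hb : P b
    · exact ⟨[], b, l, rfl, hb, by simp⟩
    · obtain ⟨l1, a, l2, e, ha, h1⟩ := ih (by
        obtain ⟨x, hx, hP⟩ := h
        rcases List.mem_cons.1 hx with rfl | hx
        · exact absurd hP hb
        · exact ⟨x, hx, hP⟩)
      refine ⟨b :: l1, a, l2, by simp [e], ha, ?_⟩
      intro x hx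
      rcases List.mem_cons.1 hx with rfl | hx
      · exact hb
      · exact h1 x hx

theorem split_last {P : V → Prop} (l : List V) (h : ∃ x ∈ l, P x) :
    ∃ l1 a l2, l = l1 ++ a :: l2 ∧ P a ∧ ∀ x ∈ l2, ¬ P x := by
  obtain ⟨l1, a, l2, e, ha, h1⟩ := split_first (P := P) l.reverse (by simpa using h)
  refine ⟨l2.reverse, a, l1.reverse, ?_, ha, by simpa using h1⟩
  have := congrArg List.reverse e
  simpa using this

theorem max_list (P : List V → Prop) (h0 : ∃ q, P q) (N : ℕ) (hN : ∀ q, P q → q.length ≤ N) :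
    ∃ q, P q ∧ ∀ q', P q' → q'.length ≤ q.length := by
  by_contra hcon
  push Not at hcon
  have : ∀ n : ℕ, ∃ q, P q ∧ n ≤ q.length := by
    intro n
    induction n with
    | zero => obtain ⟨q, hq⟩ := h0; exact ⟨q, hq, Nat.zero_le _⟩
    | succ n ih =>
      obtain ⟨q, hq, hn⟩ := ih
      obtain ⟨q', hq', hlt⟩ := hcon q hq
      exact ⟨q', hq', by omega⟩
  obtain ⟨q, hq, hn⟩ := this (N + 1)
  have := hN q hq
  omega

set_option maxHeartbeats 2000000 in
/-- Case of a Hamiltonian path. -/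
theorem brooks_ham {k : ℕ} (hk : 3 ≤ k) {W : Finset V} (hcr : Crit G W k)
    (hd : ∀ v ∈ W, dg G W v ≤ k) {v1 v2 v3 : V} (h13 : v1 ≠ v3) (hn : ¬ G.Adj v1 v3)
    {q : List V} (hch : (q ++ [v3, v2, v1]).IsChain G.Adj) (hnd : (q ++ [v3, v2, v1]).Nodup)
    (hW : ∀ v, v ∈ W ↔ v ∈ q ++ [v3, v2, v1]) : False := by
  have hv2 : v2 ∈ W := by rw [hW]; simp
  have a32 : G.Adj v3 v2 := by
    have := (List.isChain_append.1 hch).2.1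
    simp at this; exact this.1
  have a21 : G.Adj v2 v1 := by
    have := (List.isChain_append.1 hch).2.1
    simp at this; exact this.2
  obtain ⟨m, hm, hm13⟩ : ∃ m ∈ W.filter (G.Adj v2), m ∉ ({v1, v3} : Finset V) := by
    by_contra hcon
    push Not at hcon
    have h1 := Finset.card_le_card (show W.filter (G.Adj v2) ⊆ {v1, v3} from hcon)
    have h2 := hcr.le_dg hv2
    have h3 := Finset.card_le_two (a := v1) (b := v3)
    unfold dg at h2
    omega
  simp only [Finset.mem_filter, Finset.mem_insert, Finset.mem_singleton, not_or] at hm hm13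
  have hmq : m ∈ q := by
    have := (hW m).1 hm.1
    simp only [List.mem_append, List.mem_cons, List.not_mem_nil, or_false] at this
    rcases this with h | h | h | h
    · exact h
    · exact absurd h hm13.2
    · exact absurd hm.2 (by rw [h]; exact G.irrefl)
    · exact absurd h hm13.1
  obtain ⟨P1, P2, rfl⟩ := List.append_of_mem hmq
  let c0 : V → Fin k := fun _ => ⟨0, by omega⟩
  have hc0 : Prp G c0 {v1, v3} := by
    intro u hu v hv huv
    simp only [Finset.mem_insert, Finset.mem_singleton] at hu hv
    rcases hu with rfl | rfl <;> rcases hv with rfl | rfl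
    · exact absurd huv G.irrefl
    · exact absurd huv hn
    · exact absurd huv.symm hn
    · exact absurd huv G.irrefl
  have hU0 : ({v1, v3} : Finset V) ⊆ W := by
    intro v hv
    simp only [Finset.mem_insert, Finset.mem_singleton] at hv
    rw [hW]
    rcases hv with rfl | rfl <;> simp
  rw [List.append_assoc] at hch
  have hch1 : (m :: P2).IsChain G.Adj := by
    have := (List.isChain_append.1 hch).2.1
    exact (List.isChain_append.1 this).1
  have hch2 : (P1 ++ [m]).IsChain G.Adj := by
    have : P1 ++ (m :: P2 ++ [v3, v2, v1]) = (P1 ++ [m]) ++ (P2 ++ [v3, v2, v1]) := by simp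
    rw [this] at hch
    exact (List.isChain_append.1 hch).1
  have hch3 : (v2 :: m :: P1.reverse).IsChain G.Adj := by
    refine List.isChain_cons_cons.2 ⟨hm.2, ?_⟩
    have : m :: P1.reverse = (P1 ++ [m]).reverse := by simp
    rw [this, List.isChain_reverse]
    exact hch2.imp (fun a b h => h.symm)
  simp only [List.nodup_append, List.nodup_cons, List.mem_append, List.mem_cons,
    List.not_mem_nil, or_false] at hnd
  have hmem : ∀ v, v ∈ W ↔ ((v ∈ P1 ∨ v = m ∨ v ∈ P2) ∨ v = v3 ∨ v = v2 ∨ v = v1) := by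
    intro v; rw [hW]; simp; tauto
  obtain ⟨c1, hc1, e1⟩ := greedy hd P2 m {v1, v3} c0 hc0 hU0 hch1
    (by rw [List.nodup_cons]; tauto)
    (by
      intro v hv
      have hv' : v = m ∨ v ∈ P2 := by simpa using hv
      refine ⟨(hmem v).2 (by tauto), ?_⟩
      have := hnd.2.2 v (by tauto)
      simp only [Finset.mem_insert, Finset.mem_singleton]
      rintro (rfl | rfl)
      · exact this _ (Or.inr (Or.inr rfl)) rfl
      · exact this _ (Or.inl rfl) rfl)
  have hU1 : ({v1, v3} : Finset V) ∪ P2.toFinset ⊆ W := by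
    intro v hv
    simp only [Finset.mem_union, Finset.mem_insert, Finset.mem_singleton, List.mem_toFinset] at hv
    rw [hmem]; tauto
  have key : ∀ v, v = m ∨ v ∈ P1 → v ≠ v1 ∧ v ≠ v2 ∧ v ≠ v3 ∧ v ∉ P2 := by
    intro v hv
    have h1 := hnd.2.2 v (by tauto)
    refine ⟨h1 _ (by tauto), h1 _ (by tauto), h1 _ (by tauto), ?_⟩
    intro h2
    rcases hv with rfl | hv
    · tauto
    · exact hnd.1.2.2 v hv v (by tauto) rfl
  have k2 : v2 ≠ v1 ∧ v2 ≠ v3 ∧ v2 ∉ P2 := by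
    refine ⟨a21.ne, a32.ne.symm, ?_⟩
    intro h
    exact hnd.2.2 v2 (by tauto) v2 (by tauto) rfl
  obtain ⟨c2, hc2, e2⟩ := greedy hd (m :: P1.reverse) v2 _ c1 hc1 hU1 hch3
    (by
      have hmP : m ∉ P1 := fun h => hnd.1.2.2 m h m (by tauto) rfl
      simp only [List.nodup_cons, List.nodup_reverse, List.mem_cons, List.mem_reverse]
      refine ⟨?_, hmP, hnd.1.1⟩
      intro h
      exact (key v2 h).2.1 rfl)
    (by
      intro v hv
      have hv' : v = v2 ∨ (v = m ∨ v ∈ P1) := by simpa using hv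
      refine ⟨(hmem v).2 (by tauto), ?_⟩
      simp only [Finset.mem_union, Finset.mem_insert, Finset.mem_singleton, List.mem_toFinset]
      rcases hv' with rfl | hv'
      · tauto
      · have := key v hv'; tauto)
  have hU2 : ({v1, v3} : Finset V) ∪ P2.toFinset ∪ (m :: P1.reverse).toFinset ⊆ W := by
    intro v hv
    simp only [Finset.mem_union, Finset.mem_insert, Finset.mem_singleton, List.mem_toFinset,
      List.mem_cons, List.mem_reverse] at hv
    rw [hmem]; tauto
  obtain ⟨c3, hc3, -⟩ := step_rep hc2 hU2 (v := v2) (by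
      simp only [Finset.mem_union, Finset.mem_insert, Finset.mem_singleton, List.mem_toFinset,
        List.mem_cons, List.mem_reverse]
      have := key v2
      tauto) (hd v2 hv2) (w := v1) (w' := v3) (by simp) (by simp) a21 a32.symm h13
      (by rw [e2 v1 (by simp), e2 v3 (by simp), e1 v1 (by simp), e1 v3 (by simp)])
  refine hcr.1 ⟨c3, hc3.mono ?_⟩
  intro v hv
  rw [hmem] at hv
  simp only [Finset.mem_union, Finset.mem_insert, Finset.mem_singleton, List.mem_toFinset,
        List.mem_cons, List.mem_reverse]
  tauto

/-- Case of a cycle (given as `X ++ b :: Y`) some of whose vertices have outside neighbours. -/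
theorem brooks_cyc {k : ℕ} {W : Finset V} (hcr : Crit G W k)
    (hd : ∀ v ∈ W, dg G W v ≤ k) {a b u : V} {X Y : List V}
    (hch : (b :: Y ++ (X ++ [a])).IsChain G.Adj) (hnd : (b :: Y ++ (X ++ [a])).Nodup)
    (hab : G.Adj b a)
    (hW : ∀ v ∈ b :: Y ++ (X ++ [a]), v ∈ W)
    (ha : ∀ v ∈ W, v ∉ b :: Y ++ (X ++ [a]) → ¬ G.Adj a v)
    (hu : u ∈ W) (huC : u ∉ b :: Y ++ (X ++ [a])) (hub : G.Adj b u) : False := by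
  set C := b :: Y ++ (X ++ [a]) with hC
  have hbW : b ∈ W := hW b (by simp [hC])
  obtain ⟨c, hc⟩ := hcr.col_of_ssubset (S := W \ C.toFinset) Finset.sdiff_subset (by
    intro e
    rw [← e] at hbW
    simp [hC] at hbW)
  have hmC : ∀ v, v ∈ C ↔ v = b ∨ v ∈ Y ∨ v ∈ X ∨ v = a := by
    intro v; simp [hC]
  let c0 : V → Fin k := Function.update c a (c u)
  have hc0 : Prp G c0 (insert a (W \ C.toFinset)) := by
    have hne : ∀ p ∈ W \ C.toFinset, p ≠ a := by
      intro p hp e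
      subst e
      simp [hmC] at hp
    have hna : ∀ p ∈ W \ C.toFinset, ¬ G.Adj a p := by
      intro p hp
      exact ha p (Finset.mem_sdiff.1 hp).1 (by simpa using (Finset.mem_sdiff.1 hp).2)
    intro p hp p' hp' hpp
    rcases Finset.mem_insert.1 hp with e | h1 <;> rcases Finset.mem_insert.1 hp' with e' | h2
    · subst e; subst e'; exact absurd hpp G.irrefl
    · subst e; exact absurd hpp (hna _ h2)
    · subst e'; exact absurd hpp.symm (hna _ h1)
    · simp only [c0]
      rw [Function.update_of_ne (hne _ h1), Function.update_of_ne (hne _ h2)]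
      exact hc _ h1 _ h2 hpp
  have hU0 : insert a (W \ C.toFinset) ⊆ W := by
    intro v hv
    rcases Finset.mem_insert.1 hv with rfl | h
    · exact hW _ (by simp [hmC])
    · exact (Finset.mem_sdiff.1 h).1
  have hassoc : C = (b :: (Y ++ X)) ++ [a] := by simp [hC]
  have hch' : (b :: (Y ++ X)).IsChain G.Adj := by
    rw [hassoc] at hch
    exact (List.isChain_append.1 hch).1
  rw [hassoc, List.nodup_append] at hnd
  have hnotin : ∀ v ∈ b :: (Y ++ X), v ∈ W ∧ v ∉ insert a (W \ C.toFinset) := by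
    intro v hv
    have hvC : v ∈ C := by rw [hassoc]; exact List.mem_append_left _ hv
    refine ⟨hW v hvC, ?_⟩
    have := hnd.2.2 v hv a (by simp)
    simp [this, hvC]
  obtain ⟨c1, hc1, e1⟩ := greedy hd (Y ++ X) b _ c0 hc0 hU0 hch' hnd.1 hnotin
  have hua : u ≠ a := by
    rintro rfl; exact huC (by simp [hmC])
  have huU : u ∈ insert a (W \ C.toFinset) := by simp [hu, huC]
  obtain ⟨c2, hc2, -⟩ := step_rep hc1 (W := W) (by
      intro v hv
      rcases Finset.mem_union.1 hv with h | h
      · exact hU0 h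
      · exact (hnotin v (List.mem_cons_of_mem _ (List.mem_toFinset.1 h))).1) (v := b) (by
      rw [Finset.mem_union, not_or]
      refine ⟨(hnotin b (by simp)).2, ?_⟩
      rw [List.mem_toFinset]
      exact (List.nodup_cons.1 hnd.1).1) (hd b hbW) (w := u) (w' := a)
      (Finset.mem_union_left _ huU) (Finset.mem_union_left _ (by simp)) hub hab hua
      (by
        rw [e1 u huU, e1 a (by simp)]
        simp only [c0]
        rw [Function.update_self, Function.update_of_ne hua])
  refine hcr.1 ⟨c2, hc2.mono ?_⟩
  intro v hv
  by_cases hvC : v ∈ C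
  · rw [hmC] at hvC
    simp only [Finset.mem_insert, Finset.mem_union, List.mem_toFinset, List.mem_append]
    tauto
  · simp [hv, hvC]

theorem brooks {k : ℕ} (hk : 3 ≤ k) {W : Finset V} (hcr : Crit G W k)
    (hd : ∀ v ∈ W, dg G W v ≤ k) : ∀ a ∈ W, ∀ b ∈ W, a ≠ b → G.Adj a b := by
  by_contra hcon
  push Not at hcon
  obtain ⟨a, haW, b, hbW, hab, hnab⟩ := hcon
  obtain ⟨v2, h2, v1, h1, v3, h3, a21, a23, h13, hn13⟩ : ∃ v2 ∈ W, ∃ v1 ∈ W, ∃ v3 ∈ W,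
      G.Adj v2 v1 ∧ G.Adj v2 v3 ∧ v1 ≠ v3 ∧ ¬ G.Adj v1 v3 := by
    by_contra hno
    push Not at hno
    have := hcr.conn (S := insert a (W.filter (G.Adj a))) (by
      intro v hv
      rcases Finset.mem_insert.1 hv with rfl | hv
      · exact haW
      · exact (Finset.mem_filter.1 hv).1) (by simp) (by
      intro p hp v hv hpv
      simp only [Finset.mem_insert, Finset.mem_filter] at hp ⊢
      rcases hp with rfl | hp
      · exact Or.inr ⟨hv, hpv⟩
      · by_cases e : v = a
        · exact Or.inl e
        · exact Or.inr ⟨hv, hno p hp.1 a haW v hv hp.2.symm hpv (Ne.symm e)⟩)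
    rw [← this] at hbW
    simp only [Finset.mem_insert, Finset.mem_filter] at hbW
    rcases hbW with h | h
    · exact hab h.symm
    · exact hnab h.2
  obtain ⟨q, ⟨hch, hnd, hsub⟩, hmax⟩ := max_list
    (fun q => (q ++ [v3, v2, v1]).IsChain G.Adj ∧ (q ++ [v3, v2, v1]).Nodup ∧
      ∀ v ∈ q ++ [v3, v2, v1], v ∈ W)
    ⟨[], by simp [a21, a23.symm], by simp [a21.ne, a23.ne.symm, h13.symm], by simp [h1, h2, h3]⟩
    W.card (by
      rintro q ⟨-, hnd, hs⟩
      have e := List.toFinset_card_of_nodup hnd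
      have := Finset.card_le_card (show (q ++ [v3, v2, v1]).toFinset ⊆ W from
        fun v hv => hs v (List.mem_toFinset.1 hv))
      rw [e, List.length_append] at this
      omega)
  obtain ⟨h, w, p', hp⟩ : ∃ h w p', q ++ [v3, v2, v1] = h :: w :: p' := by
    rcases q with _ | ⟨x, _ | ⟨y, q⟩⟩
    · exact ⟨_, _, _, rfl⟩
    · exact ⟨_, _, _, rfl⟩
    · exact ⟨_, _, _, rfl⟩
  have hmaxn : ∀ n ∈ W, G.Adj h n → n ∈ q ++ [v3, v2, v1] := by
    intro n hn hhn
    by_contra hnot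
    have := hmax (n :: q) ⟨by
      rw [List.cons_append, hp, List.isChain_cons_cons]
      exact ⟨hhn.symm, hp ▸ hch⟩, by
      rw [List.cons_append, List.nodup_cons]
      exact ⟨hnot, hnd⟩, by
      intro v hv
      rw [List.cons_append] at hv
      rcases List.mem_cons.1 hv with rfl | hv
      · exact hn
      · exact hsub v hv⟩
    simp at this
  have hhw : G.Adj h w := by
    rw [hp, List.isChain_cons_cons] at hch
    exact hch.1
  obtain ⟨C', j, D, hC', hj, hD⟩ := split_last (P := G.Adj h) (w :: p') ⟨w, by simp, hhw⟩
  have hpC : q ++ [v3, v2, v1] = (h :: C' ++ [j]) ++ D := by rw [hp, hC']; simp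
  have hhC : ∀ n ∈ W, G.Adj h n → n ∈ h :: C' ++ [j] := by
    intro n hn hhn
    have := hmaxn n hn hhn
    rw [hpC] at this
    rcases List.mem_append.1 this with h' | h'
    · exact h'
    · exact absurd hhn (hD n h')
  have hchC : (h :: C' ++ [j]).IsChain G.Adj := by
    rw [hpC] at hch; exact (List.isChain_append.1 hch).1
  have hndC : (h :: C' ++ [j]).Nodup := by
    rw [hpC] at hnd; exact (List.nodup_append.1 hnd).1
  have hsubC : ∀ v ∈ h :: C' ++ [j], v ∈ W := by
    intro v hv
    exact hsub v (by rw [hpC]; exact List.mem_append_left _ hv)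
  by_cases hout : ∃ x ∈ h :: C' ++ [j], ∃ n ∈ W, n ∉ h :: C' ++ [j] ∧ G.Adj x n
  · obtain ⟨X, b, Y, hXY, ⟨u, hu, huC, hbu⟩, hX⟩ := split_first _ hout
    rcases List.eq_nil_or_concat X with rfl | ⟨X', a, rfl⟩
    · have : h = b := by simp at hXY; exact hXY.1
      subst this
      exact huC (hhC u hu hbu)
    · have hmm : ∀ v, v ∈ h :: C' ++ [j] ↔ v ∈ b :: Y ++ (X' ++ [a]) := by
        intro v; rw [hXY]; simp; tauto
      have hchC' := hchC
      rw [hXY, List.isChain_append] at hchC'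
      have hndC' := hndC
      rw [hXY, List.nodup_append_comm] at hndC'
      refine brooks_cyc hcr hd (a := a) (b := b) (u := u) (X := X') (Y := Y) ?_ ?_ ?_ ?_ ?_ hu ?_ hbu
      · refine List.isChain_append.2 ⟨hchC'.2.1, by simpa using hchC'.1, ?_⟩
        have e1 : (b :: Y).getLast? = some j := by
          have := congrArg List.getLast? hXY
          rw [List.getLast?_append_of_ne_nil _ (by simp), List.getLast?_append_of_ne_nil _ (by simp)] at this
          rw [← this]; rfl
        have e2 : (X' ++ [a]).head? = some h := by
          have := congrArg List.head? hXY
          rw [List.concat_eq_append, List.append_assoc] at this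
          cases X' with
          | nil => simp at this ⊢; exact this.symm
          | cons x X' => simp at this ⊢; exact this.symm
        intro x hx y hy
        rw [e1] at hx; rw [e2] at hy
        simp only [Option.mem_def, Option.some.injEq] at hx hy
        subst hx; subst hy
        exact hj.symm
      · simpa using hndC'
      · have := hchC'.2.2 a (by simp) b (by simp)
        exact this.symm
      · intro v hv; exact hsubC v ((hmm v).2 hv)
      · intro v hv hvC hav
        exact hX a (by simp) ⟨v, hv, fun e => hvC ((hmm v).1 e), hav⟩
      · exact fun e => huC ((hmm u).2 e)
  · push Not at hout
    have hWC := hcr.conn (S := (h :: C' ++ [j]).toFinset)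
      (fun v hv => hsubC v (List.mem_toFinset.1 hv)) ⟨h, by simp⟩ (by
        intro x hx v hv hxv
        by_contra hcon
        exact hout x (List.mem_toFinset.1 hx) v hv (fun e => hcon (List.mem_toFinset.2 e)) hxv)
    refine brooks_ham hk hcr hd h13 hn13 hch hnd ?_
    intro v
    refine ⟨fun hv => ?_, hsub v⟩
    rw [← hWC, List.mem_toFinset] at hv
    rw [hpC]
    exact List.mem_append_left _ hv

/-- The vertices on side `i` of the bipartition `s`. -/
def side (s : V → Bool) (i : Bool) : Finset V := Finset.univ.filter (fun v => s v = i)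

theorem mem_side {s : V → Bool} {i : Bool} {v : V} : v ∈ side s i ↔ s v = i := by
  simp [side]

variable (G) in
/-- `A` is an obstruction on side `i`. -/
def Bad (r : Bool → ℕ) (s : V → Bool) (i : Bool) (A : Finset V) : Prop :=
  (∀ v ∈ A, s v = i) ∧ Crit G A (r i)

open Classical in
variable (G) in
/-- All obstructions. -/
noncomputable def badset (r : Bool → ℕ) (s : V → Bool) : Finset (Finset V) :=
  Finset.univ.filter (fun A => ∃ i, Bad G r s i A)

variable (G) in
/-- Twice the Lovász potential. -/
def pot (r : Bool → ℕ) (s : V → Bool) : ℤ :=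
  ∑ x, (dg G (side s (s x)) x : ℤ) - 2 * ∑ x, (r (s x) : ℤ)

variable (G) in
/-- Optimal bipartitions. -/
def Good (r : Bool → ℕ) (s : V → Bool) : Prop :=
  (∀ s', pot G r s ≤ pot G r s') ∧
    ∀ s', pot G r s' = pot G r s → (badset G r s).card ≤ (badset G r s').card

theorem good_exists (r : Bool → ℕ) : ∃ s, Good G r s := by
  obtain ⟨s0, h0⟩ := Finite.exists_min (pot G r)
  obtain ⟨s, hs, hmin⟩ := Finset.exists_min_image
    (Finset.univ.filter (fun s => pot G r s = pot G r s0)) (fun s => (badset G r s).card)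
    ⟨s0, by simp⟩
  simp only [Finset.mem_filter, Finset.mem_univ, true_and] at hs hmin
  exact ⟨s, fun s' => hs ▸ h0 s', fun s' h => hmin s' (h.trans hs)⟩

variable (G) in
/-- The part of the potential not involving `x`. -/
def potE (r : Bool → ℕ) (s : V → Bool) (x : V) : ℤ :=
  ∑ u ∈ Finset.univ.erase x, ∑ v ∈ Finset.univ.erase x,
    (if G.Adj u v ∧ s v = s u then (1 : ℤ) else 0) - 2 * ∑ u ∈ Finset.univ.erase x, (r (s u) : ℤ)

theorem dg_side_eq (s : V → Bool) (i : Bool) (x : V) :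
    (dg G (side s i) x : ℤ) = ∑ v, (if G.Adj x v ∧ s v = i then (1 : ℤ) else 0) := by
  rw [Finset.sum_boole]
  unfold dg side
  rw [Finset.filter_filter]
  congr 2
  ext v; simp [and_comm]

theorem pot_eq (r : Bool → ℕ) (s : V → Bool) (x : V) :
    pot G r s = potE G r s x + 2 * (dg G (side s (s x)) x : ℤ) - 2 * (r (s x) : ℤ) := by
  have hx := Finset.mem_univ x
  unfold pot potE
  rw [← Finset.add_sum_erase _ _ hx, ← Finset.add_sum_erase _ (fun u => (r (s u) : ℤ)) hx]
  have h1 : ∑ u ∈ Finset.univ.erase x, (dg G (side s (s u)) u : ℤ)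
      = ∑ u ∈ Finset.univ.erase x, (if G.Adj u x ∧ s x = s u then (1 : ℤ) else 0) +
        ∑ u ∈ Finset.univ.erase x, ∑ v ∈ Finset.univ.erase x,
          (if G.Adj u v ∧ s v = s u then (1 : ℤ) else 0) := by
    rw [← Finset.sum_add_distrib]
    refine Finset.sum_congr rfl fun u _ => ?_
    rw [dg_side_eq, ← Finset.add_sum_erase _ _ hx]
  have h2 : (dg G (side s (s x)) x : ℤ)
      = ∑ u ∈ Finset.univ.erase x, (if G.Adj u x ∧ s x = s u then (1 : ℤ) else 0) := by
    rw [dg_side_eq, ← Finset.add_sum_erase _ _ hx]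
    simp only [SimpleGraph.irrefl, false_and, if_false, zero_add]
    refine Finset.sum_congr rfl fun u _ => ?_
    simp only [G.adj_comm x u, eq_comm]
  rw [h1, ← h2]
  ring

theorem potE_update (r : Bool → ℕ) (s : V → Bool) (x : V) (b : Bool) :
    potE G r (Function.update s x b) x = potE G r s x := by
  have hu : ∀ u ∈ Finset.univ.erase x, Function.update s x b u = s u := by
    intro u hu
    exact Function.update_of_ne (Finset.ne_of_mem_erase hu) _ _
  unfold potE
  congr 1
  · refine Finset.sum_congr rfl fun u h => Finset.sum_congr rfl fun v h' => ?_
    rw [hu u h, hu v h']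
  · congr 1
    refine Finset.sum_congr rfl fun u h => ?_
    rw [hu u h]

theorem dg_side_update (s : V → Bool) (x : V) (b : Bool) (i : Bool) :
    dg G (side (Function.update s x b) i) x = dg G (side s i) x := by
  unfold dg
  congr 1
  ext v
  simp only [Finset.mem_filter, mem_side]
  by_cases e : v = x
  · subst e; simp
  · rw [Function.update_of_ne e]

theorem pot_update (r : Bool → ℕ) (s : V → Bool) (x : V) (b : Bool) :
    pot G r (Function.update s x b) = pot G r s
      + 2 * ((dg G (side s b) x : ℤ) - r b) - 2 * ((dg G (side s (s x)) x : ℤ) - r (s x)) := by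
  rw [pot_eq r _ x, pot_eq r s x, potE_update, dg_side_update, Function.update_self]
  ring

theorem dg_univ (s : V → Bool) {i j : Bool} (hij : i ≠ j) (x : V) :
    dg G Finset.univ x = dg G (side s i) x + dg G (side s j) x := by
  unfold dg
  rw [← Finset.card_union_of_disjoint]
  · congr 1
    ext v
    simp only [Finset.mem_filter, Finset.mem_univ, true_and, Finset.mem_union, mem_side]
    cases h : s v <;> cases i <;> cases j <;> simp_all
  · rw [Finset.disjoint_left]
    intro v hv hv'
    simp only [Finset.mem_filter, mem_side] at hv hv'
    exact hij (hv.1.symm.trans hv'.1)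

theorem r_sum (r : Bool → ℕ) {i j : Bool} (hij : i ≠ j) : r i + r j = r true + r false := by
  cases i <;> cases j <;> simp_all [add_comm]

theorem good_dg {r : Bool → ℕ} (hdeg : ∀ v, dg G Finset.univ v ≤ r true + r false + 1)
    {s : V → Bool} (hg : Good G r s) (x : V) : dg G (side s (s x)) x ≤ r (s x) := by
  have h1 := hg.1 (Function.update s x (!s x))
  rw [pot_update] at h1
  have hij : s x ≠ !s x := by simp
  have h2 := hdeg x
  rw [dg_univ s hij, ← r_sum r hij] at h2
  omega

theorem Bad.sub_side {r : Bool → ℕ} {s : V → Bool} {i : Bool} {A : Finset V}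
    (h : Bad G r s i A) : A ⊆ side s i := fun v hv => mem_side.2 (h.1 v hv)

theorem Bad.dg_eq {r : Bool → ℕ} (hdeg : ∀ v, dg G Finset.univ v ≤ r true + r false + 1)
    {s : V → Bool} (hg : Good G r s) {i : Bool} {A : Finset V} (h : Bad G r s i A)
    {v : V} (hv : v ∈ A) : dg G A v = r i ∧ dg G (side s i) v = r i := by
  have h1 := h.2.le_dg hv
  have h2 := dg_mono (G := G) h.sub_side v
  have h3 := good_dg hdeg hg v
  rw [h.1 v hv] at h3
  omega

theorem Bad.closed {r : Bool → ℕ} (hdeg : ∀ v, dg G Finset.univ v ≤ r true + r false + 1)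
    {s : V → Bool} (hg : Good G r s) {i : Bool} {A : Finset V} (h : Bad G r s i A)
    {v : V} (hv : v ∈ A) {m : V} (hm : s m = i) (ha : G.Adj v m) : m ∈ A := by
  have h1 := h.dg_eq hdeg hg hv
  have h2 : A.filter (G.Adj v) = (side s i).filter (G.Adj v) :=
    Finset.eq_of_subset_of_card_le (Finset.filter_subset_filter _ h.sub_side) (by
      unfold dg at h1; omega)
  have : m ∈ (side s i).filter (G.Adj v) := by simp [mem_side, hm, ha]
  rw [← h2] at this
  exact (Finset.mem_filter.1 this).1

theorem Bad.eq_of_mem {r : Bool → ℕ} {s : V → Bool} (hg : ∀ x, dg G (side s (s x)) x ≤ r (s x) ) {i j : Bool} {A B : Finset V}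
    (h : Bad G r s i A) (h' : Bad G r s j B) {v : V} (hv : v ∈ A) (hv' : v ∈ B) : A = B := by
  obtain rfl : i = j := (h.1 v hv).symm.trans (h'.1 v hv')
  have cl : ∀ {A : Finset V}, Bad G r s i A → ∀ {v}, v ∈ A → ∀ {m}, s m = i → G.Adj v m →
      m ∈ A := by
    intro A h v hv m hm ha
    have h1 := h.2.le_dg hv
    have h3 := hg v
    rw [h.1 v hv] at h3
    have h2 : A.filter (G.Adj v) = (side s i).filter (G.Adj v) :=
      Finset.eq_of_subset_of_card_le (Finset.filter_subset_filter _ h.sub_side) (by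
        unfold dg at h1 h3; omega)
    have : m ∈ (side s i).filter (G.Adj v) := by simp [mem_side, hm, ha]
    rw [← h2] at this
    exact (Finset.mem_filter.1 this).1
  have e1 := h.2.conn (S := A ∩ B) Finset.inter_subset_left ⟨v, by simp [hv, hv']⟩ (by
    intro u hu w hw huw
    have hu' := Finset.mem_inter.1 hu
    exact Finset.mem_inter.2 ⟨hw, cl h' hu'.2 (h.1 w hw) huw⟩)
  have e2 := h'.2.conn (S := A ∩ B) Finset.inter_subset_right ⟨v, by simp [hv, hv']⟩ (by
    intro u hu w hw huw
    have hu' := Finset.mem_inter.1 hu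
    exact Finset.mem_inter.2 ⟨cl h hu'.1 (h'.1 w hw) huw, hw⟩)
  exact e1.symm.trans e2

theorem move {r : Bool → ℕ} (hdeg : ∀ v, dg G Finset.univ v ≤ r true + r false + 1)
    {s : V → Bool} (hg : Good G r s) {i j : Bool} (hij : i ≠ j) {A : Finset V}
    (h : Bad G r s i A) {x : V} (hx : x ∈ A) (hlow : dg G Finset.univ x ≤ r true + r false) :
    Good G r (Function.update s x j) ∧ ∃ A', x ∈ A' ∧ Bad G r (Function.update s x j) j A' := by
  set s' := Function.update s x j with hs'
  have hsx := h.1 x hx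
  have hpot : pot G r s' = pot G r s := by
    have h1 := hg.1 s'
    have h2 := (h.dg_eq hdeg hg hx).2
    rw [hs', pot_update, hsx] at h1 ⊢
    rw [dg_univ s hij, ← r_sum r hij] at hlow
    omega
  have hbad : ∀ {B k}, Bad G r s' k B → x ∉ B → Bad G r s k B ∧ B ≠ A := by
    intro B k hB hxB
    refine ⟨⟨fun v hv => ?_, hB.2⟩, ?_⟩
    · have := hB.1 v hv
      have hne : v ≠ x := fun e => hxB (e ▸ hv)
      rwa [hs', Function.update_of_ne hne] at this
    · rintro rfl; exact hxB hx
  have hs'x : s' x = j := by simp [hs']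
  have hAb : A ∈ badset G r s := by
    simp only [badset, Finset.mem_filter, Finset.mem_univ, true_and]; exact ⟨i, h⟩
  obtain ⟨A', hxA', k, hA'⟩ : ∃ A', x ∈ A' ∧ ∃ k, Bad G r s' k A' := by
    by_contra hcon
    push Not at hcon
    have hss : badset G r s' ⊂ badset G r s := by
      rw [Finset.ssubset_iff_of_subset]
      · refine ⟨A, hAb, ?_⟩
        simp only [badset, Finset.mem_filter, Finset.mem_univ, true_and, not_exists]
        exact hcon A hx
      · intro B hB
        simp only [badset, Finset.mem_filter, Finset.mem_univ, true_and] at hB ⊢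
        obtain ⟨k, hB⟩ := hB
        exact ⟨k, (hbad hB (fun e => hcon B e k hB)).1⟩
    have := Finset.card_lt_card hss
    have := hg.2 s' hpot
    omega
  obtain rfl : k = j := (hA'.1 x hxA').symm.trans hs'x
  have hdg' : ∀ y, dg G (side s' (s' y)) y ≤ r (s' y) := by
    intro y
    have h1 : pot G r s' ≤ pot G r (Function.update s' y (!s' y)) := hpot ▸ hg.1 _
    rw [pot_update r s'] at h1
    have hij : s' y ≠ !s' y := by simp
    have h2 := hdeg y
    rw [dg_univ s' hij, ← r_sum r hij] at h2
    omega
  refine ⟨⟨fun t => hpot ▸ hg.1 t, fun t ht => ?_⟩, A', hxA', hA'⟩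
  refine le_trans ?_ (hg.2 t (ht.trans hpot))
  have hA'b : A' ∈ badset G r s' := by
    simp only [badset, Finset.mem_filter, Finset.mem_univ, true_and]; exact ⟨k, hA'⟩
  rw [← Finset.card_erase_add_one hA'b, ← Finset.card_erase_add_one hAb]
  refine Nat.succ_le_succ (Finset.card_le_card ?_)
  intro B hB
  obtain ⟨hne, hB⟩ := Finset.mem_erase.1 hB
  simp only [badset, Finset.mem_filter, Finset.mem_univ, true_and, Finset.mem_erase] at hB ⊢
  obtain ⟨l, hB⟩ := hB
  have hxB : x ∉ B := fun e => hne (hB.eq_of_mem hdg' hA' e hxA')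
  exact ⟨(hbad hB hxB).2, l, (hbad hB hxB).1⟩

theorem dg_erase {B : Finset V} {z n : V} (hz : z ∈ B) :
    dg G B n = dg G (B.erase z) n + if G.Adj n z then 1 else 0 := by
  unfold dg
  rw [← Finset.insert_erase hz, Finset.erase_insert (Finset.notMem_erase z B), Finset.filter_insert]
  split_ifs with h
  · rw [Finset.card_insert_of_notMem (by simp)]
  · rfl

theorem exchange {r : Bool → ℕ} (hdeg : ∀ v, dg G Finset.univ v ≤ r true + r false + 1)
    {s : V → Bool} (hg : Good G r s) {i j : Bool} (hij : i ≠ j) {A : Finset V}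
    (h : Bad G r s i A) {y : V} (hy : y ∈ A) (hlow : dg G Finset.univ y ≤ r true + r false)
    {B : Finset V} {z : V} (hz : z ∈ B) (hB : Crit G B (r j)) (hBreg : ∀ n ∈ B, dg G B n = r j)
    (hside : ∀ n ∈ B.erase z, s n = j)
    (hcl : ∀ n ∈ B.erase z, ∀ m, s m = j → G.Adj n m → m ∈ B.erase z)
    {w : V} (hw : w ∈ B.erase z) (hyw : G.Adj y w) :
    Good G r (Function.update s y j) ∧
    Bad G r (Function.update s y j) j (insert y (B.erase z)) ∧
    ∀ n ∈ B.erase z, (G.Adj n z ↔ G.Adj n y) := by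
  obtain ⟨hg', A', hyA', hA'⟩ := move hdeg hg hij h hy hlow
  have hyT : y ∉ B.erase z := fun e => hij ((h.1 y hy).symm.trans (hside y e))
  have hs' : ∀ n, n ≠ y → Function.update s y j n = s n := fun n hn => Function.update_of_ne hn _ _
  have hT' : ∀ n ∈ B.erase z, Function.update s y j n = j := by
    intro n hn
    rw [hs' n (fun e => hyT (e ▸ hn)), hside n hn]
  have hwA' : w ∈ A' := hA'.closed hdeg hg' hyA' (hT' w hw) hyw
  have e1 : B.erase z ∩ A' = A'.erase y := by
    refine hA'.2.conn2 hyA' ?_ ⟨w, by simp only [Finset.mem_inter]; exact ⟨hw, hwA'⟩⟩ ?_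
    · intro v hv
      obtain ⟨h1, h2⟩ := Finset.mem_inter.1 hv
      exact Finset.mem_erase.2 ⟨fun e => hyT (e ▸ h1), h2⟩
    · intro u hu v hv hvy huv
      obtain ⟨h1, h2⟩ := Finset.mem_inter.1 hu
      refine Finset.mem_inter.2 ⟨hcl u h1 v ?_ huv, hv⟩
      rw [← hs' v hvy]; exact hA'.1 v hv
  have e2 : B.erase z ∩ A' = B.erase z := by
    refine hB.conn2 hz Finset.inter_subset_left
      ⟨w, by simp only [Finset.mem_inter]; exact ⟨hw, hwA'⟩⟩ ?_
    intro u hu v hv hvz huv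
    obtain ⟨h1, h2⟩ := Finset.mem_inter.1 hu
    have hvT : v ∈ B.erase z := Finset.mem_erase.2 ⟨hvz, hv⟩
    exact Finset.mem_inter.2 ⟨hvT, hA'.closed hdeg hg' h2 (hT' v hvT) huv⟩
  have e3 : A'.erase y = B.erase z := e1.symm.trans e2
  have e4 : insert y (B.erase z) = A' := by rw [← e3, Finset.insert_erase hyA']
  refine ⟨hg', e4 ▸ hA', ?_⟩
  intro n hn
  have d1 := hBreg n (Finset.mem_of_mem_erase hn)
  have d2 := (hA'.dg_eq hdeg hg' (v := n) (by rw [← e4]; exact Finset.mem_insert_of_mem hn)).1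
  rw [dg_erase hz] at d1
  rw [dg_erase hyA', e3] at d2
  split_ifs at d1 d2 <;> first | tauto | omega

theorem bad_exists {r : Bool → ℕ} (hnc : ¬ Col G Finset.univ (r true + r false))
    (s : V → Bool) : ∃ i A, Bad G r s i A := by
  have : ∃ i, ¬ Col G (side s i) (r i) := by
    by_contra hcon
    push Not at hcon
    obtain ⟨c1, h1⟩ := hcon true
    obtain ⟨c2, h2⟩ := hcon false
    refine hnc ⟨fun v => if s v = true then Fin.castAdd _ (c1 v) else Fin.natAdd _ (c2 v), ?_⟩
    intro u _ v _ huv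
    cases hu : s u <;> cases hv : s v
    · simp only [hu, hv]
      simpa using h2 u (mem_side.2 hu) v (mem_side.2 hv) huv
    · simp only [hu, hv]
      simp [Fin.ext_iff]; omega
    · simp only [hu, hv]
      simp [Fin.ext_iff]; omega
    · simp only [hu, hv]
      simpa using h1 u (mem_side.2 hu) v (mem_side.2 hv) huv
  obtain ⟨i, hi⟩ := this
  have key : ∀ n, ∀ S : Finset V, S.card = n → ¬ Col G S (r i) → ∃ A ⊆ S, Crit G A (r i) := by
    intro n
    induction n using Nat.strong_induction_on with
    | _ n ih =>
      intro S hS hc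
      by_cases hcr : ∀ v ∈ S, Col G (S.erase v) (r i)
      · exact ⟨S, Finset.Subset.refl _, hc, hcr⟩
      · push Not at hcr
        obtain ⟨v, hv, hv'⟩ := hcr
        obtain ⟨A, hA, h⟩ := ih _ (hS ▸ Finset.card_erase_lt_of_mem hv) _ rfl hv'
        exact ⟨A, hA.trans (Finset.erase_subset _ _), h⟩
  obtain ⟨A, hA, h⟩ := key _ _ rfl hi
  exact ⟨i, A, fun v hv => mem_side.1 (hA hv), h⟩

variable (G) in
/-- A state of the shuffling procedure. -/
structure St (r : Bool → ℕ) where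
  s : V → Bool
  i : Bool
  A : Finset V
  x : V
  good : Good G r s
  bad : Bad G r s i A
  hx : x ∈ A
  low : dg G Finset.univ x ≤ r true + r false
  hy : ∃ y ∈ A, dg G Finset.univ y ≤ r true + r false ∧ G.Adj x y

theorem st_next {r : Bool → ℕ} (hdeg : ∀ v, dg G Finset.univ v ≤ r true + r false + 1)
    (hlow : ∀ s i A, Good G r s → Bad G r s i A → ∃ x ∈ A, ∃ y ∈ A,
      dg G Finset.univ x ≤ r true + r false ∧ dg G Finset.univ y ≤ r true + r false ∧ G.Adj x y)
    (σ : St G r) : ∃ σ' : St G r, σ'.s = Function.update σ.s σ.x (!σ.i) ∧ σ'.i = (!σ.i) ∧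
      σ.x ∈ σ'.A ∧ σ'.x ≠ σ.x := by
  obtain ⟨hg, A', hxA', hA'⟩ := move hdeg σ.good (j := !σ.i) (by simp) σ.bad σ.hx σ.low
  obtain ⟨x, hx, y, hy, lx, ly, hxy⟩ := hlow _ _ _ hg hA'
  by_cases e : x = σ.x
  · exact ⟨⟨_, _, A', y, hg, hA', hy, ly, x, hx, lx, hxy.symm⟩, rfl, rfl, hxA',
      fun e' => hxy.ne (e.trans e'.symm)⟩
  · exact ⟨⟨_, _, A', x, hg, hA', hx, lx, y, hy, ly, hxy⟩, rfl, rfl, hxA', e⟩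

theorem st_inv {r : Bool → ℕ} (hdeg : ∀ v, dg G Finset.univ v ≤ r true + r false + 1)
    {f : ℕ → St G r} (hf1 : ∀ n, (f (n+1)).s = Function.update (f n).s (f n).x (!(f n).i))
    (hf3 : ∀ n, (f n).x ∈ (f (n+1)).A) (a : ℕ) :
    ∀ l, a + 1 ≤ l → (∀ m, a < m → m ≤ l → ∀ v ∈ (f m).A, v ∈ (f a).A → v = (f a).x) →
      ∀ n ∈ (f a).A, n ≠ (f a).x → (f l).s n = (f a).i ∧
        ∀ m, (f l).s m = (f a).i → G.Adj n m → m ∈ (f a).A ∧ m ≠ (f a).x := by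
  intro l hl
  induction l, hl using Nat.le_induction with
  | base =>
    intro _ n hn hnx
    rw [hf1]
    refine ⟨?_, ?_⟩
    · rw [Function.update_of_ne hnx]; exact (f a).bad.1 n hn
    · intro m hm hnm
      have hmx : m ≠ (f a).x := by
        rintro rfl
        rw [Function.update_self] at hm
        simp at hm
      rw [Function.update_of_ne hmx] at hm
      exact ⟨(f a).bad.closed hdeg (f a).good hn hm hnm, hmx⟩
  | succ l hl ih =>
    intro hM n hn hnx
    have ih' := ih (fun m h1 h2 => hM m h1 (by omega)) n hn hnx
    have hnl : n ≠ (f l).x := by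
      intro e
      exact hnx (hM l (by omega) (by omega) n (e ▸ (f l).hx) hn)
    have hsn : (f (l+1)).s n = (f a).i := by
      rw [hf1, Function.update_of_ne hnl]; exact ih'.1
    refine ⟨hsn, ?_⟩
    intro m hm hnm
    by_cases e : m = (f l).x
    · exfalso
      have h1 : m ∈ (f (l+1)).A := e ▸ hf3 l
      have h2 := (f (l+1)).bad.1 m h1
      have h3 := (f (l+1)).bad.closed hdeg (f (l+1)).good h1 (m := n)
        (by rw [hsn, ← hm, h2]) hnm.symm
      exact hnx (hM (l+1) (by omega) le_rfl n h3 hn)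
    · rw [hf1, Function.update_of_ne e] at hm
      exact ih'.2 m hm hnm

theorem st_side {r : Bool → ℕ} (hdeg : ∀ v, dg G Finset.univ v ≤ r true + r false + 1)
    {f : ℕ → St G r} (hf1 : ∀ n, (f (n+1)).s = Function.update (f n).s (f n).x (!(f n).i))
    (hf3 : ∀ n, (f n).x ∈ (f (n+1)).A) (a l : ℕ) (hl : a < l)
    (hM : ∀ m, a < m → m < l → ∀ v ∈ (f m).A, v ∈ (f a).A → v = (f a).x) :
      ∀ n ∈ (f a).A, n ≠ (f a).x → (f l).s n = (f a).i := by
  intro n hn hnx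
  obtain ⟨l, rfl⟩ : ∃ l', l = l' + 1 := ⟨l - 1, by omega⟩
  rcases Nat.lt_or_ge a l with h | h
  · have := (st_inv hdeg hf1 hf3 a l h (fun m h1 h2 => hM m h1 (by omega)) n hn hnx).1
    rw [hf1, Function.update_of_ne, this]
    intro e
    exact hnx (hM l h (by omega) n (e ▸ (f l).hx) hn)
  · obtain rfl : a = l := by omega
    rw [hf1, Function.update_of_ne hnx]; exact (f a).bad.1 n hn

theorem loop {r : Bool → ℕ} (hr : ∀ i, 2 ≤ r i)
    (hdeg : ∀ v, dg G Finset.univ v ≤ r true + r false + 1)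
    (hnc : ¬ Col G Finset.univ (r true + r false))
    (hlow : ∀ s i A, Good G r s → Bad G r s i A → ∃ x ∈ A, ∃ y ∈ A,
      dg G Finset.univ x ≤ r true + r false ∧ dg G Finset.univ y ≤ r true + r false ∧ G.Adj x y) :
    ∃ (s : V → Bool) (i j : Bool) (A B : Finset V) (x y z : V), i ≠ j ∧ Good G r s ∧
      Bad G r s i A ∧ x ∈ A ∧ y ∈ A ∧ dg G Finset.univ x ≤ r true + r false ∧
      dg G Finset.univ y ≤ r true + r false ∧ dg G Finset.univ z ≤ r true + r false ∧
      G.Adj x y ∧ Good G r (Function.update s x j) ∧ Bad G r (Function.update s x j) j B ∧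
      x ∈ B ∧ z ∈ B ∧ z ≠ x ∧ (∀ n ∈ B.erase z, (G.Adj n z ↔ G.Adj n y)) ∧
      (∀ n ∈ B.erase x, (G.Adj n x ↔ G.Adj n y)) ∧
      Good G r (Function.update s y j) ∧
      Bad G r (Function.update s y j) j (insert y (B.erase x)) := by
  obtain ⟨s0, hs0⟩ := good_exists (G := G) r
  obtain ⟨i0, A0, hA0⟩ := bad_exists hnc s0
  obtain ⟨x0, hx0, y0, hy0, lx0, ly0, hxy0⟩ := hlow _ _ _ hs0 hA0
  let σ0 : St G r := ⟨s0, i0, A0, x0, hs0, hA0, hx0, lx0, y0, hy0, ly0, hxy0⟩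
  choose nx hn1 hn2 hn3 hn4 using st_next (G := G) hdeg hlow
  let f : ℕ → St G r := fun n => nx^[n] σ0
  have hf : ∀ n, f (n+1) = nx (f n) := fun n => Function.iterate_succ_apply' nx n σ0
  have hf1 : ∀ n, (f (n+1)).s = Function.update (f n).s (f n).x (!(f n).i) := by
    intro n; rw [hf]; exact hn1 _
  have hf2 : ∀ n, (f (n+1)).i = !(f n).i := by
    intro n; rw [hf]; exact hn2 _
  have hf3 : ∀ n, (f n).x ∈ (f (n+1)).A := by
    intro n; rw [hf]; exact hn3 _
  have hf4 : ∀ n, (f (n+1)).x ≠ (f n).x := by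
    intro n; rw [hf]; exact hn4 _
  clear_value f
  have hex : ∃ b, ∃ a, a < b ∧ ∃ v ∈ (f b).A, v ∈ (f a).A ∧ v ≠ (f a).x := by
    choose Y hY1 hY2 hY3 using fun n => (f n).hy
    obtain ⟨a, b, hab, e⟩ := Finite.exists_ne_map_eq_of_infinite Y
    rcases lt_or_gt_of_ne hab with h | h
    · exact ⟨b, a, h, Y b, hY1 b, e ▸ hY1 a, e ▸ (hY3 a).ne.symm⟩
    · exact ⟨a, b, h, Y a, hY1 a, e ▸ hY1 b, e ▸ (hY3 b).ne.symm⟩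
  classical
  obtain ⟨b, ⟨a, hab, v, hvb, hva, hvx⟩, hmin⟩ : ∃ b, (∃ a, a < b ∧ ∃ v ∈ (f b).A,
      v ∈ (f a).A ∧ v ≠ (f a).x) ∧ ∀ c, c < b → ¬ (∃ a, a < c ∧ ∃ v ∈ (f c).A,
      v ∈ (f a).A ∧ v ≠ (f a).x) :=
    ⟨Nat.find hex, Nat.find_spec hex, fun c hc => Nat.find_min hex hc⟩
  have hmin' : ∀ a m, a < m → m < b → ∀ v ∈ (f m).A, v ∈ (f a).A → v = (f a).x := by
    intro a m h1 h2 v hv hv'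
    by_contra hne
    exact hmin m h2 ⟨a, h1, v, hv, hv', hne⟩
  have hsA := st_side hdeg hf1 hf3 a b hab (hmin' a)
  have hib : (f b).i = (f a).i := ((f b).bad.1 v hvb).symm.trans (hsA v hva hvx)
  have hab2 : a + 1 < b := by
    rcases Nat.lt_or_ge (a+1) b with h | h
    · exact h
    · obtain rfl : b = a + 1 := by omega
      rw [hf2] at hib
      simp at hib
  have hsB := st_side hdeg hf1 hf3 (a+1) b hab2 (hmin' (a+1))
  have hinvB := st_inv hdeg hf1 hf3 (a+1) b hab2 (by
    intro m h1 h2 u hu hu'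
    rcases Nat.lt_or_ge m b with h | h
    · exact hmin' (a+1) m h1 h u hu hu'
    · obtain rfl : m = b := by omega
      by_contra hne
      have e1 := hsB u hu' hne
      have e2 := (f m).bad.1 u hu
      rw [e2, hib, hf2] at e1
      simp at e1)
  obtain ⟨y, hy, ly, hxy⟩ := (f a).hy
  have hijA : (f a).i ≠ (f (a+1)).i := by rw [hf2]; simp
  have hijb : (f b).i ≠ (f (a+1)).i := by rw [hib]; exact hijA
  have hyb : y ∈ (f b).A := by
    have e : (f a).A.erase (f a).x ∩ (f b).A = (f a).A.erase (f a).x := by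
      refine (f a).bad.2.conn2 (f a).hx Finset.inter_subset_left ⟨v, ?_⟩ ?_
      · simp only [Finset.mem_inter, Finset.mem_erase]; exact ⟨⟨hvx, hva⟩, hvb⟩
      · intro u hu w hw hwx huw
        simp only [Finset.mem_inter, Finset.mem_erase] at hu ⊢
        exact ⟨⟨hwx, hw⟩, (f b).bad.closed hdeg (f b).good hu.2 (by rw [hib]; exact hsA w hw hwx) huw⟩
    have : y ∈ (f a).A.erase (f a).x := Finset.mem_erase.2 ⟨hxy.ne.symm, hy⟩
    rw [← e] at this
    exact (Finset.mem_inter.1 this).2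
  have hreg : ∀ n ∈ (f (a+1)).A, dg G (f (a+1)).A n = r (f (a+1)).i := fun n hn =>
    ((f (a+1)).bad.dg_eq hdeg (f (a+1)).good hn).1
  obtain ⟨-, -, E1⟩ := exchange hdeg (f b).good hijb (f b).bad hyb ly (f (a+1)).hx
    (f (a+1)).bad.2 hreg
    (fun n hn => hsB n (Finset.mem_of_mem_erase hn) (Finset.ne_of_mem_erase hn))
    (fun n hn m hm hnm => by
      obtain ⟨h1, h2⟩ := (hinvB n (Finset.mem_of_mem_erase hn) (Finset.ne_of_mem_erase hn)).2 m hm hnm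
      exact Finset.mem_erase.2 ⟨h2, h1⟩)
    (w := (f a).x) (Finset.mem_erase.2 ⟨(hf4 a).symm, hf3 a⟩) hxy.symm
  obtain ⟨w, hw, hwx⟩ : ∃ w ∈ (f (a+1)).A.filter (G.Adj (f (a+1)).x), w ≠ (f a).x := by
    refine Finset.exists_mem_ne ?_ _
    have h1 := hreg _ (f (a+1)).hx
    have h2 := hr (f (a+1)).i
    unfold dg at h1
    omega
  obtain ⟨hwB, hzw⟩ := Finset.mem_filter.1 hw
  have hwy : G.Adj w y := (E1 w (Finset.mem_erase.2 ⟨hzw.ne.symm, hwB⟩)).1 hzw.symm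
  have hup : ∀ n, n ≠ (f a).x → (f (a+1)).s n = (f a).s n := by
    intro n hn
    rw [hf1, Function.update_of_ne hn]
  obtain ⟨g2, b2, E2⟩ := exchange hdeg (f a).good hijA (f a).bad hy ly (hf3 a)
    (f (a+1)).bad.2 hreg
    (fun n hn => by
      rw [← hup n (Finset.ne_of_mem_erase hn)]
      exact (f (a+1)).bad.1 n (Finset.mem_of_mem_erase hn))
    (fun n hn m hm hnm => by
      have hmx : m ≠ (f a).x := by
        rintro rfl
        exact hijA (((f a).bad.1 _ (f a).hx).symm.trans hm)
      refine Finset.mem_erase.2 ⟨hmx, ?_⟩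
      exact (f (a+1)).bad.closed hdeg (f (a+1)).good (Finset.mem_of_mem_erase hn)
        (by rw [hup m hmx]; exact hm) hnm)
    (w := w) (Finset.mem_erase.2 ⟨hwx, hwB⟩) hwy.symm
  have hup' : (f (a+1)).s = Function.update (f a).s (f a).x (f (a+1)).i := by rw [hf1, hf2]
  exact ⟨(f a).s, (f a).i, (f (a+1)).i, (f a).A, (f (a+1)).A, (f a).x, y, (f (a+1)).x, hijA,
    (f a).good, (f a).bad, (f a).hx, hy, (f a).low, ly, (f (a+1)).low, hxy,
    hup' ▸ (f (a+1)).good, hup' ▸ (f (a+1)).bad, hf3 a, (f (a+1)).hx, hf4 a, E1, E2, g2, b2⟩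

theorem clique_of_twins {A : Finset V} {k : ℕ} (hk : 2 ≤ k) (hcr : Crit G A k)
    (hreg : ∀ v ∈ A, dg G A v = k) {x z : V} (hx : x ∈ A) (hz : z ∈ A) (hxz : G.Adj x z)
    (htw : ∀ n ∈ A, n ≠ x → n ≠ z → (G.Adj n x ↔ G.Adj n z)) :
    ∀ a ∈ A, ∀ b ∈ A, a ≠ b → G.Adj a b := by
  rcases Nat.lt_or_ge 2 k with h | h
  · exact brooks h hcr (fun v hv => (hreg v hv).le)
  obtain rfl : k = 2 := by omega
  obtain ⟨w, hw, hwz⟩ : ∃ w ∈ A.filter (G.Adj x), w ≠ z := by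
    refine Finset.exists_mem_ne ?_ _
    have h1 := hreg _ hx
    unfold dg at h1
    omega
  obtain ⟨hwA, hxw⟩ := Finset.mem_filter.1 hw
  have hzw : G.Adj z w := ((htw w hwA hxw.ne.symm hwz).1 hxw.symm).symm
  have key : ∀ a ∈ A, ∀ b ∈ A, ∀ c ∈ A, b ≠ c → G.Adj a b → G.Adj a c → ∀ d ∈ A, G.Adj a d →
      d = b ∨ d = c := by
    intro a ha b hb c hc hbc hab hac d hd had
    have h1 : ({b, c} : Finset V) = A.filter (G.Adj a) := by
      refine Finset.eq_of_subset_of_card_le ?_ ?_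
      · intro u hu
        simp only [Finset.mem_insert, Finset.mem_singleton] at hu
        rcases hu with rfl | rfl <;> simp [*]
      · have := hreg a ha
        unfold dg at this
        rw [this, Finset.card_pair hbc]
    have : d ∈ A.filter (G.Adj a) := by simp [hd, had]
    rw [← h1] at this
    simpa using this
  have hS := hcr.conn (S := {x, z, w}) (by
    intro u hu
    simp only [Finset.mem_insert, Finset.mem_singleton] at hu
    rcases hu with rfl | rfl | rfl <;> assumption) ⟨x, by simp⟩ (by
    intro u hu v hv huv
    simp only [Finset.mem_insert, Finset.mem_singleton] at hu ⊢
    rcases hu with rfl | rfl | rfl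
    · have := key u hx z hz w hwA hwz.symm hxz hxw v hv huv; tauto
    · have := key u hz x hx w hwA hxw.ne hxz.symm hzw v hv huv; tauto
    · have := key u hwA x hx z hz hxz.ne hxw.symm hzw.symm v hv huv; tauto)
  intro a ha b hb hab
  rw [← hS] at ha hb
  simp only [Finset.mem_insert, Finset.mem_singleton] at ha hb
  rcases ha with rfl | rfl | rfl <;> rcases hb with rfl | rfl | rfl <;>
    first | exact absurd rfl hab | assumption | (apply SimpleGraph.Adj.symm; assumption)

theorem card_of_clique {A : Finset V} {k : ℕ} (hreg : ∀ v ∈ A, dg G A v = k) {x : V} (hx : x ∈ A)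
    (hcl : ∀ a ∈ A, ∀ b ∈ A, a ≠ b → G.Adj a b) : A.card = k + 1 := by
  have h1 := hreg x hx
  have : A.filter (G.Adj x) = A.erase x := by
    ext v
    simp only [Finset.mem_filter, Finset.mem_erase]
    constructor
    · rintro ⟨h, h'⟩; exact ⟨h'.ne.symm, h⟩
    · rintro ⟨h, h'⟩; exact ⟨h', hcl x hx v h' h.symm⟩
  unfold dg at h1
  rw [this] at h1
  rw [← h1, Finset.card_erase_add_one hx]

theorem final_structure {r : Bool → ℕ} (hr : ∀ i, 2 ≤ r i)
    (hdeg : ∀ v, dg G Finset.univ v ≤ r true + r false + 1)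
    (hnc : ¬ Col G Finset.univ (r true + r false))
    (hlow : ∀ s i A, Good G r s → Bad G r s i A → ∃ x ∈ A, ∃ y ∈ A,
      dg G Finset.univ x ≤ r true + r false ∧ dg G Finset.univ y ≤ r true + r false ∧ G.Adj x y) :
    ∃ (i j : Bool) (A C : Finset V), i ≠ j ∧ Disjoint A C ∧ A.card = r i + 1 ∧ C.card = r j ∧
      (∀ a ∈ A, ∀ b ∈ A, a ≠ b → G.Adj a b) ∧ (∀ a ∈ C, ∀ b ∈ C, a ≠ b → G.Adj a b) ∧
      (∀ a ∈ A, dg G Finset.univ a ≤ r true + r false → ∀ c ∈ C, G.Adj a c) ∧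
      (∀ c ∈ C, dg G Finset.univ c ≤ r true + r false → ∀ a ∈ A, G.Adj c a) := by
  obtain ⟨s, i, j, A, B, x, y, z, hij, hg, hA, hx, hy, lx, ly, lz, hxy, hgx, hB, hxB, hzB, hzx,
    E1, E2, hgy, hB'⟩ := loop hr hdeg hnc hlow
  have hxz : G.Adj x z := (E1 x (Finset.mem_erase.2 ⟨hzx.symm, hxB⟩)).2 hxy
  have hzy : G.Adj z y := (E2 z (Finset.mem_erase.2 ⟨hzx, hzB⟩)).1 hxz.symm
  have hregA : ∀ n ∈ A, dg G A n = r i := fun n hn => (hA.dg_eq hdeg hg hn).1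
  have hregB : ∀ n ∈ B, dg G B n = r j := fun n hn => (hB.dg_eq hdeg hgx hn).1
  have clB : ∀ a ∈ B, ∀ b ∈ B, a ≠ b → G.Adj a b := by
    refine clique_of_twins (hr j) hB.2 hregB hxB hzB hxz ?_
    intro n hn hnx hnz
    rw [E1 n (Finset.mem_erase.2 ⟨hnz, hn⟩), E2 n (Finset.mem_erase.2 ⟨hnx, hn⟩)]
  -- closedness of `A` minus a moved vertex
  have backside : ∀ p ∈ A, ∀ n ∈ A.erase p, Function.update s p j n = i := by
    intro p _ n hn
    rw [Function.update_of_ne (Finset.ne_of_mem_erase hn)]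
    exact hA.1 n (Finset.mem_of_mem_erase hn)
  have backcl : ∀ p ∈ A, ∀ n ∈ A.erase p, ∀ m, Function.update s p j m = i → G.Adj n m →
      m ∈ A.erase p := by
    intro p _ n hn m hm hnm
    have hmp : m ≠ p := by
      rintro rfl
      rw [Function.update_self] at hm
      exact hij hm.symm
    rw [Function.update_of_ne hmp] at hm
    exact Finset.mem_erase.2 ⟨hmp, hA.closed hdeg hg (Finset.mem_of_mem_erase hn) hm hnm⟩
  obtain ⟨-, -, E3⟩ := exchange hdeg hgx hij.symm hB hzB lz hx hA.2 hregA (backside x hx)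
    (backcl x hx) (w := y) (Finset.mem_erase.2 ⟨hxy.ne.symm, hy⟩) hzy
  obtain ⟨-, -, E4⟩ := exchange hdeg hgy hij.symm hB'
    (Finset.mem_insert_of_mem (Finset.mem_erase.2 ⟨hzx, hzB⟩)) lz hy hA.2 hregA (backside y hy)
    (backcl y hy) (w := x) (Finset.mem_erase.2 ⟨hxy.ne, hx⟩) hxz.symm
  have clA : ∀ a ∈ A, ∀ b ∈ A, a ≠ b → G.Adj a b := by
    refine clique_of_twins (hr i) hA.2 hregA hx hy hxy ?_
    intro n hn hnx hny
    rw [E3 n (Finset.mem_erase.2 ⟨hnx, hn⟩), E4 n (Finset.mem_erase.2 ⟨hny, hn⟩)]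
  have hzA : ∀ n ∈ A, G.Adj n z := by
    intro n hn
    by_cases e : n = x
    · rw [e]; exact hxz
    · exact (E3 n (Finset.mem_erase.2 ⟨e, hn⟩)).1 (clA n hn x hx e)
  have hCs : ∀ n ∈ B.erase x, s n = j := by
    intro n hn
    have := hB.1 n (Finset.mem_of_mem_erase hn)
    rwa [Function.update_of_ne (Finset.ne_of_mem_erase hn)] at this
  refine ⟨i, j, A, B.erase x, hij, ?_, card_of_clique hregA hx clA, ?_, clA, ?_, ?_, ?_⟩
  · rw [Finset.disjoint_left]
    intro v hv hv'
    exact hij ((hA.1 v hv).symm.trans (hCs v hv'))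
  · rw [Finset.card_erase_of_mem hxB, card_of_clique hregB hxB clB]; rfl
  · intro a ha b hb hab
    exact clB a (Finset.mem_of_mem_erase ha) b (Finset.mem_of_mem_erase hb) hab
  · intro a ha la c hc
    have hcB := Finset.mem_of_mem_erase hc
    have hcx := Finset.ne_of_mem_erase hc
    by_cases e : a = x
    · rw [e]; exact clB x hxB c hcB hcx.symm
    · obtain ⟨-, -, E5⟩ := exchange hdeg hg hij hA ha la hxB hB.2 hregB hCs
        (fun n hn m hm hnm => by
          have hmx : m ≠ x := by
            rintro rfl
            exact hij ((hA.1 _ hx).symm.trans hm)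
          refine Finset.mem_erase.2 ⟨hmx, ?_⟩
          exact hB.closed hdeg hgx (Finset.mem_of_mem_erase hn)
            (by rw [Function.update_of_ne hmx]; exact hm) hnm)
        (w := z) (Finset.mem_erase.2 ⟨hzx, hzB⟩) (hzA a ha)
      exact ((E5 c hc).1 (clB c hcB x hxB hcx)).symm
  · intro c hc lc a ha
    have hcB := Finset.mem_of_mem_erase hc
    have hcx := Finset.ne_of_mem_erase hc
    have hcy : G.Adj c y := (E2 c hc).1 (clB c hcB x hxB hcx)
    by_cases e : a = x
    · rw [e]; exact clB c hcB x hxB hcx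
    · obtain ⟨-, -, E6⟩ := exchange hdeg hgx hij.symm hB hcB lc hx hA.2 hregA (backside x hx)
        (backcl x hx) (w := y) (Finset.mem_erase.2 ⟨hxy.ne.symm, hy⟩) hcy
      exact ((E6 a (Finset.mem_erase.2 ⟨e, ha⟩)).1 (clA a ha x hx e)).symm


/-- Greedy extension of a colouring over a set of vertices. -/
theorem extend_set {k : ℕ} {c : V → Fin k} {U : Finset V} (h : Prp G c U) (S : Finset V)
    (hS : ∀ v ∈ S, v ∉ U)
    (hf : ∀ v ∈ S, ∀ (U' : Finset V) (c' : V → Fin k), U ⊆ U' → U' ⊆ U ∪ S → v ∉ U' → Prp G c' U' →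
      (∀ u ∈ U, c' u = c u) → ((U'.filter (G.Adj v)).image c').card < k) :
    ∃ c' : V → Fin k, Prp G c' (U ∪ S) ∧ ∀ u ∈ U, c' u = c u := by
  induction S using Finset.induction_on with
  | empty => exact ⟨c, by simpa using h, fun _ _ => rfl⟩
  | insert a S ha ih =>
    obtain ⟨c1, h1, e1⟩ := ih (fun v hv => hS v (Finset.mem_insert_of_mem hv))
      (fun v hv U' c' hU hU' hn hp he => hf v (Finset.mem_insert_of_mem hv) U' c' hU
        (hU'.trans (Finset.union_subset_union_right (Finset.subset_insert _ _))) hn hp he)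
    have haU := hS a (Finset.mem_insert_self _ _)
    have hn : a ∉ U ∪ S := by simp [ha, haU]
    obtain ⟨c2, h2, e2⟩ := step h1 hn (hf a (Finset.mem_insert_self _ _) (U ∪ S) c1
      Finset.subset_union_left (Finset.union_subset_union_right (Finset.subset_insert _ _)) hn h1 e1)
    refine ⟨c2, by rwa [Finset.union_insert], fun u hu => ?_⟩
    rw [e2 u (fun e => haU (e ▸ hu)), e1 u hu]

/-- The final contradiction: two nonadjacent vertices in the almost-clique. -/
theorem finish {K w : ℕ} (hcr : Crit G Finset.univ K)
    (hdeg : ∀ v, dg G Finset.univ v ≤ K + 1)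
    (hw : ∀ S : Finset V, (∀ v ∈ S, K < dg G Finset.univ v) →
      (∀ a ∈ S, ∀ b ∈ S, a ≠ b → G.Adj a b) → S.card ≤ w)
    {p q : ℕ} (hpq : p + q = K) (hKw : 2 * w + 4 ≤ K + 1)
    {A C : Finset V} (hAC : Disjoint A C) (hA : A.card = p + 1) (hC : C.card = q)
    (clA : ∀ a ∈ A, ∀ b ∈ A, a ≠ b → G.Adj a b) (clC : ∀ a ∈ C, ∀ b ∈ C, a ≠ b → G.Adj a b)
    (lA : ∀ a ∈ A, dg G Finset.univ a ≤ K → ∀ c ∈ C, G.Adj a c)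
    (lC : ∀ c ∈ C, dg G Finset.univ c ≤ K → ∀ a ∈ A, G.Adj c a)
    {x y : V} (hx : x ∈ A) (hy : y ∈ C) (hxy : ¬ G.Adj x y) : False := by
  set LA := A.filter (fun v => dg G Finset.univ v ≤ K) with hLA
  set LC := C.filter (fun v => dg G Finset.univ v ≤ K) with hLC
  have xh : ¬ dg G Finset.univ x ≤ K := fun h => hxy (lA x hx h y hy)
  have yh : ¬ dg G Finset.univ y ≤ K := fun h => hxy (lC y hy h x hx).symm
  have cA : p + 1 ≤ LA.card + w := by
    have := Finset.card_filter_add_card_filter_not (s := A) (fun v => dg G Finset.univ v ≤ K)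
    rw [← hLA] at this
    have h2 := hw (A.filter (fun v => ¬ dg G Finset.univ v ≤ K)) (by simp) (by
      intro a ha b hb
      exact clA a (Finset.mem_filter.1 ha).1 b (Finset.mem_filter.1 hb).1)
    omega
  have cC : q ≤ LC.card + w := by
    have := Finset.card_filter_add_card_filter_not (s := C) (fun v => dg G Finset.univ v ≤ K)
    rw [← hLC] at this
    have h2 := hw (C.filter (fun v => ¬ dg G Finset.univ v ≤ K)) (by simp) (by
      intro a ha b hb
      exact clC a (Finset.mem_filter.1 ha).1 b (Finset.mem_filter.1 hb).1)
    omega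
  have hxne : x ≠ y := fun e => Finset.disjoint_left.1 hAC hx (e ▸ hy)
  have hLAC : Disjoint LA LC :=
    Finset.disjoint_of_subset_left (Finset.filter_subset _ _)
      (Finset.disjoint_of_subset_right (Finset.filter_subset _ _) hAC)
  set Q := A ∪ C with hQ
  set U0 := Finset.univ \ Q with hU0
  obtain ⟨c, hc⟩ := hcr.col_of_ssubset (S := U0) (Finset.subset_univ _) (by
    intro e
    have : x ∈ U0 := e ▸ Finset.mem_univ x
    simp [hU0, hQ, hx] at this)
  have split : ∀ v, dg G U0 v + dg G Q v = dg G Finset.univ v := by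
    intro v
    unfold dg
    rw [← Finset.card_union_of_disjoint]
    · congr 1
      ext u; simp [hU0]; tauto
    · rw [Finset.disjoint_left]; intro u; simp [hU0]; tauto
  have dx : p + LC.card ≤ dg G Q x := by
    have : A.erase x ∪ LC ⊆ Q.filter (G.Adj x) := by
      intro v hv
      rw [Finset.mem_union] at hv
      rw [Finset.mem_filter, hQ, Finset.mem_union]
      rcases hv with hv | hv
      · rw [Finset.mem_erase] at hv
        exact ⟨Or.inl hv.2, clA x hx v hv.2 hv.1.symm⟩
      · rw [Finset.mem_filter] at hv
        exact ⟨Or.inr hv.1, (lC v hv.1 hv.2 x hx).symm⟩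
    have h2 := Finset.card_le_card this
    rw [Finset.card_union_of_disjoint, Finset.card_erase_of_mem hx] at h2
    · unfold dg; omega
    · exact Finset.disjoint_of_subset_left (Finset.erase_subset _ _)
        (Finset.disjoint_of_subset_right (Finset.filter_subset _ _) hAC)
  have dy : q + LA.card ≤ dg G Q y + 1 := by
    have : C.erase y ∪ LA ⊆ Q.filter (G.Adj y) := by
      intro v hv
      rw [Finset.mem_union] at hv
      rw [Finset.mem_filter, hQ, Finset.mem_union]
      rcases hv with hv | hv
      · rw [Finset.mem_erase] at hv
        exact ⟨Or.inr hv.2, clC y hy v hv.2 hv.1.symm⟩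
      · rw [Finset.mem_filter] at hv
        exact ⟨Or.inl hv.1, (lA v hv.1 hv.2 y hy).symm⟩
    have h2 := Finset.card_le_card this
    rw [Finset.card_union_of_disjoint, Finset.card_erase_of_mem hy] at h2
    · unfold dg; omega
    · exact Finset.disjoint_of_subset_left (Finset.erase_subset _ _)
        (Finset.disjoint_of_subset_right (Finset.filter_subset _ _) hAC.symm)
  obtain ⟨a, ha⟩ : ∃ a : Fin K, a ∉ (U0.filter (G.Adj x)).image c ∪ (U0.filter (G.Adj y)).image c := by
    by_contra hcon
    push Not at hcon
    have h1 := Finset.card_le_card (fun a _ => hcon a : (Finset.univ : Finset (Fin K)) ⊆ _)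
    have h2 := Finset.card_union_le ((U0.filter (G.Adj x)).image c) ((U0.filter (G.Adj y)).image c)
    have h3 : ((U0.filter (G.Adj x)).image c).card ≤ dg G U0 x := Finset.card_image_le
    have h4 : ((U0.filter (G.Adj y)).image c).card ≤ dg G U0 y := Finset.card_image_le
    have h5 := split x
    have h6 := split y
    have h7 := hdeg x
    have h8 := hdeg y
    rw [Finset.card_univ, Fintype.card_fin] at h1
    omega
  have hxU : x ∉ U0 := by simp [hU0, hQ, hx]
  have hyU : y ∉ U0 := by simp [hU0, hQ, hy]
  simp only [Finset.mem_union, Finset.mem_image, Finset.mem_filter, not_or, not_exists, not_and] at ha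
  obtain ⟨ha1, ha2⟩ := ha
  set c1 : V → Fin K := fun v => if v = x ∨ v = y then a else c v with hc1
  set U1 := insert x (insert y U0) with hU1
  have p1 : Prp G c1 U1 := by
    have key : ∀ u ∈ U0, c1 u = c u := by
      intro u hu
      have : ¬ (u = x ∨ u = y) := by
        rintro (e | e)
        · exact hxU (e ▸ hu)
        · exact hyU (e ▸ hu)
      simp [hc1, this]
    have kx : c1 x = a := by simp [hc1]
    have ky : c1 y = a := by simp [hc1]
    intro u hu v hv huv
    simp only [hU1, Finset.mem_insert] at hu hv
    rcases hu with rfl | rfl | hu <;> rcases hv with rfl | rfl | hv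
    · exact absurd huv (G.loopless.irrefl _)
    · exact absurd huv hxy
    · rw [kx, key v hv]; exact fun e => ha1 v ⟨hv, huv⟩ e.symm
    · exact absurd huv.symm hxy
    · exact absurd huv (G.loopless.irrefl _)
    · rw [ky, key v hv]; exact fun e => ha2 v ⟨hv, huv⟩ e.symm
    · rw [kx, key u hu]; exact fun e => ha1 u ⟨hu, huv.symm⟩ e
    · rw [ky, key u hu]; exact fun e => ha2 u ⟨hu, huv.symm⟩ e
    · rw [key u hu, key v hv]; exact hc u hu v hv huv
  set L := LA ∪ LC with hL
  have hLcard : 4 ≤ L.card := by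
    rw [hL, Finset.card_union_of_disjoint hLAC]; omega
  have hLlow : ∀ v ∈ L, dg G Finset.univ v ≤ K := by
    intro v hv
    rw [hL, Finset.mem_union] at hv
    rcases hv with hv | hv <;> exact (Finset.mem_filter.1 hv).2
  have hLQ : ∀ v ∈ L, ∀ u ∈ Q, u ≠ v → G.Adj u v := by
    intro v hv u hu huv
    rw [hL, Finset.mem_union] at hv
    rw [hQ, Finset.mem_union] at hu
    rcases hv with hv | hv <;> rw [Finset.mem_filter] at hv <;> rcases hu with hu | hu
    · exact clA u hu v hv.1 huv
    · exact (lA v hv.1 hv.2 u hu).symm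
    · exact (lC v hv.1 hv.2 u hu).symm
    · exact clC u hu v hv.1 huv
  have hLsub : L ⊆ Q :=
    Finset.union_subset_union (Finset.filter_subset _ _) (Finset.filter_subset _ _)
  have hxL : x ∉ L := fun h => xh (hLlow x h)
  have hyL : y ∉ L := fun h => yh (hLlow y h)
  have hLU1 : ∀ v ∈ L, v ∉ U1 := by
    intro v hv hv'
    simp only [hU1, Finset.mem_insert] at hv'
    rcases hv' with e | e | e
    · exact hxL (e ▸ hv)
    · exact hyL (e ▸ hv)
    · rw [hU0, Finset.mem_sdiff] at e; exact e.2 (hLsub hv)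
  set H := (Q \ L) \ {x, y} with hH
  have hHQ : ∀ v ∈ H, v ∈ Q ∧ v ∉ L ∧ v ≠ x ∧ v ≠ y := by
    intro v hv
    simp only [hH, Finset.mem_sdiff, Finset.mem_insert, Finset.mem_singleton, not_or] at hv
    tauto
  obtain ⟨c2, p2, e2⟩ := extend_set p1 H (by
      intro v hv hv'
      obtain ⟨h1, h2, h3, h4⟩ := hHQ v hv
      simp only [hU1, Finset.mem_insert, hU0, Finset.mem_sdiff] at hv'
      tauto) (by
      intro v hv U' c' _ hU' hvU' _ _
      obtain ⟨h1, h2, h3, h4⟩ := hHQ v hv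
      refine lt_of_le_of_lt Finset.card_image_le ?_
      have hd : Disjoint (U'.filter (G.Adj v)) L := by
        rw [Finset.disjoint_left]
        intro u hu hu'
        have h5 := hU' (Finset.mem_filter.1 hu).1
        rw [Finset.mem_union] at h5
        rcases h5 with h5 | h5
        · exact hLU1 u hu' h5
        · exact (hHQ u h5).2.1 hu'
      have h6 : U'.filter (G.Adj v) ∪ L ⊆ Finset.univ.filter (G.Adj v) := by
        intro u hu
        rw [Finset.mem_union, Finset.mem_filter] at hu
        rw [Finset.mem_filter]
        rcases hu with hu | hu
        · exact ⟨Finset.mem_univ _, hu.2⟩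
        · exact ⟨Finset.mem_univ _, hLQ u hu v h1 (fun e => h2 (e ▸ hu))⟩
      have h7 := Finset.card_le_card h6
      rw [Finset.card_union_of_disjoint hd] at h7
      have h8 := hdeg v
      unfold dg at h8
      omega)
  have hx1 : x ∈ U1 := by simp [hU1]
  have hy1 : y ∈ U1 := by simp [hU1]
  have exy : c2 x = c2 y := by
    rw [e2 x hx1, e2 y hy1]; simp [hc1]
  obtain ⟨c3, p3, -⟩ := extend_set p2 L (by
      intro v hv hv'
      rw [Finset.mem_union] at hv'
      rcases hv' with h | h
      · exact hLU1 v hv h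
      · exact (hHQ v h).2.1 hv) (by
      intro v hv U' c' hU _ hvU' _ he
      have hx2 : x ∈ U1 ∪ H := Finset.mem_union_left _ hx1
      have hy2 : y ∈ U1 ∪ H := Finset.mem_union_left _ hy1
      have ax : G.Adj x v := hLQ v hv x (by simp [hQ, hx]) (fun e => hxL (e ▸ hv))
      have ay : G.Adj y v := hLQ v hv y (by simp [hQ, hy]) (fun e => hyL (e ▸ hv))
      have hce : c' x = c' y := by rw [he x hx2, he y hy2, exy]
      have h1 : (U'.filter (G.Adj v)).image c' ⊆ ((U'.filter (G.Adj v)).erase x).image c' := by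
        intro t ht
        obtain ⟨u, hu, rfl⟩ := Finset.mem_image.1 ht
        by_cases hux : u = x
        · subst hux
          rw [hce]
          exact Finset.mem_image_of_mem _ (Finset.mem_erase.2 ⟨hxne.symm,
            Finset.mem_filter.2 ⟨hU hy2, ay.symm⟩⟩)
        · exact Finset.mem_image_of_mem _ (Finset.mem_erase.2 ⟨hux, hu⟩)
      have h2 := (Finset.card_le_card h1).trans Finset.card_image_le
      have hxf : x ∈ U'.filter (G.Adj v) := Finset.mem_filter.2 ⟨hU hx2, ax.symm⟩
      have h3 := Finset.card_erase_lt_of_mem hxf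
      have h4 := dg_mono (G := G) (Finset.subset_univ U') v
      have h5 := hLlow v hv
      have h6 : dg G U' v = (U'.filter (G.Adj v)).card := rfl
      omega)
  refine hcr.1 ⟨c3, p3.mono ?_⟩
  intro v _
  simp only [hU1, hH, hU0, Finset.mem_union, Finset.mem_insert, Finset.mem_sdiff, Finset.mem_univ,
    Finset.mem_singleton]
  tauto

/-- A critical graph containing a large clique is a clique. -/
theorem clique_univ {K : ℕ} (hcr : Crit G Finset.univ K) {Q : Finset V} (hQ : Q.card = K + 1)
    (cl : ∀ a ∈ Q, ∀ b ∈ Q, a ≠ b → G.Adj a b) : Q = Finset.univ := by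
  by_contra h
  obtain ⟨c, hc⟩ := hcr.col_of_ssubset (Finset.subset_univ Q) h
  have h1 : (Q.image c).card = Q.card := by
    refine Finset.card_image_of_injOn ?_
    intro a ha b hb hab
    by_contra hne
    exact hc a ha b hb (cl a ha b hb hne) hab
  have h2 := Finset.card_le_univ (Q.image c)
  rw [Fintype.card_fin] at h2
  omega

theorem core {k D : ℕ} (hcr : Crit G Finset.univ (k - 1)) (hne : Nonempty V)
    (hD : ∀ v, dg G Finset.univ v ≤ D) (hkD : D ≤ k) (hD6 : 6 ≤ D)
    (hw : ∀ S : Finset V, (∀ v ∈ S, k ≤ dg G Finset.univ v) →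
      (∀ a ∈ S, ∀ b ∈ S, a ≠ b → G.Adj a b) → S.card ≤ D / 2 - 2) :
    Fintype.card V = k ∧ ∀ a b : V, a ≠ b → G.Adj a b := by
  obtain ⟨v0⟩ := hne
  have hle := hcr.le_dg (Finset.mem_univ v0)
  have hle' := hD v0
  by_cases hk : k = D + 1
  · have hd : ∀ v, dg G Finset.univ v = k - 1 := by
      intro v
      have := hcr.le_dg (Finset.mem_univ v)
      have := hD v
      omega
    have cl := brooks (by omega) hcr (fun v _ => (hd v).le)
    have := card_of_clique (fun v _ => hd v) (Finset.mem_univ v0) cl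
    rw [Finset.card_univ] at this
    exact ⟨by omega, fun a b => cl a (Finset.mem_univ _) b (Finset.mem_univ _)⟩
  have hk : k = D := by omega
  subst hk
  obtain ⟨r, hr1, hr2⟩ : ∃ r : Bool → ℕ, r true = (k - 1) / 2 ∧ r false = k - 1 - (k - 1) / 2 :=
    ⟨fun b => if b then (k - 1) / 2 else k - 1 - (k - 1) / 2, rfl, rfl⟩
  have hsum : r true + r false = k - 1 := by omega
  have hr : ∀ i, 2 ≤ r i ∧ (k - 1) / 2 ≤ r i := by
    intro i; cases i <;> omega
  have hdeg : ∀ v, dg G Finset.univ v ≤ r true + r false + 1 := by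
    intro v; have := hD v; omega
  have hlow : ∀ s i A, Good G r s → Bad G r s i A → ∃ x ∈ A, ∃ y ∈ A,
      dg G Finset.univ x ≤ r true + r false ∧ dg G Finset.univ y ≤ r true + r false ∧ G.Adj x y := by
    intro s i A hg hA
    have hreg : ∀ v ∈ A, dg G A v = r i := fun v hv => (hA.dg_eq hdeg hg hv).1
    obtain ⟨x, hx⟩ : A.Nonempty := by
      rw [Finset.nonempty_iff_ne_empty]
      rintro rfl
      have : 0 < r i := by have := hr i; omega
      exact hA.2.1 ⟨fun _ => ⟨0, this⟩, by intro u hu; simp at hu⟩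
    by_cases h3 : 3 ≤ r i
    · have cl := brooks h3 hA.2 (fun v hv => (hreg v hv).le)
      have hc := card_of_clique hreg hx cl
      have h1 := Finset.card_filter_add_card_filter_not (s := A)
        (fun v => dg G Finset.univ v ≤ r true + r false)
      have h2 := hw (A.filter (fun v => ¬ dg G Finset.univ v ≤ r true + r false)) (by
        intro v hv
        have := (Finset.mem_filter.1 hv).2
        omega) (by
        intro a ha b hb
        exact cl a (Finset.mem_filter.1 ha).1 b (Finset.mem_filter.1 hb).1)
      have h4 := (hr i).2
      have h5 : 1 < (A.filter (fun v => dg G Finset.univ v ≤ r true + r false)).card := by omega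
      obtain ⟨u, hu, v, hv, huv⟩ := Finset.one_lt_card.1 h5
      rw [Finset.mem_filter] at hu hv
      exact ⟨u, hu.1, v, hv.1, hu.2, hv.2, cl u hu.1 v hv.1 huv⟩
    · have hi2 : r i = 2 := by have := hr i; omega
      have hk6 : k = 6 := by have := (hr i).2; omega
      by_contra hcon
      push Not at hcon
      refine hA.2.1 ?_
      rw [hi2]
      refine ⟨fun v => if dg G Finset.univ v ≤ r true + r false then 0 else 1, ?_⟩
      intro u hu v hv huv
      by_cases h1 : dg G Finset.univ u ≤ r true + r false <;>
        by_cases h2 : dg G Finset.univ v ≤ r true + r false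
      · exact absurd huv (hcon u hu v hv h1 h2)
      · simp [h1, h2]
      · simp [h1, h2]
      · exfalso
        have := hw {u, v} (by
          intro t ht
          simp only [Finset.mem_insert, Finset.mem_singleton] at ht
          rcases ht with rfl | rfl <;> omega) (by
          intro a ha b hb hab
          simp only [Finset.mem_insert, Finset.mem_singleton] at ha hb
          rcases ha with rfl | rfl <;> rcases hb with rfl | rfl
          · exact absurd rfl hab
          · exact huv
          · exact huv.symm
          · exact absurd rfl hab)
        rw [Finset.card_pair huv.ne] at this
        omega
  obtain ⟨i, j, A, C, hij, hAC, cA, cC, clA, clC, lA, lC⟩ :=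
    final_structure (fun i => (hr i).1) hdeg (by rw [hsum]; exact hcr.1) hlow
  have hrij : r i + r j = k - 1 := by
    cases i <;> cases j <;> simp at hij <;> omega
  rw [hsum] at lA lC
  have hall : ∀ a ∈ A, ∀ c ∈ C, G.Adj a c := by
    intro x hx y hy
    by_contra hxy
    exact finish hcr (w := k / 2 - 2) (fun v => by have := hD v; omega)
      (fun S hS => hw S (fun v hv => by have := hS v hv; omega)) hrij (by omega) hAC cA cC
      clA clC lA lC hx hy hxy
  have clQ : ∀ a ∈ A ∪ C, ∀ b ∈ A ∪ C, a ≠ b → G.Adj a b := by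
    intro a ha b hb hab
    rw [Finset.mem_union] at ha hb
    rcases ha with ha | ha <;> rcases hb with hb | hb
    · exact clA a ha b hb hab
    · exact hall a ha b hb
    · exact (hall b hb a ha).symm
    · exact clC a ha b hb hab
  have hQc : (A ∪ C).card = k - 1 + 1 := by
    rw [Finset.card_union_of_disjoint hAC]; omega
  have hU := clique_univ hcr hQc clQ
  rw [hU] at clQ hQc
  rw [Finset.card_univ] at hQc
  exact ⟨by omega, fun a b => clQ a (Finset.mem_univ _) b (Finset.mem_univ _)⟩

end RabernM

open RabernM
/-- Theorem M: `K_{χ(G)}` is the only critical graph `G` with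
`χ(G) ≥ Δ(G) ≥ 6` and `ω(𝓗(G)) ≤ ⌊Δ(G)/2⌋ - 2`, where `𝓗(G)` is the
subgraph of `G` induced on the vertices of degree at least `χ(G)`. -/
theorem stmt_0 {V : Type*} [Fintype V] [DecidableEq V] (G : SimpleGraph V)
    [DecidableRel G.Adj] (k : ℕ)
    (hk : G.chromaticNumber = k)
    (hcrit : ∀ v : V, (G.induce ({v}ᶜ : Set V)).chromaticNumber < G.chromaticNumber)
    (hχΔ : G.maxDegree ≤ k) (hΔ : 6 ≤ G.maxDegree)
    (hω : (G.induce {v : V | k ≤ G.degree v}).cliqueNum ≤ G.maxDegree / 2 - 2) :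
    Nonempty (G ≃g (⊤ : SimpleGraph (Fin k))) := by
  have hdg : ∀ v, dg G Finset.univ v = G.degree v := by
    intro v
    unfold dg
    rw [← SimpleGraph.card_neighborFinset_eq_degree, SimpleGraph.neighborFinset_eq_filter]
  have hcr : Crit G Finset.univ (k - 1) := by
    constructor
    · rintro ⟨c, hc⟩
      have : G.Colorable (k - 1) :=
        ⟨SimpleGraph.Coloring.mk c (fun {u v} huv => hc u (Finset.mem_univ _) v (Finset.mem_univ _) huv)⟩
      have h := this.chromaticNumber_le
      rw [hk] at h
      have h' : k ≤ k - 1 := by exact_mod_cast h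
      omega
    · intro v _
      have h := hcrit v
      rw [hk] at h
      have h2 : (G.induce ({v}ᶜ : Set V)).chromaticNumber ≤ ((k - 1 : ℕ) : ℕ∞) := by
        refine Order.le_of_lt_add_one ?_
        have : ((k - 1 : ℕ) : ℕ∞) + 1 = k := by
          have : k - 1 + 1 = k := by omega
          exact_mod_cast this
        rwa [this]
      obtain ⟨c⟩ := SimpleGraph.chromaticNumber_le_iff_colorable.1 h2
      refine ⟨fun u => if hu : u = v then ⟨0, by omega⟩ else c ⟨u, hu⟩, ?_⟩
      intro a ha b hb hab
      have ha' := Finset.ne_of_mem_erase ha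
      have hb' := Finset.ne_of_mem_erase hb
      simp only [ha', hb', dite_false]
      exact c.valid (by simpa using hab)
  have hne : Nonempty V := by
    by_contra h
    rw [not_nonempty_iff] at h
    have : G.maxDegree ≤ 0 := SimpleGraph.maxDegree_le_of_forall_degree_le _ _ (fun v => h.elim v)
    omega
  obtain ⟨hc, hcl⟩ := core hcr hne (D := G.maxDegree)
    (fun v => by rw [hdg]; exact G.degree_le_maxDegree v) hχΔ hΔ (by
      intro S hS cl
      refine le_trans ?_ hω
      have h1 : (G.induce {v : V | k ≤ G.degree v}).IsClique
          ((S.subtype (fun v => v ∈ {v : V | k ≤ G.degree v}) : Finset _) : Set _) := by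
        intro a ha b hb hab
        have ha' : (a : V) ∈ S := by simpa using ha
        have hb' : (b : V) ∈ S := by simpa using hb
        exact cl a ha' b hb' (fun e => hab (Subtype.ext e))
      have h2 := h1.card_le_cliqueNum
      rw [Finset.card_subtype, Finset.filter_true_of_mem (fun v hv => by
        have := hS v hv; rw [hdg] at this; exact this)] at h2
      exact h2)
  have e := Fintype.equivFinOfCardEq hc
  refine ⟨⟨e, ?_⟩⟩
  intro a b
  rw [SimpleGraph.top_adj]
  constructor
  · intro h; exact hcl a b (fun e' => h (by rw [e']))
  · intro h h'; exact h.ne (e.injective h')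
end

section
/- Let G be a finite simple graph that is vertex-critical with respect to chromatic number. If χ(G) ≥ Δ(G) ≥ 6 and the set of vertices of G of degree at least χ(G) is an independent set, then G is isomorphic to K_{χ(G)}. -/
open SimpleGraph

set_option linter.unusedSectionVars false
set_option linter.unusedVariables false

namespace KK

/-- restricted adjacency -/
def KG {V : Type*} (H : SimpleGraph V) (A : V → Prop) (u v : V) : Prop :=
  H.Adj u v ∧ A u ∧ A v

/-- the connectivity relation of a restricted graph -/
def Rc {V : Type*} (H : SimpleGraph V) (A : V → Prop) (u v : V) : Prop :=
  Relation.ReflTransGen (KG H A) u v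

theorem Rc.symm' {V : Type*} {H : SimpleGraph V} {A : V → Prop} {u v : V} (h : Rc H A u v) :
    Rc H A v u := by
  unfold Rc at *
  induction h with
  | refl => exact Relation.ReflTransGen.refl
  | tail _ h2 ih => exact Relation.ReflTransGen.head ⟨h2.1.symm, h2.2.2, h2.2.1⟩ ih

/-- proper colouring with colours below `r`, off the vertex `x` -/
def Ok {V : Type*} (H : SimpleGraph V) (r : ℕ) (x : V) (c : V → ℕ) : Prop :=
  (∀ v, c v < r) ∧ ∀ u v, H.Adj u v → u ≠ x → v ≠ x → c u ≠ c v

open Classical in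
/-- the neighbourhood as a finset -/
noncomputable def nb {V : Type*} [Fintype V] (H : SimpleGraph V) (x : V) : Finset V :=
  Finset.univ.filter (fun v => H.Adj x v)

/-- the degree -/
noncomputable def dg {V : Type*} [Fintype V] (H : SimpleGraph V) (x : V) : ℕ := (nb H x).card

theorem mem_nb {V : Type*} [Fintype V] {H : SimpleGraph V} {x v : V} :
    v ∈ nb H x ↔ H.Adj x v := by simp [nb]

/-- there is no proper colouring with `r` colours -/
def NoCol {V : Type*} (H : SimpleGraph V) (r : ℕ) : Prop :=
  ¬ ∃ c : V → ℕ, (∀ v, c v < r) ∧ ∀ u v, H.Adj u v → c u ≠ c v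

section
variable {V : Type*} [Fintype V] {H : SimpleGraph V} {r : ℕ}

open Classical in
theorem B1 (hno : NoCol H r) {x : V} {c : V → ℕ} (h : Ok H r x c) {i : ℕ} (hi : i < r) :
    ∃ v, H.Adj x v ∧ c v = i := by
  by_contra hcon
  push Not at hcon
  refine hno ⟨Function.update c x i, ?_, ?_⟩
  · intro v
    by_cases hv : v = x
    · subst hv; simpa using hi
    · simpa [hv] using h.1 v
  · intro u v huv
    by_cases hu : u = x
    · subst hu
      have hv : v ≠ u := huv.ne'
      simpa [hv] using (hcon v huv).symm
    · by_cases hv : v = x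
      · subst hv
        simpa [hu] using hcon u huv.symm
      · simpa [hu, hv] using h.2 u v huv hu hv

open Classical in
theorem B2 (hno : NoCol H r) {x : V} {c : V → ℕ} (h : Ok H r x c) (hd : dg H x ≤ r)
    {u v : V} (hu : H.Adj x u) (hv : H.Adj x v) (huv : c u = c v) : u = v := by
  have := Finset.inj_on_of_surj_on_of_card_le (s := nb H x) (t := Finset.range r)
    (fun a _ => c a) (fun a _ => by simpa using h.1 a)
    (fun b hb => by
      obtain ⟨v, h1, h2⟩ := B1 hno h (by simpa using hb : b < r)
      exact ⟨v, mem_nb.2 h1, h2⟩)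
    (by simpa [dg] using hd)
  exact this (mem_nb.2 hu) (mem_nb.2 hv) huv

open Classical in
theorem B3 (hno : NoCol H r) {x : V} {c : V → ℕ} (h : Ok H r x c) (hd : dg H x ≤ r)
    {y : V} (hy : H.Adj x y) : Ok H r y (Function.update c x (c y)) := by
  refine ⟨?_, ?_⟩
  · intro v
    by_cases hv : v = x
    · subst hv; simpa using h.1 y
    · simpa [hv] using h.1 v
  · intro u v huv huy hvy
    by_cases hu : u = x
    · subst hu
      have hv : v ≠ u := huv.ne'
      simp only [Function.update_self, ne_eq, hv, not_false_eq_true, Function.update_of_ne]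
      intro hc
      exact hvy (B2 hno h hd hy huv hc).symm
    · by_cases hv : v = x
      · subst hv
        simp only [Function.update_self, ne_eq, hu, not_false_eq_true, Function.update_of_ne]
        intro hc
        exact huy (B2 hno h hd huv.symm hy hc)
      · simpa [hu, hv] using h.2 u v huv hu hv

/-- the class of two colours together with the free vertex -/
def Cl (x : V) (c : V → ℕ) (i j : ℕ) (v : V) : Prop := v = x ∨ c v = i ∨ c v = j

/-- the class of two colours without the free vertex -/
def Cm (x : V) (c : V → ℕ) (i j : ℕ) (v : V) : Prop := v ≠ x ∧ (c v = i ∨ c v = j)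

theorem B4a (hno : NoCol H r) (hd : ∀ v, dg H v ≤ r) {x : V} {c : V → ℕ} (h : Ok H r x c)
    {i j : ℕ} {y : V} (hy : Rc H (Cl x c i j) x y) :
    ∃ c', Ok H r y c' ∧ ∀ v, Cl x c i j v ↔ Cl y c' i j v := by
  classical
  unfold Rc at hy
  induction hy with
  | refl => exact ⟨c, h, fun v => Iff.rfl⟩
  | @tail y z _ hyz ih =>
    obtain ⟨c', h1, h2⟩ := ih
    refine ⟨_, B3 hno h1 (hd y) hyz.1, ?_⟩
    intro v
    have hz := (h2 z).1 hyz.2.2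
    have hy := hyz.2.1
    have hne : z ≠ y := hyz.1.ne'
    rw [h2 v]
    by_cases hv : v = y
    · subst hv
      simp only [Cl, hne, false_or, true_or, Function.update_self, true_iff] at hz ⊢
      tauto
    · simp only [Cl, hv, hne, false_or, ne_eq, not_false_eq_true, Function.update_of_ne] at hz ⊢
      constructor
      · tauto
      · rintro (rfl | h | h)
        · tauto
        · tauto
        · tauto

theorem B4 (hno : NoCol H r) (hd : ∀ v, dg H v ≤ r) {x : V} {c : V → ℕ} (h : Ok H r x c)
    {i j : ℕ} (hi : i < r) (hj : j < r) (hij : i ≠ j) {y : V} (hy : Rc H (Cl x c i j) x y) :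
    ∃ u w, u ≠ w ∧ H.Adj y u ∧ H.Adj y w ∧ Cl x c i j u ∧ Cl x c i j w ∧
      ∀ v, H.Adj y v → Cl x c i j v → v = u ∨ v = w := by
  classical
  obtain ⟨c', h1, h2⟩ := B4a hno hd h hy
  obtain ⟨u, hu, hu'⟩ := B1 hno h1 hi
  obtain ⟨w, hw, hw'⟩ := B1 hno h1 hj
  refine ⟨u, w, ?_, hu, hw, ?_, ?_, ?_⟩
  · rintro rfl; omega
  · rw [h2]; simp [Cl, hu']
  · rw [h2]; simp [Cl, hw']
  · intro v hv hc
    rw [h2] at hc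
    have hd' : dg H y ≤ r := hd y
    rcases hc with rfl | hc | hc
    · exact absurd hv (H.loopless.irrefl _)
    · left; exact B2 hno h1 (hd y) hv hu (by omega)
    · right; exact B2 hno h1 (hd y) hv hw (by omega)

open Classical in
/-- Kempe flip -/
noncomputable def flp (c : V → ℕ) (i j : ℕ) (T : V → Prop) (v : V) : ℕ :=
  if T v ∧ c v = i then j else if T v ∧ c v = j then i else c v

theorem flp_ok {x : V} {c : V → ℕ} (h : Ok H r x c)
    {i j : ℕ} (hi : i < r) (hj : j < r) (u : V) :
    Ok H r x (flp c i j (Rc H (Cm x c i j) u)) := by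
  refine ⟨?_, ?_⟩
  · intro v
    unfold flp
    have := h.1 v
    split_ifs <;> omega
  · intro a b hab ha hb
    have h0 := h.2 a b hab ha hb
    have key : Cm x c i j a → Cm x c i j b →
        (Rc H (Cm x c i j) u a ↔ Rc H (Cm x c i j) u b) := by
      intro h1 h2
      constructor
      · intro h; exact Relation.ReflTransGen.tail h ⟨hab, h1, h2⟩
      · intro h; exact Relation.ReflTransGen.tail h ⟨hab.symm, h2, h1⟩
    simp only [Cm, ha, hb, ne_eq, not_false_eq_true, true_and] at key
    unfold flp
    split_ifs <;> grind

theorem B5 (hno : NoCol H r) {x : V} {c : V → ℕ} (h : Ok H r x c) (hdx : dg H x ≤ r)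
    {i j : ℕ} (hij : i ≠ j) {u w : V} (hu : H.Adj x u) (hw : H.Adj x w) (hui : c u = i)
    (hwj : c w = j) : Rc H (Cm x c i j) u w := by
  classical
  by_contra hcon
  have hi : i < r := hui ▸ h.1 u
  have hj : j < r := hwj ▸ h.1 w
  obtain ⟨v, hv, hvi⟩ := B1 hno (flp_ok h hi hj u) hi
  have e1 : c v = i → v = u := fun hh => B2 hno h hdx hv hu (by omega)
  have e2 : c v = j → v = w := fun hh => B2 hno h hdx hv hw (by omega)
  have e3 : Rc H (Cm x c i j) u u := Relation.ReflTransGen.refl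
  unfold flp at hvi
  split_ifs at hvi with h1 h2
  · omega
  · have := e2 h2.2; subst this; exact hcon h2.1
  · have := e1 hvi; subst this; exact h1 ⟨e3, hvi⟩

theorem Rc.mono {A B : V → Prop} (hAB : ∀ v, A v → B v) {u v : V} (h : Rc H A u v) :
    Rc H B u v :=
  Relation.ReflTransGen.mono (r := KG H A) (p := KG H B)
    (fun _ _ h => ⟨h.1, hAB _ h.2.1, hAB _ h.2.2⟩) _ _ h

theorem Rc.mem {A : V → Prop} {u v : V} (h : Rc H A u v) (hu : A u) : A v := by
  unfold Rc at h
  induction h with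
  | refl => exact hu
  | tail _ h2 _ => exact h2.2.2

theorem B6 (hno : NoCol H r) (hd : ∀ v, dg H v ≤ r) {x : V} {c : V → ℕ} (h : Ok H r x c)
    {i j l : ℕ} (hi : i < r) (hj : j < r) (hl : l < r) (hij : i ≠ j) (hil : i ≠ l) (hjl : j ≠ l)
    {u : V} (hux : u ≠ x) (hui : c u = i) (h1 : Rc H (Cl x c i j) x u)
    (h2 : Rc H (Cl x c i l) x u) : H.Adj x u := by
  classical
  by_contra hcon
  obtain ⟨a, b, hab, ha, hb, hca, hcb, -⟩ := B4 hno hd h hi hj hij h1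
  obtain ⟨a', b', hab', ha', hb', hca', hcb', -⟩ := B4 hno hd h hi hl hil h2
  have nx : ∀ v, H.Adj u v → v ≠ x := by rintro v hv rfl; exact hcon hv.symm
  have nc : ∀ v, H.Adj u v → c v ≠ i := by
    intro v hv hc
    exact h.2 u v hv hux (nx v hv) (by omega)
  have ea : c a = j := by have := nx a ha; have := nc a ha; simp only [Cl] at hca; tauto
  have eb : c b = j := by have := nx b hb; have := nc b hb; simp only [Cl] at hcb; tauto
  have ea' : c a' = l := by have := nx a' ha'; have := nc a' ha'; simp only [Cl] at hca'; tauto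
  have eb' : c b' = l := by have := nx b' hb'; have := nc b' hb'; simp only [Cl] at hcb'; tauto
  have : ∃ m ∈ (Finset.range r).erase i, m ∉ (((nb H u).erase a).erase a').image c := by
    apply Finset.exists_mem_notMem_of_card_lt_card
    refine lt_of_le_of_lt Finset.card_image_le ?_
    have ha1 : a ∈ nb H u := mem_nb.2 ha
    have ha2 : a' ∈ (nb H u).erase a := by
      rw [Finset.mem_erase]
      refine ⟨?_, mem_nb.2 ha'⟩
      rintro rfl; omega
    rw [Finset.card_erase_of_mem ha2, Finset.card_erase_of_mem ha1,
      Finset.card_erase_of_mem (by simpa using hi), Finset.card_range]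
    have : (nb H u).card ≤ r := by
      exact hd u
    have h3 : 0 < ((nb H u).erase a).card := Finset.card_pos.2 ⟨_, ha2⟩
    rw [Finset.card_erase_of_mem ha1] at h3
    omega
  obtain ⟨m, hm, hm'⟩ := this
  simp only [Finset.mem_erase, Finset.mem_range] at hm
  have hfree : ∀ v, H.Adj u v → c v ≠ m := by
    intro v hv hc
    apply hm'
    rw [Finset.mem_image]
    by_cases hva : v = a
    · refine ⟨b, ?_, by subst hva; omega⟩
      simp only [Finset.mem_erase, mem_nb]
      refine ⟨?_, hab.symm, hb⟩
      rintro rfl; omega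
    · by_cases hva' : v = a'
      · refine ⟨b', ?_, by subst hva'; omega⟩
        simp only [Finset.mem_erase, mem_nb]
        refine ⟨hab'.symm, ?_, hb'⟩
        rintro rfl; omega
      · exact ⟨v, by simp [hva, hva', hv, mem_nb], hc⟩
  have hok : Ok H r x (Function.update c u m) := by
    refine ⟨?_, ?_⟩
    · intro v
      by_cases hv : v = u
      · subst hv; simpa using hm.2
      · simpa [hv] using h.1 v
    · intro p q hpq hp hq
      by_cases hu : p = u
      · subst hu
        have hv : q ≠ p := hpq.ne'
        simpa [hv] using (hfree q hpq).symm
      · by_cases hv : q = u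
        · subst hv
          simpa [hu] using hfree p hpq.symm
        · simpa [hu, hv] using h.2 p q hpq hp hq
  have hmj : m ≠ j := fun hh => hfree a ha (by omega)
  have hsub : ∀ v, Cl x (Function.update c u m) i j v → Cl x c i j v := by
    intro v
    by_cases hv : v = u
    · subst hv; simp [Cl, hm.1, hmj, hux]
    · simp [Cl, hv]
  have key : ∀ w, Rc H (Cl x c i j) x w → Rc H (Cl x (Function.update c u m) i j) x w := by
    intro w h1
    unfold Rc at h1
    induction h1 with
    | refl => exact Relation.ReflTransGen.refl
    | @tail y z hy hyz ih =>
      obtain ⟨p, q, hpq, hp, hq, hcp, hcq, hall⟩ := B4 hno hd h hi hj hij hy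
      obtain ⟨p', q', hpq', hp', hq', hcp', hcq', -⟩ := B4 hno hd hok hi hj hij ih
      have e1 := hall p' hp' (hsub _ hcp')
      have e2 := hall q' hq' (hsub _ hcq')
      have e3 := hall z hyz.1 hyz.2.2
      have : z = p' ∨ z = q' := by grind
      have hy' : Cl x (Function.update c u m) i j y := Rc.mem ih (Or.inl rfl)
      rcases this with rfl | rfl
      · exact Relation.ReflTransGen.tail ih ⟨hp', hy', hcp'⟩
      · exact Relation.ReflTransGen.tail ih ⟨hq', hy', hcq'⟩
  have := Rc.mem (key u h1) (Or.inl rfl)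
  simp [Cl, hux, hm.1, hmj] at this

theorem B7 (hr : 3 ≤ r) (hno : NoCol H r) (hd : ∀ v, dg H v ≤ r) {x : V} {c : V → ℕ}
    (h : Ok H r x c) {v1 v2 : V} (h1 : H.Adj x v1) (h2 : H.Adj x v2) (h12 : v1 ≠ v2) :
    H.Adj v1 v2 := by
  classical
  by_contra hcon
  have hB2 : ∀ u v, H.Adj x u → H.Adj x v → c u = c v → u = v :=
    fun u v hu hv hc => B2 hno h (hd x) hu hv hc
  obtain ⟨i, hi⟩ : ∃ i, c v1 = i := ⟨_, rfl⟩
  obtain ⟨j, hj⟩ : ∃ j, c v2 = j := ⟨_, rfl⟩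
  have hij : i ≠ j := by
    intro hh; exact h12 (hB2 v1 v2 h1 h2 (by omega))
  have hir : i < r := hi ▸ h.1 v1
  have hjr : j < r := hj ▸ h.1 v2
  obtain ⟨l, hlr, hil, hjl⟩ : ∃ l, l < r ∧ i ≠ l ∧ j ≠ l := by
    by_cases a : i ≠ 0 ∧ j ≠ 0
    · exact ⟨0, by omega, a.1, a.2⟩
    · by_cases b : i ≠ 1 ∧ j ≠ 1
      · exact ⟨1, by omega, b.1, b.2⟩
      · exact ⟨2, by omega, by omega, by omega⟩
  have z1 : Rc H (Cl x c i j) x v1 :=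
    Relation.ReflTransGen.single ⟨h1, Or.inl rfl, Or.inr (Or.inl hi)⟩
  obtain ⟨u, hux, hu, huC, huall⟩ : ∃ u, u ≠ x ∧ H.Adj v1 u ∧ Cl x c i j u ∧
      ∀ v, H.Adj v1 v → Cl x c i j v → v = x ∨ v = u := by
    obtain ⟨a, b, hab, ha, hb, hca, hcb, hall⟩ := B4 hno hd h hir hjr hij z1
    rcases hall x h1.symm (Or.inl rfl) with e | e
    · subst e; exact ⟨b, hab.symm, hb, hcb, hall⟩
    · subst e; exact ⟨a, hab, ha, hca, fun v hv hv' => (hall v hv hv').symm⟩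
  have huj : c u = j := by
    have := h.2 v1 u hu h1.ne' hux
    simp only [Cl] at huC
    rcases huC with e | e | e
    · exact absurd e hux
    · omega
    · exact e
  have hunx : ¬ H.Adj x u := by
    intro hh
    have := hB2 u v2 hh h2 (by omega)
    subst this; exact hcon hu
  obtain ⟨c', hc'⟩ : ∃ c', flp c i l (Rc H (Cm x c i l) v1) = c' := ⟨_, rfl⟩
  have hok : Ok H r x c' := hc' ▸ flp_ok h hir hlr v1
  have c'j : ∀ v, c v = j → c' v = j := by
    intro v hv; rw [← hc']; unfold flp; split_ifs <;> omega
  have c'v1 : c' v1 = l := by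
    rw [← hc']; unfold flp
    rw [if_pos ⟨Relation.ReflTransGen.refl, hi⟩]
  have zu1 : Rc H (Cl x c' j l) x u := by
    refine Relation.ReflTransGen.tail (b := v1) (Relation.ReflTransGen.single ?_) ?_
    · exact ⟨h1, Or.inl rfl, Or.inr (Or.inr c'v1)⟩
    · exact ⟨hu, Or.inr (Or.inr c'v1), Or.inr (Or.inl (c'j u huj))⟩
  have zu2 : Rc H (Cl x c' j i) x u := by
    by_contra hnu
    have hr21 : Rc H (Cm x c j i) v2 v1 := B5 hno h (hd x) hij.symm h2 h1 hj hi
    have key : ∀ y, Rc H (Cm x c j i) v2 y → Rc H (Cl x c' j i) x y ∧ Rc H (Cl x c i j) x y := by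
      intro y hy
      unfold Rc at hy
      induction hy with
      | refl =>
        refine ⟨Relation.ReflTransGen.single ⟨h2, Or.inl rfl, Or.inr (Or.inl (c'j _ hj))⟩, ?_⟩
        exact Relation.ReflTransGen.single ⟨h2, Or.inl rfl, Or.inr (Or.inr hj)⟩
      | @tail y z _ hyz ih =>
        obtain ⟨ih1, ih2⟩ := ih
        have hz2 : Rc H (Cl x c i j) x z := by
          refine Relation.ReflTransGen.tail ih2 ⟨hyz.1, ?_, ?_⟩
          · have := hyz.2.1; simp only [Cm, Cl] at *; tauto
          · have := hyz.2.2; simp only [Cm, Cl] at *; tauto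
        refine ⟨?_, hz2⟩
        have hA' : Cl x c' j i y := Rc.mem ih1 (Or.inl rfl)
        refine Relation.ReflTransGen.tail ih1 ⟨hyz.1, hA', ?_⟩
        rcases hyz.2.2.2 with e | e
        · exact Or.inr (Or.inl (c'j _ e))
        · by_cases hzT : Rc H (Cm x c i l) v1 z
          · exfalso
            have hxz : Rc H (Cl x c i l) x z := by
              refine Relation.ReflTransGen.head (b := v1) ⟨h1, Or.inl rfl, Or.inr (Or.inl hi)⟩ ?_
              exact Rc.mono (fun v hv => Or.inr hv.2) hzT
            have := B6 hno hd h hir hjr hlr hij hil hjl hyz.2.2.1 e hz2 hxz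
            have := hB2 z v1 this h1 (by omega)
            subst this
            have hy1 : Cl x c i j y := Rc.mem ih2 (Or.inl rfl)
            rcases huall y hyz.1.symm hy1 with e | e
            · exact hyz.2.1.1 e
            · subst e; exact hnu ih1
          · refine Or.inr (Or.inr ?_)
            rw [← hc']; unfold flp
            rw [if_neg (fun hh => hzT hh.1), if_neg (fun hh => hzT hh.1)]; exact e
    have := Rc.mem (key v1 hr21).1 (Or.inl rfl)
    rcases this with e | e | e
    · exact h1.ne' e
    · omega
    · omega
  exact hunx (B6 hno hd hok hjr hir hlr hij.symm hjl hil hux (c'j u huj) zu2 zu1)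

end
end KK

namespace KK

/-- the subgraph of the vertices in class `i` -/
def Hd {V : Type*} (G : SimpleGraph V) (p : V → Bool) (i : Bool) : SimpleGraph V where
  Adj u v := KG G (fun v => p v = i) u v
  symm := ⟨fun _ _ h => ⟨h.1.symm, h.2.2, h.2.1⟩⟩
  loopless := ⟨fun _ h => G.loopless.irrefl _ h.1⟩

theorem Hd_adj {V : Type*} {G : SimpleGraph V} {p : V → Bool} {i : Bool} {u v : V} :
    (Hd G p i).Adj u v ↔ G.Adj u v ∧ p u = i ∧ p v = i := Iff.rfl

/-- number of colours of a class -/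
def rr (k : ℕ) (i : Bool) : ℕ := if i then k - 3 else 2

open Classical in
/-- move the vertex `x` to the other class -/
noncomputable def fl {V : Type*} (x : V) (p : V → Bool) : V → Bool :=
  Function.update p x (!p x)

theorem fl_self {V : Type*} {x : V} {p : V → Bool} : fl x p x = !p x := by simp [fl]
theorem fl_ne {V : Type*} {x v : V} {p : V → Bool} (h : v ≠ x) : fl x p v = p v := by simp [fl, h]
theorem fl_fl {V : Type*} {x : V} {p : V → Bool} : fl x (fl x p) = p := by
  funext v
  by_cases h : v = x
  · subst h; simp [fl_self]
  · simp [fl_ne h]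

structure Ctx {V : Type*} [Fintype V] (G : SimpleGraph V) (k : ℕ) : Prop where
  k6 : 6 ≤ k
  nocol : NoCol G (k - 1)
  crit : ∀ x, ∃ c, Ok G (k - 1) x c
  deg : ∀ v, dg G v = k - 1 ∨ dg G v = k
  ind : ∀ u v, G.Adj u v → dg G u = k - 1 ∨ dg G v = k - 1
  noclq : ∀ Q : Finset V, Q.card = k → ∃ u ∈ Q, ∃ v ∈ Q, u ≠ v ∧ ¬ G.Adj u v

section
variable {V : Type*} [Fintype V] {G : SimpleGraph V} {k : ℕ}

def Valid (G : SimpleGraph V) (k : ℕ) (x : V) (p : V → Bool) : Prop :=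
  ∀ i, ∃ c, Ok (Hd G p i) (rr k i) x c

theorem Valid.flip {x : V} {p : V → Bool} (h : Valid G k x p) : Valid G k x (fl x p) := by
  intro i
  obtain ⟨c, h1, h2⟩ := h i
  refine ⟨c, h1, ?_⟩
  intro u v huv hu hv
  refine h2 u v ?_ hu hv
  rw [Hd_adj] at *
  rwa [fl_ne hu, fl_ne hv] at huv

theorem nofull (hC : Ctx G k) (p : V → Bool)
    (h : ∀ i, ∃ c : V → ℕ, (∀ v, c v < rr k i) ∧ ∀ u v, (Hd G p i).Adj u v → c u ≠ c v) :
    False := by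
  choose c h1 h2 using h
  have := hC.k6
  refine hC.nocol ⟨fun v => if p v then c true v + 2 else c false v, ?_, ?_⟩
  · intro v
    have a1 := h1 true v
    have a2 := h1 false v
    simp only [rr] at a1 a2
    dsimp only
    split_ifs
    · simp at a1; omega
    · simp at a2; omega
  · intro u v huv
    have b2 := h1 false u
    have b3 := h1 false v
    simp only [rr] at b2 b3
    simp at b2 b3
    dsimp only
    split_ifs with hu hv hv
    · have := h2 true u v ⟨huv, hu, hv⟩; omega
    · omega
    · omega
    · have := h2 false u v ⟨huv, by simpa using hu, by simpa using hv⟩; omega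

theorem other_class {p : V → Bool} {i : Bool} {x : V} (hi : p x ≠ i) {c : V → ℕ} {r : ℕ}
    (h : Ok (Hd G p i) r x c) : ∀ u v, (Hd G p i).Adj u v → c u ≠ c v := by
  intro u v huv
  refine h.2 u v huv ?_ ?_
  · rintro rfl; exact hi huv.2.1
  · rintro rfl; exact hi huv.2.2

theorem nocolx (hC : Ctx G k) {x : V} {p : V → Bool} (h : Valid G k x p) :
    NoCol (Hd G p (p x)) (rr k (p x)) := by
  intro hc
  refine nofull hC p ?_
  intro i
  by_cases hi : p x = i
  · subst hi; exact hc
  · obtain ⟨c, hc⟩ := h i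
    exact ⟨c, hc.1, other_class hi hc⟩

theorem L1 (hC : Ctx G k) {x : V} {p : V → Bool} (h : Valid G k x p) :
    rr k (p x) ≤ dg (Hd G p (p x)) x := by
  classical
  obtain ⟨c, hc⟩ := h (p x)
  have := Finset.card_le_card_of_surjOn (s := nb (Hd G p (p x)) x)
    (t := Finset.range (rr k (p x))) c ?_
  · simpa [dg] using this
  · intro b hb
    obtain ⟨v, h1, h2⟩ := B1 (nocolx hC h) hc (by simpa using hb : b < _)
    exact ⟨v, by simpa [mem_nb] using h1, h2⟩

open Classical in
/-- the potential -/
noncomputable def Phi (G : SimpleGraph V) (x : V) (p : V → Bool) : ℕ :=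
  (Finset.univ.filter (fun e : V × V => e.1 ≠ x ∧ e.2 ≠ x ∧ G.Adj e.1 e.2 ∧ p e.1 = p e.2)).card

open Classical in
noncomputable def Psi (G : SimpleGraph V) (p : V → Bool) : ℕ :=
  (Finset.univ.filter (fun e : V × V => G.Adj e.1 e.2 ∧ p e.1 = p e.2)).card

theorem Phi_flip {x : V} {p : V → Bool} : Phi G x (fl x p) = Phi G x p := by
  classical
  unfold Phi
  congr 1
  ext e
  simp only [Finset.mem_filter, Finset.mem_univ, true_and]
  constructor
  · rintro ⟨h1, h2, h3, h4⟩
    rw [fl_ne h1, fl_ne h2] at h4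
    exact ⟨h1, h2, h3, h4⟩
  · rintro ⟨h1, h2, h3, h4⟩
    rw [fl_ne h1, fl_ne h2]
    exact ⟨h1, h2, h3, h4⟩

theorem Phi_Psi {x : V} {p : V → Bool} :
    Phi G x p + 2 * dg (Hd G p (p x)) x = Psi G p := by
  classical
  have e1 : (Finset.univ.filter (fun e : V × V => e.1 = x ∧ G.Adj e.1 e.2 ∧ p e.1 = p e.2)).card
      = dg (Hd G p (p x)) x := by
    unfold dg
    symm
    apply Finset.card_bij (fun v _ => (x, v))
    · intro v hv
      rw [mem_nb, Hd_adj] at hv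
      simp [hv.1, hv.2.2]
    · intro a _ b _ h; simpa using h
    · rintro ⟨a, b⟩ h
      simp only [Finset.mem_filter, Finset.mem_univ, true_and] at h
      obtain ⟨rfl, h1, h2⟩ := h
      exact ⟨b, by rw [mem_nb, Hd_adj]; exact ⟨h1, rfl, h2.symm⟩, rfl⟩
  have e2 : (Finset.univ.filter (fun e : V × V => e.2 = x ∧ G.Adj e.1 e.2 ∧ p e.1 = p e.2)).card
      = dg (Hd G p (p x)) x := by
    unfold dg
    symm
    apply Finset.card_bij (fun v _ => (v, x))
    · intro v hv
      rw [mem_nb, Hd_adj] at hv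
      simp [hv.1.symm, hv.2.2]
    · intro a _ b _ h; simpa using h
    · rintro ⟨a, b⟩ h
      simp only [Finset.mem_filter, Finset.mem_univ, true_and] at h
      obtain ⟨rfl, h1, h2⟩ := h
      exact ⟨a, by rw [mem_nb, Hd_adj]; exact ⟨h1.symm, rfl, h2⟩, rfl⟩
  have : Finset.univ.filter (fun e : V × V => G.Adj e.1 e.2 ∧ p e.1 = p e.2) =
      (Finset.univ.filter (fun e : V × V => e.1 ≠ x ∧ e.2 ≠ x ∧ G.Adj e.1 e.2 ∧ p e.1 = p e.2)) ∪
      ((Finset.univ.filter (fun e : V × V => e.1 = x ∧ G.Adj e.1 e.2 ∧ p e.1 = p e.2)) ∪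
      (Finset.univ.filter (fun e : V × V => e.2 = x ∧ G.Adj e.1 e.2 ∧ p e.1 = p e.2))) := by
    ext e
    simp only [Finset.mem_filter, Finset.mem_univ, true_and, Finset.mem_union]
    tauto
  unfold Psi
  rw [this, Finset.card_union_of_disjoint, Finset.card_union_of_disjoint, e1, e2]
  · unfold Phi; omega
  · rw [Finset.disjoint_left]
    rintro ⟨a, b⟩ h1 h2
    simp only [Finset.mem_filter, Finset.mem_univ, true_and] at h1 h2
    obtain ⟨rfl, h1, -⟩ := h1
    obtain ⟨rfl, -⟩ := h2
    exact G.loopless.irrefl _ h1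
  · rw [Finset.disjoint_left]
    rintro ⟨a, b⟩ h1 h2
    simp only [Finset.mem_filter, Finset.mem_univ, true_and, Finset.mem_union] at h1 h2
    tauto

def Mn (G : SimpleGraph V) (k : ℕ) (x : V) (p : V → Bool) : Prop :=
  Valid G k x p ∧ ∀ y q, Valid G k y q → Phi G x p ≤ Phi G y q

theorem Mn.flip {x : V} {p : V → Bool} (h : Mn G k x p) : Mn G k x (fl x p) :=
  ⟨h.1.flip, by rw [Phi_flip]; exact h.2⟩

theorem L2 (hC : Ctx G k) {x : V} {p : V → Bool} (h : Mn G k x p)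
    (hd : dg (Hd G p (p x)) x = rr k (p x)) {y : V} (hy : (Hd G p (p x)).Adj x y) :
    Mn G k y p ∧ dg (Hd G p (p y)) y = rr k (p y) := by
  have hpy : p y = p x := hy.2.2
  have hv : Valid G k y p := by
    intro i
    obtain ⟨c, hc⟩ := h.1 i
    by_cases hi : p x = i
    · subst hi
      exact ⟨_, B3 (nocolx hC h.1) hc hd.le hy⟩
    · exact ⟨c, hc.1, fun u v huv _ _ => other_class hi hc u v huv⟩
  have e1 := Phi_Psi (G := G) (x := x) (p := p)
  have e2 := Phi_Psi (G := G) (x := y) (p := p)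
  have e3 := L1 hC hv
  have e4 := h.2 y p hv
  rw [hpy] at *
  refine ⟨⟨hv, fun z q hz => ?_⟩, by omega⟩
  have := h.2 z q hz
  omega

theorem dg_split (x : V) (p : V → Bool) :
    dg G x = dg (Hd G p (p x)) x + dg (Hd G (fl x p) (fl x p x)) x := by
  classical
  unfold dg
  rw [← Finset.card_union_of_disjoint]
  · congr 1
    ext v
    simp only [Finset.mem_union, mem_nb, Hd_adj, true_and, fl_self]
    constructor
    · intro h
      rw [fl_ne h.ne']
      by_cases hh : p v = p x
      · left; exact ⟨h, hh⟩
      · right; refine ⟨h, ?_⟩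
        cases h1 : p v <;> cases h2 : p x <;> simp_all
    · rintro (h | h)
      · exact h.1
      · exact h.1
  · rw [Finset.disjoint_left]
    intro v h1 h2
    rw [mem_nb, Hd_adj] at h1 h2
    rw [fl_self, fl_ne h1.1.ne'] at h2
    have a := h1.2.2
    have b := h2.2.2
    rw [a] at b
    revert b
    cases p x <;> decide

theorem rr_sum (hC : Ctx G k) (i : Bool) : rr k i + rr k (!i) = k - 1 := by
  have := hC.k6
  cases i <;> simp [rr] <;> omega

theorem L3 (hC : Ctx G k) {x : V} {p : V → Bool} (h : Mn G k x p) (hl : dg G x = k - 1) :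
    dg (Hd G p (p x)) x = rr k (p x) := by
  have a := L1 hC h.1
  have b := L1 hC h.flip.1
  have c := dg_split (G := G) x p
  have d := rr_sum hC (p x)
  rw [fl_self] at *
  omega

theorem L4 (hC : Ctx G k) {x : V} {p : V → Bool} (h : Mn G k x p)
    (hd : dg (Hd G p (p x)) x = rr k (p x)) {y : V} (hy : Rc G (fun v => p v = p x) x y) :
    Mn G k y p ∧ dg (Hd G p (p y)) y = rr k (p y) ∧ p y = p x := by
  unfold Rc at hy
  induction hy with
  | refl => exact ⟨h, hd, rfl⟩
  | @tail y z _ hyz ih =>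
    have := L2 hC ih.1 ih.2.1 (y := z) ⟨hyz.1, rfl, by rw [ih.2.2]; exact hyz.2.2⟩
    exact ⟨this.1, this.2, hyz.2.2⟩

/-- a good state: minimal with a low free vertex -/
def Good (G : SimpleGraph V) (k : ℕ) (x : V) (p : V → Bool) : Prop :=
  Mn G k x p ∧ dg G x = k - 1

theorem Good.flip {x : V} {p : V → Bool} (h : Good G k x p) : Good G k x (fl x p) :=
  ⟨h.1.flip, h.2⟩

theorem Good.move (hC : Ctx G k) {x y : V} {p : V → Bool} (h : Good G k x p) {i : Bool}
    (hi : p x = i) (hy : Rc G (fun v => p v = i) x y) (hl : dg G y = k - 1) : Good G k y p := by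
  subst hi
  exact ⟨(L4 hC h.1 (L3 hC h.1 h.2) hy).1, hl⟩

theorem Good.deg (hC : Ctx G k) {x y : V} {p : V → Bool} (h : Good G k x p) {i : Bool}
    (hi : p x = i) (hy : Rc G (fun v => p v = i) x y) : dg (Hd G p i) y = rr k i := by
  subst hi
  have := (L4 hC h.1 (L3 hC h.1 h.2) hy)
  rw [this.2.2] at this
  exact this.2.1

theorem exists_good (hC : Ctx G k) (x0 : V) : ∃ x p, Good G k x p := by
  classical
  have h6 := hC.k6
  have hv : ∃ p, Valid G k x0 p := by
    obtain ⟨c, hc⟩ := hC.crit x0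
    refine ⟨fun v => decide (2 ≤ c v), ?_⟩
    intro i
    cases i
    · refine ⟨fun v => if c v < 2 then c v else 0, ?_, ?_⟩
      · intro v; simp only [rr]; split_ifs <;> simp_all
      · intro u v huv hu hv
        have := hc.2 u v huv.1 hu hv
        have a := huv.2.1
        have b := huv.2.2
        simp at a b
        simp [a, b, this]
    · refine ⟨fun v => c v - 2, ?_, ?_⟩
      · intro v
        have := hc.1 v
        simp only [rr, if_true]; omega
      · intro u v huv hu hv
        have := hc.2 u v huv.1 hu hv
        have a := huv.2.1
        have b := huv.2.2
        simp at a b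
        dsimp only
        omega
  obtain ⟨p0, hv⟩ := hv
  have hmin : ∃ x p, Mn G k x p := by
    have hex : ∃ n, ∃ x p, Valid G k x p ∧ Phi G x p = n := ⟨_, x0, p0, hv, rfl⟩
    obtain ⟨x, p, h1, h2⟩ := Nat.find_spec hex
    refine ⟨x, p, h1, ?_⟩
    intro y q hq
    rw [h2]
    exact Nat.find_min' hex ⟨y, q, hq, rfl⟩
  obtain ⟨x, p, hm⟩ := hmin
  rcases hC.deg x with hl | hh
  · exact ⟨x, p, hm, hl⟩
  · have : ∃ p, Mn G k x p ∧ dg (Hd G p (p x)) x = rr k (p x) := by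
      have a := L1 hC hm.1
      have b := L1 hC hm.flip.1
      have c := dg_split (G := G) x p
      have d := rr_sum hC (p x)
      by_cases e : dg (Hd G p (p x)) x = rr k (p x)
      · exact ⟨p, hm, e⟩
      · refine ⟨fl x p, hm.flip, ?_⟩
        rw [fl_self] at *
        omega
    obtain ⟨p, hm, hd⟩ := this
    have hpos : 0 < rr k (p x) := by
      unfold rr; split_ifs <;> omega
    have : (nb (Hd G p (p x)) x).Nonempty := by
      rw [← Finset.card_pos]; unfold dg at hd; omega
    obtain ⟨y, hy⟩ := this
    rw [mem_nb] at hy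
    refine ⟨y, p, (L2 hC hm hd hy).1, ?_⟩
    rcases hC.ind x y hy.1 with h | h
    · omega
    · exact h

end
end KK

namespace KK
section
variable {V : Type*} [Fintype V] {G : SimpleGraph V} {k : ℕ}

theorem Rc.memc {p : V → Bool} {i : Bool} {x y : V} (h : Rc G (fun v => p v = i) x y)
    (hx : p x = i) : p y = i := Rc.mem (A := fun v => p v = i) h hx

theorem Rc.refl' {A : V → Prop} {u : V} : Rc G A u u := Relation.ReflTransGen.refl

theorem Rc.step {A : V → Prop} {u v w : V} (h : Rc G A u v) (hvw : G.Adj v w) (hv : A v)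
    (hw : A w) : Rc G A u w := Relation.ReflTransGen.tail h ⟨hvw, hv, hw⟩

theorem Rc.trans' {A : V → Prop} {u v w : V} (h : Rc G A u v) (h2 : Rc G A v w) : Rc G A u w :=
  Relation.ReflTransGen.trans h h2

theorem Rc.closed {A S : V → Prop} {u v : V} (h : Rc G A u v) (hu : S u)
    (hS : ∀ a b, S a → G.Adj a b → A a → A b → S b) : S v := by
  unfold Rc at h
  induction h with
  | refl => exact hu
  | @tail a b _ hab ih => exact hS a b ih hab.1 hab.2.1 hab.2.2

/-- the component graph -/
def Hc (G : SimpleGraph V) (A : V → Prop) (x : V) : SimpleGraph V where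
  Adj u v := KG G A u v ∧ Rc G A x u
  symm := ⟨fun _ _ h => ⟨⟨h.1.1.symm, h.1.2.2, h.1.2.1⟩, Rc.step h.2 h.1.1 h.1.2.1 h.1.2.2⟩⟩
  loopless := ⟨fun _ h => G.loopless.irrefl _ h.1.1⟩

theorem Good.nbr_adj (hC : Ctx G k) {x : V} {p : V → Bool} (h : Good G k x p) (hx : p x = true)
    {y : V} (hy : Rc G (fun v => p v = true) x y) {v1 v2 : V} (h1 : G.Adj y v1) (h2 : G.Adj y v2)
    (hv1 : p v1 = true) (hv2 : p v2 = true) (h12 : v1 ≠ v2) : G.Adj v1 v2 := by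
  classical
  have hpy : p y = true := Rc.memc hy hx
  have h6 := hC.k6
  have hm : Mn G k y p := (L4 hC h.1 (L3 hC h.1 h.2) (by rw [hx]; exact hy)).1
  obtain ⟨c, hc⟩ := hm.1 true
  have hno : NoCol (Hc G (fun v => p v = true) x) (k - 3) := by
    rintro ⟨c', h1, h2⟩
    have := nocolx hC h.1.1
    rw [hx] at this
    obtain ⟨c, hc⟩ := h.1.1 true
    refine this ⟨fun v => if Rc G (fun v => p v = true) x v then c' v else c v, ?_, ?_⟩
    · intro v
      dsimp only
      split_ifs
      · exact h1 v
      · exact hc.1 v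
    · intro u v huv
      have e : Rc G (fun v => p v = true) x u ↔ Rc G (fun v => p v = true) x v :=
        ⟨fun h => Rc.step h huv.1 huv.2.1 huv.2.2, fun h => Rc.step h huv.1.symm huv.2.2 huv.2.1⟩
      dsimp only
      split_ifs with a b b
      · exact h2 u v ⟨huv, a⟩
      · exact absurd (e.1 a) b
      · exact absurd (e.2 b) a
      · refine hc.2 u v huv ?_ ?_
        · rintro rfl; exact a Rc.refl'
        · rintro rfl; exact b Rc.refl'
  have hdg : ∀ v, dg (Hc G (fun v => p v = true) x) v ≤ k - 3 := by
    intro v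
    by_cases hv : Rc G (fun v => p v = true) x v
    · have := h.deg hC hx hv
      rw [show rr k true = k - 3 by simp [rr]] at this
      rw [← this]
      unfold dg
      apply Finset.card_le_card
      intro w hw
      rw [mem_nb] at *
      exact hw.1
    · have : nb (Hc G (fun v => p v = true) x) v = ∅ := by
        ext w
        simp only [mem_nb, Finset.notMem_empty, iff_false]
        exact fun h => hv h.2
      simp [dg, this]
  have hok : Ok (Hc G (fun v => p v = true) x) (k - 3) y c :=
    ⟨hc.1, fun u v huv => hc.2 u v huv.1⟩
  exact (B7 (by omega) hno hdg hok ⟨⟨h1, hpy, hv1⟩, hy⟩ ⟨⟨h2, hpy, hv2⟩, hy⟩ h12).1.1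

theorem Good.clique (hC : Ctx G k) {x : V} {p : V → Bool} (h : Good G k x p) (hx : p x = true)
    {y z : V} (hy : Rc G (fun v => p v = true) x y) (hz : Rc G (fun v => p v = true) x z)
    (hyz : y ≠ z) : G.Adj y z := by
  have hyz' : Rc G (fun v => p v = true) y z := hy.symm'.trans' hz
  have key : (z = y ∨ G.Adj y z) ∧ Rc G (fun v => p v = true) x z := by
    refine Rc.closed (S := fun z => (z = y ∨ G.Adj y z) ∧ Rc G (fun v => p v = true) x z)
      hyz' ⟨Or.inl rfl, hy⟩ ?_
    rintro a b ⟨ha, hxa⟩ hab ha1 hb1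
    refine ⟨?_, hxa.step hab ha1 hb1⟩
    rcases ha with rfl | ha
    · exact Or.inr hab
    · by_cases hb : b = y
      · exact Or.inl hb
      · right
        exact h.nbr_adj hC hx hxa ha.symm hab (Rc.memc hy hx) hb1 (Ne.symm hb)
  rcases key.1 with e | e
  · exact absurd e.symm hyz
  · exact e

theorem Good.kempe (hC : Ctx G k) {x : V} {p : V → Bool} (h : Good G k x p) (hx : p x = false)
    {u w : V} (hu : G.Adj x u) (hw : G.Adj x w) (hpu : p u = false) (hpw : p w = false) :
    Rc G (fun v => fl x p v = false) u w := by
  by_cases huw : u = w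
  · subst huw; exact Rc.refl'
  obtain ⟨c, hc⟩ := h.1.1 false
  have hno := nocolx hC h.1.1
  have hd := L3 hC h.1 h.2
  rw [hx] at hno hd
  have hne : c u ≠ c w := fun e => huw (B2 hno hc hd.le ⟨hu, hx, hpu⟩ ⟨hw, hx, hpw⟩ e)
  have := B5 hno hc hd.le hne (u := u) (w := w) ⟨hu, hx, hpu⟩ ⟨hw, hx, hpw⟩ rfl rfl
  refine Relation.ReflTransGen.mono (r := KG (Hd G p false) (Cm x c (c u) (c w)))
    (p := KG G (fun v => fl x p v = false)) ?_ _ _ this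
  rintro a b ⟨h1, h2, h3⟩
  exact ⟨h1.1, by dsimp only; rw [fl_ne h2.1]; exact h1.2.1,
    by dsimp only; rw [fl_ne h3.1]; exact h1.2.2⟩

theorem Good.lowpair (hC : Ctx G k) {x : V} {p : V → Bool} (h : Good G k x p) (hx : p x = false) :
    ∃ u w, Rc G (fun v => p v = false) x u ∧ G.Adj u w ∧ p u = false ∧ p w = false ∧
      dg G u = k - 1 ∧ dg G w = k - 1 := by
  classical
  by_contra hcon
  push Not at hcon
  have h6 := hC.k6
  have hno := nocolx hC h.1.1
  rw [hx] at hno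
  obtain ⟨c, hc⟩ := h.1.1 false
  refine hno ⟨fun v => if Rc G (fun v => p v = false) x v then
    (if dg G v = k - 1 then 0 else 1) else c v, ?_, ?_⟩
  · intro v
    have := hc.1 v
    dsimp only
    rw [show rr k false = 2 by simp [rr]] at *
    split_ifs <;> omega
  · intro u v huv
    have e : Rc G (fun v => p v = false) x u ↔ Rc G (fun v => p v = false) x v :=
      ⟨fun h => Rc.step h huv.1 huv.2.1 huv.2.2, fun h => Rc.step h huv.1.symm huv.2.2 huv.2.1⟩
    dsimp only
    by_cases a : Rc G (fun v => p v = false) x u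
    · rw [if_pos a, if_pos (e.1 a)]
      have h1 := hcon u v a huv.1 huv.2.1 huv.2.2
      have h2 := hC.ind u v huv.1
      split_ifs <;> simp_all
    · have b : ¬ Rc G (fun v => p v = false) x v := fun hh => a (e.2 hh)
      rw [if_neg a, if_neg b]
      refine hc.2 u v huv ?_ ?_
      · rintro rfl; exact a Rc.refl'
      · rintro rfl; exact b Rc.refl'

theorem Good.two (hC : Ctx G k) {x y : V} {p : V → Bool} (h : Good G k x p) (hx : p x = false)
    (hy : Rc G (fun v => p v = false) x y) {a b c : V} (ha : G.Adj y a) (hb : G.Adj y b)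
    (hc : G.Adj y c) (hpa : p a = false) (hpb : p b = false) (hpc : p c = false) :
    a = b ∨ a = c ∨ b = c := by
  classical
  by_contra hcon
  push Not at hcon
  have h1 := h.deg hC hx hy
  have hpy : p y = false := Rc.memc hy hx
  have : ({a, b, c} : Finset V) ⊆ nb (Hd G p false) y := by
    intro v hv
    simp only [Finset.mem_insert, Finset.mem_singleton] at hv
    rw [mem_nb, Hd_adj]
    rcases hv with rfl | rfl | rfl
    · exact ⟨ha, hpy, hpa⟩
    · exact ⟨hb, hpy, hpb⟩
    · exact ⟨hc, hpy, hpc⟩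
  have := Finset.card_le_card this
  rw [Finset.card_eq_three.2 ⟨a, b, c, hcon.1, hcon.2.1, hcon.2.2, rfl⟩] at this
  unfold dg at h1
  rw [h1] at this
  simp [rr] at this

theorem Good.second (hC : Ctx G k) {x y : V} {p : V → Bool} (h : Good G k x p) (hx : p x = false)
    (hy : Rc G (fun v => p v = false) x y) (a : V) :
    ∃ b, b ≠ a ∧ G.Adj y b ∧ p b = false := by
  classical
  have h1 := h.deg hC hx hy
  have : 1 < (nb (Hd G p false) y).card := by
    unfold dg at h1; rw [h1]; simp [rr]
  obtain ⟨b, hb, hba⟩ := Finset.exists_mem_ne this a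
  rw [mem_nb, Hd_adj] at hb
  exact ⟨b, hba, hb.1, hb.2.2⟩

theorem L8 (hC : Ctx G k) (Q : Finset V) (hQ : Q.card = k) {e b : V} (he : e ∈ Q) (hb : b ∈ Q)
    (heb : e ≠ b) (hadj : ∀ u ∈ Q, ∀ v ∈ Q, u ≠ v → ¬ (u = e ∧ v = b) → ¬ (u = b ∧ v = e) →
      G.Adj u v) (hlow : ∀ v ∈ Q, v ≠ e → v ≠ b → dg G v = k - 1) (hdeb : ¬ G.Adj e b) : False := by
  classical
  have h6 := hC.k6
  have hQ' : ((Q.erase e).erase b).card = k - 2 := by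
    rw [Finset.card_erase_of_mem (by simp [hb, heb.symm]), Finset.card_erase_of_mem he, hQ]; omega
  obtain ⟨x, hx⟩ : ((Q.erase e).erase b).Nonempty := by rw [← Finset.card_pos]; omega
  obtain ⟨c, hc⟩ := hC.crit x
  have hxQ : x ∈ Q := by simp at hx; exact hx.2.2
  have hout : ∀ v, (v = e ∨ v = b) → (nb G v \ Q).card ≤ 2 := by
    intro v hv
    have h1 : dg G v ≤ k := by rcases hC.deg v with h | h <;> omega
    have h2 : (Q.erase e).erase b ⊆ nb G v ∩ Q := by
      intro w hw
      simp only [Finset.mem_erase] at hw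
      rw [Finset.mem_inter, mem_nb]
      refine ⟨?_, hw.2.2⟩
      rcases hv with rfl | rfl
      · exact hadj _ he _ hw.2.2 (Ne.symm hw.2.1) (by tauto) (by tauto)
      · exact hadj _ hb _ hw.2.2 (Ne.symm hw.1) (by tauto) (by tauto)
    have h3 := Finset.card_le_card h2
    have h4 := Finset.card_sdiff_add_card_inter (nb G v) Q
    unfold dg at h1
    omega
  have : ∃ m ∈ Finset.range (k - 1), m ∉ ((nb G e \ Q) ∪ (nb G b \ Q)).image c := by
    apply Finset.exists_mem_notMem_of_card_lt_card
    refine lt_of_le_of_lt Finset.card_image_le ?_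
    refine lt_of_le_of_lt (Finset.card_union_le _ _) ?_
    have := hout e (Or.inl rfl)
    have := hout b (Or.inr rfl)
    rw [Finset.card_range]
    omega
  obtain ⟨m, hm, hm'⟩ := this
  have hme : ∀ v, (v = e ∨ v = b) → ∀ w, G.Adj v w → w ∉ Q → c w ≠ m := by
    intro v hv w hvw hw hcw
    apply hm'
    rw [Finset.mem_image]
    refine ⟨w, ?_, hcw⟩
    simp only [Finset.mem_union, Finset.mem_sdiff, mem_nb]
    rcases hv with rfl | rfl
    · exact Or.inl ⟨hvw, hw⟩
    · exact Or.inr ⟨hvw, hw⟩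
  have hin : ∀ v ∈ Q, v ≠ e → v ≠ b → ∀ w, G.Adj v w → w ∈ Q := by
    intro v hv hve hvb w hvw
    have h1 : Q.erase v ⊆ nb G v := by
      intro w hw
      rw [Finset.mem_erase] at hw
      rw [mem_nb]
      exact hadj v hv w hw.2 (Ne.symm hw.1) (by tauto) (by tauto)
    have h2 := Finset.eq_of_subset_of_card_le h1 (by
      have := hlow v hv hve hvb
      unfold dg at this
      rw [this, Finset.card_erase_of_mem hv, hQ])
    have : w ∈ nb G v := mem_nb.2 hvw
    rw [← h2] at this
    exact Finset.mem_of_mem_erase this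
  have hcard : ((Q.erase e).erase b).card = ((Finset.range (k - 1)).erase m).card := by
    rw [hQ', Finset.card_erase_of_mem hm, Finset.card_range]; omega
  let f := Finset.equivOfCardEq hcard
  have hmem : ∀ v, v ∈ (Q.erase e).erase b ↔ v ∈ Q ∧ v ≠ e ∧ v ≠ b := by
    intro v; simp only [Finset.mem_erase]; tauto
  let g : V → ℕ := fun v => if h : v ∈ (Q.erase e).erase b then (f ⟨v, h⟩ : ℕ)
    else if v = e ∨ v = b then m else c v
  have g1 : ∀ v, (h : v ∈ (Q.erase e).erase b) → g v = f ⟨v, h⟩ := fun v h => by simp only [g, dif_pos h]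
  have g1' : ∀ v, (h : v ∈ (Q.erase e).erase b) → g v < k - 1 ∧ g v ≠ m := fun v h => by
    rw [g1 v h]
    have := (f ⟨v, h⟩).2
    rw [Finset.mem_erase, Finset.mem_range] at this
    exact ⟨this.2, this.1⟩
  have g2 : ∀ v, v = e ∨ v = b → g v = m := fun v h => by
    have h1 : v ∉ (Q.erase e).erase b := by rw [hmem]; tauto
    simp only [g, dif_neg h1, if_pos h]
  have g3 : ∀ v, v ∉ Q → g v = c v := fun v h => by
    have h1 : v ∉ (Q.erase e).erase b := by rw [hmem]; tauto
    have h2 : ¬ (v = e ∨ v = b) := by rintro (rfl | rfl) <;> contradiction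
    simp only [g, dif_neg h1, if_neg h2]
  have hcases : ∀ v, v ∈ (Q.erase e).erase b ∨ (v = e ∨ v = b) ∨ v ∉ Q := by
    intro v; rw [hmem]; tauto
  have hxn : ∀ v, v ∉ Q → v ≠ x := by rintro v hv rfl; exact hv hxQ
  refine hC.nocol ⟨g, ?_, ?_⟩
  · intro v
    rcases hcases v with h | h | h
    · exact (g1' v h).1
    · rw [g2 v h]; simpa using hm
    · rw [g3 v h]; exact hc.1 v
  · intro u v huv
    rcases hcases u with h | h | h
    · rcases hcases v with h' | h' | h'
      · rw [g1 u h, g1 v h']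
        intro hh
        have := f.injective (Subtype.ext hh)
        simp only [Subtype.mk.injEq] at this
        exact huv.ne this
      · rw [g2 v h']; exact (g1' u h).2
      · rw [hmem] at h
        exact absurd (hin u h.1 h.2.1 h.2.2 v huv) h'
    · rcases hcases v with h' | h' | h'
      · rw [g2 u h]; exact (g1' v h').2.symm
      · exfalso
        rcases h with rfl | rfl <;> rcases h' with rfl | rfl
        · exact huv.ne rfl
        · exact hdeb huv
        · exact hdeb huv.symm
        · exact huv.ne rfl
      · rw [g2 u h, g3 v h']; exact (hme u h v huv h').symm
    · rcases hcases v with h' | h' | h'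
      · rw [hmem] at h'
        exact absurd (hin v h'.1 h'.2.1 h'.2.2 u huv.symm) h
      · rw [g2 v h', g3 u h]; exact (hme v h' u huv.symm h)
      · rw [g3 v h', g3 u h]
        exact hc.2 u v huv (hxn u h) (hxn v h')

end
end KK

namespace KK
section
variable {V : Type*} [Fintype V] {G : SimpleGraph V} {k : ℕ}

theorem fl_true {x v : V} {p : V → Bool} (hx : p x = false) (h : p v = true) :
    fl x p v = true := by
  have : v ≠ x := by rintro rfl; rw [hx] at h; cases h
  rwa [fl_ne this]

theorem fl_false {x v : V} {p : V → Bool} (hx : p x = true) (h : p v = false) :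
    fl x p v = false := by
  have : v ≠ x := by rintro rfl; rw [hx] at h; cases h
  rwa [fl_ne this]

theorem of_fl_false {x v : V} {p : V → Bool} (hx : p x = false) (h : fl x p v = false) :
    p v = false ∧ v ≠ x := by
  have : v ≠ x := by rintro rfl; rw [fl_self, hx] at h; cases h
  rw [fl_ne this] at h
  exact ⟨h, this⟩

theorem of_fl_true {x v : V} {p : V → Bool} (hx : p x = true) (h : fl x p v = true) :
    p v = true ∧ v ≠ x := by
  have : v ≠ x := by rintro rfl; rw [fl_self, hx] at h; cases h
  rw [fl_ne this] at h
  exact ⟨h, this⟩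

theorem ne_of_tf {u v : V} {p : V → Bool} (hu : p u = true) (hv : p v = false) : u ≠ v := by
  rintro rfl; rw [hu] at hv; cases hv

theorem Good.adj_all (hC : Ctx G k) {a : V} {p : V → Bool} (h : Good G k a p) (ha : p a = false)
    {z d : V} (haz : G.Adj a z) (hz : p z = true) (hzd : Rc G (fun v => p v = true) z d) :
    G.Adj a d := by
  have hfa : fl a p a = true := by rw [fl_self, ha]; rfl
  have h1 : Rc G (fun v => fl a p v = true) z d := hzd.mono (fun v hv => fl_true ha hv)
  have h2 : Rc G (fun v => fl a p v = true) a z := Rc.refl'.step haz hfa (fl_true ha hz)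
  exact h.flip.clique hC hfa Rc.refl' (h2.trans' h1) (ne_of_tf (hzd.memc hz) ha).symm

theorem E1 (hC : Ctx G k) {x : V} {p : V → Bool} (h : Good G k x p) (hx : p x = false)
    {a d : V} (hd : Rc G (fun v => fl x p v = true) x d) (hdl : dg G d = k - 1) (hdx : d ≠ x)
    (ha : Rc G (fun v => p v = false) x a) (hax : a ≠ x) (had : G.Adj a d) : G.Adj a x := by
  by_contra hn
  have hfx : fl x p x = true := by rw [fl_self, hx]; rfl
  have hfd : fl x p d = true := hd.memc hfx
  have hpd : p d = true := by rwa [fl_ne hdx] at hfd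
  have hg : Good G k d (fl d (fl x p)) := (h.flip.move hC hfx hd hdl).flip
  have hPd : fl d (fl x p) d = false := by rw [fl_self, hfd]; rfl
  have hP : ∀ v, p v = false → v ≠ x → fl d (fl x p) v = false := by
    intro v hv hvx
    apply fl_false hfd
    rwa [fl_ne hvx]
  have hpa := ha.memc hx
  have hPa := hP a hpa hax
  obtain ⟨b1, _, hb1, hb1'⟩ := h.second hC hx ha x
  obtain ⟨b2, hb2b, hb2, hb2'⟩ := h.second hC hx ha b1
  have hb1x : b1 ≠ x := by rintro rfl; exact hn hb1
  have hb2x : b2 ≠ x := by rintro rfl; exact hn hb2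
  rcases hg.two hC hPd (y := a) (Rc.refl'.step had.symm hPd hPa) had hb1 hb2 hPd
    (hP _ hb1' hb1x) (hP _ hb2' hb2x) with e | e | e
  · exact ne_of_tf hpd hb1' e
  · exact ne_of_tf hpd hb2' e
  · exact hb2b e.symm

theorem E2 (hC : Ctx G k) {x : V} {p : V → Bool} (h : Good G k x p) (hx : p x = false)
    {a d : V} (hd : Rc G (fun v => fl x p v = true) x d) (hdl : dg G d = k - 1) (hdx : d ≠ x)
    (ha : Rc G (fun v => p v = false) x a) (hal : dg G a = k - 1) (hax : a ≠ x)
    (had : G.Adj a d) : ∃ e, e ≠ a ∧ e ≠ x ∧ Rc G (fun v => p v = false) x e ∧ G.Adj d e ∧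
      G.Adj a x ∧ G.Adj e x ∧ G.Adj e a := by
  have hfx : fl x p x = true := by rw [fl_self, hx]; rfl
  have hfd : fl x p d = true := hd.memc hfx
  have hpd : p d = true := by rwa [fl_ne hdx] at hfd
  have hg : Good G k d (fl d (fl x p)) := (h.flip.move hC hfx hd hdl).flip
  have hPd : fl d (fl x p) d = false := by rw [fl_self, hfd]; rfl
  have hpa := ha.memc hx
  have hPa : fl d (fl x p) a = false := by
    apply fl_false hfd; rwa [fl_ne hax]
  obtain ⟨e, hea, hde, hPe⟩ := hg.second hC hPd Rc.refl' a
  have hed : e ≠ d := hde.ne'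
  have hfe : fl x p e = false := by rwa [fl_ne hed] at hPe
  have hpe := of_fl_false hx hfe
  have hk := hg.kempe hC hPd had.symm hde hPa hPe
  rw [fl_fl] at hk
  have hk' : Rc G (fun v => p v = false) a e := hk.mono (fun v hv => (of_fl_false hx hv).1)
  have hxe := ha.trans' hk'
  have hga : Good G k a p := h.move hC hx ha hal
  have hfa : fl a p a = true := by rw [fl_self, hpa]; rfl
  exact ⟨e, hea, hpe.2, hxe, hde, E1 hC h hx hd hdl hdx ha hax had,
    E1 hC h hx hd hdl hdx hxe hpe.2 hde.symm,
    E1 hC hga hpa (Rc.refl'.step had hfa (fl_true hpa hpd)) hdl had.ne' hk' hea hde.symm⟩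

theorem Claim1 (hC : Ctx G k) {x : V} {p : V → Bool} (h : Good G k x p) (hx : p x = false)
    {a z : V} (ha : Rc G (fun v => p v = false) x a) (hal : dg G a = k - 1) (hax : a ≠ x)
    (hz : Rc G (fun v => fl x p v = true) x z) (hzx : z ≠ x) (haz : G.Adj a z) : False := by
  classical
  have h6 := hC.k6
  have hfx : fl x p x = true := by rw [fl_self, hx]; rfl
  have hpa := ha.memc hx
  set N := nb (Hd G (fl x p) true) x with hN
  have hNc : N.card = k - 3 := by
    have := h.flip.deg hC hfx Rc.refl'
    simpa [dg, rr] using this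
  have mN : ∀ d, d ∈ N ↔ G.Adj x d ∧ p d = true := by
    intro d
    rw [hN, mem_nb, Hd_adj]
    constructor
    · rintro ⟨h1, _, h3⟩
      rw [fl_ne h1.ne'] at h3
      exact ⟨h1, h3⟩
    · rintro ⟨h1, h3⟩
      exact ⟨h1, hfx, by rwa [fl_ne h1.ne']⟩
  have RN : ∀ d, d ∈ N → Rc G (fun v => fl x p v = true) x d := by
    intro d hd
    rw [mN] at hd
    exact Rc.refl'.step hd.1 hfx (fl_true hx hd.2)
  have NN : ∀ d ∈ N, ∀ d' ∈ N, d ≠ d' → G.Adj d d' := fun d hd d' hd' hdd =>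
    h.flip.clique hC hfx (RN d hd) (RN d' hd') hdd
  have hzN : z ∈ N := by
    rw [mN]
    refine ⟨h.flip.clique hC hfx Rc.refl' hz hzx.symm, ?_⟩
    have := hz.memc hfx
    rwa [fl_ne hzx] at this
  have hga : Good G k a p := h.move hC hx ha hal
  have all : ∀ b, Good G k b p → p b = false → ∀ z ∈ N, G.Adj b z → ∀ d ∈ N, G.Adj b d := by
    intro b hb hpb z hzN haz d hd
    by_cases hdz : z = d
    · subst hdz; exact haz
    · exact hb.adj_all hC hpb haz ((mN z).1 hzN).2
        (Rc.refl'.step (NN z hzN d hd hdz) ((mN z).1 hzN).2 ((mN d).1 hd).2)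
  have aN := all a hga hpa z hzN haz
  have hE : ∀ d ∈ N, dg G d = k - 1 → _ := fun d hd hdl =>
    E2 hC h hx (RN d hd) hdl ((mN d).1 hd).1.ne' ha hal hax (aN d hd)
  obtain ⟨d0, hd0, hd0l⟩ : ∃ d ∈ N, dg G d = k - 1 := by
    obtain ⟨d1, h1, d2, h2, h12⟩ := Finset.one_lt_card.1 (show 1 < N.card by omega)
    rcases hC.ind d1 d2 (NN _ h1 _ h2 h12) with e | e
    · exact ⟨_, h1, e⟩
    · exact ⟨_, h2, e⟩
  obtain ⟨e, hea, hex, hRe, hd0e, hax', hex', hea'⟩ := hE d0 hd0 hd0l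
  have hpe := hRe.memc hx
  have eN : ∀ d ∈ N, dg G d = k - 1 → G.Adj d e := by
    intro d hd hdl
    obtain ⟨e', hea2, hex2, hRe2, hd0e2, hax2, hex2', hea2'⟩ := hE d hd hdl
    rcases h.two hC hx Rc.refl' hax'.symm hex'.symm hex2'.symm hpa hpe (hRe2.memc hx) with q | q | q
    · exact absurd q.symm hea
    · exact absurd q.symm hea2
    · rw [q]; exact hd0e2
  let Q := insert x (insert a (insert e N))
  have eNn : e ∉ N := fun hh => ne_of_tf ((mN e).1 hh).2 hpe rfl
  have aNn : a ∉ N := fun hh => ne_of_tf ((mN a).1 hh).2 hpa rfl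
  have xNn : x ∉ N := fun hh => ne_of_tf ((mN x).1 hh).2 hx rfl
  have hQ : Q.card = k := by
    simp only [Q]
    rw [Finset.card_insert_of_notMem, Finset.card_insert_of_notMem, Finset.card_insert_of_notMem eNn,
      hNc]
    · omega
    · simp [hea.symm, aNn]
    · simp [hax.symm, hex.symm, xNn]
  have mQ : ∀ v, v ∈ Q ↔ v = x ∨ v = a ∨ v = e ∨ v ∈ N := by
    intro v; simp [Q]
  have adjQ : ∀ u ∈ Q, ∀ v ∈ Q, u ≠ v → (u = e → v ∈ N → G.Adj e v) →
      (v = e → u ∈ N → G.Adj e u) → G.Adj u v := by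
    intro u hu v hv huv g1 g2
    rw [mQ] at hu hv
    rcases hu with hu | hu | hu | hu <;> rcases hv with hv | hv | hv | hv
    · exact absurd (hu.trans hv.symm) huv
    · rw [hu, hv]; exact hax'.symm
    · rw [hu, hv]; exact hex'.symm
    · rw [hu]; exact ((mN v).1 hv).1
    · rw [hu, hv]; exact hax'
    · exact absurd (hu.trans hv.symm) huv
    · rw [hu, hv]; exact hea'.symm
    · rw [hu]; exact aN v hv
    · rw [hu, hv]; exact hex'
    · rw [hu, hv]; exact hea'
    · exact absurd (hu.trans hv.symm) huv
    · rw [hu]; exact g1 hu hv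
    · rw [hv]; exact ((mN u).1 hu).1.symm
    · rw [hv]; exact (aN u hu).symm
    · rw [hv]; exact (g2 hv hu).symm
    · exact NN u hu v hv huv
  have hex : ∃ d ∈ N, ¬ G.Adj e d := by
    by_contra hcon
    push Not at hcon
    obtain ⟨u, hu, v, hv, huv, hn⟩ := hC.noclq Q hQ
    exact hn (adjQ u hu v hv huv (fun _ hv => hcon v hv) (fun _ hv => hcon u hv))
  obtain ⟨d, hd, hed⟩ := hex
  have hdh : dg G d ≠ k - 1 := fun hh => hed (eN d hd hh).symm
  have hNl : ∀ d' ∈ N, d' ≠ d → dg G d' = k - 1 := by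
    intro d' hd' hdd
    rcases hC.ind d' d (NN _ hd' _ hd hdd) with q | q
    · exact q
    · exact absurd q hdh
  refine L8 hC Q hQ (e := e) (b := d) (by simp [Q]) (by simp [Q, hd]) (fun q => eNn (q ▸ hd)) ?_ ?_ hed
  · intro u hu v hv huv n1 n2
    refine adjQ u hu v hv huv (fun q hv => ?_) (fun q hu => ?_)
    · exact (eN v hv (hNl v hv (fun q2 => n1 ⟨q, q2⟩))).symm
    · exact (eN u hu (hNl u hu (fun q2 => n2 ⟨q2, q⟩))).symm
  · intro v hv hve hvd
    rw [mQ] at hv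
    rcases hv with hv | hv | hv | hv
    · rw [hv]; exact h.2
    · rw [hv]; exact hal
    · exact absurd hv hve
    · exact hNl v hv hvd

end
end KK

namespace KK
section
variable {V : Type*} [Fintype V] {G : SimpleGraph V} {k : ℕ}

/-- a low vertex of the clique component, avoiding a given vertex -/
theorem Good.lowD (hC : Ctx G k) {x : V} {p : V → Bool} (h : Good G k x p) (hx : p x = true)
    (a : V) : ∃ b, b ≠ a ∧ b ≠ x ∧ dg G b = k - 1 ∧ Rc G (fun v => p v = true) x b := by
  classical
  have h6 := hC.k6
  have hc : (nb (Hd G p true) x).card = k - 3 := by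
    have := h.deg hC hx Rc.refl'
    simpa [dg, rr] using this
  have hc2 : 1 < ((nb (Hd G p true) x).erase a).card := by
    have := Finset.pred_card_le_card_erase (s := nb (Hd G p true) x) (a := a)
    omega
  have hR : ∀ d ∈ (nb (Hd G p true) x).erase a,
      d ≠ a ∧ d ≠ x ∧ Rc G (fun v => p v = true) x d := by
    intro d hd
    rw [Finset.mem_erase, mem_nb, Hd_adj] at hd
    exact ⟨hd.1, hd.2.1.ne', Rc.refl'.step hd.2.1 hx hd.2.2.2⟩
  obtain ⟨d1, h1, d2, h2, h12⟩ := Finset.one_lt_card.1 hc2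
  have g1 := hR d1 h1
  have g2 := hR d2 h2
  rcases hC.ind d1 d2 (h.clique hC hx g1.2.2 g2.2.2 h12) with e | e
  · exact ⟨d1, g1.1, g1.2.1, e, g1.2.2⟩
  · exact ⟨d2, g2.1, g2.2.1, e, g2.2.2⟩

/-- one step of the walk -/
def Stp (G : SimpleGraph V) (k : ℕ) (a : V) (q : V → Bool) (b a1 : V) (q1 : V → Bool) : Prop :=
  b ≠ a ∧ dg G b = k - 1 ∧ Rc G (fun v => fl a q v = true) a b ∧ q1 = fl b (fl a q) ∧
  Rc G (fun v => q1 v = false) b a1 ∧ a1 ≠ b ∧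
  ∃ a', G.Adj a1 a' ∧ q1 a' = false ∧ dg G a' = k - 1

theorem exists_step (hC : Ctx G k) {a : V} {q : V → Bool} (h : Good G k a q) (ha : q a = false) :
    ∃ b a1 q1, Good G k a1 q1 ∧ q1 a1 = false ∧ Stp G k a q b a1 q1 := by
  have hfa : fl a q a = true := by rw [fl_self, ha]; rfl
  obtain ⟨b, _, hba, hbl, hb⟩ := h.flip.lowD hC hfa a
  have hfb := hb.memc hfa
  have hg : Good G k b (fl b (fl a q)) := (h.flip.move hC hfa hb hbl).flip
  have hgb : fl b (fl a q) b = false := by rw [fl_self, hfb]; rfl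
  obtain ⟨u, w, hu, huw, hqu, hqw, hul, hwl⟩ := hg.lowpair hC hgb
  have hw := hu.step huw hqu hqw
  by_cases hub : u = b
  · refine ⟨b, w, _, hg.move hC hgb hw hwl, hqw, hba, hbl, hb, rfl, hw, ?_, u, huw.symm, hqu, hul⟩
    rw [← hub]; exact huw.ne'
  · exact ⟨b, u, _, hg.move hC hgb hu hul, hqu, hba, hbl, hb, rfl, hu, hub, w, huw, hqw, hwl⟩

/-- the infinite walk -/
structure Wk (G : SimpleGraph V) (k : ℕ) (a b : ℕ → V) (q : ℕ → V → Bool) : Prop where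
  good : ∀ t, Good G k (a t) (q t)
  qa : ∀ t, q t (a t) = false
  stp : ∀ t, Stp G k (a t) (q t) (b t) (a (t + 1)) (q (t + 1))

theorem exists_walk (hC : Ctx G k) (x0 : V) : ∃ a b q, Wk G k a b q := by
  obtain ⟨x, p, h⟩ := exists_good hC x0
  have hs0 : ∃ s : V × (V → Bool), Good G k s.1 s.2 ∧ s.2 s.1 = false := by
    cases hp : p x
    · exact ⟨(x, p), h, hp⟩
    · exact ⟨(x, fl x p), h.flip, by simp [fl_self, hp]⟩
  obtain ⟨s0, hs0⟩ := hs0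
  have hst : ∀ s : {s : V × (V → Bool) // Good G k s.1 s.2 ∧ s.2 s.1 = false},
      ∃ b : V, ∃ s' : {s : V × (V → Bool) // Good G k s.1 s.2 ∧ s.2 s.1 = false},
        Stp G k s.1.1 s.1.2 b s'.1.1 s'.1.2 := by
    rintro ⟨⟨a, q⟩, h1, h2⟩
    obtain ⟨b, a1, q1, g1, g2, g3⟩ := exists_step hC h1 h2
    exact ⟨b, ⟨(a1, q1), g1, g2⟩, g3⟩
  choose f g hfg using hst
  let s : ℕ → {s : V × (V → Bool) // Good G k s.1 s.2 ∧ s.2 s.1 = false} :=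
    fun n => Nat.rec ⟨s0, hs0⟩ (fun _ s => g s) n
  exact ⟨fun t => (s t).1.1, fun t => f (s t), fun t => (s t).1.2,
    fun t => (s t).2.1, fun t => (s t).2.2, fun t => hfg (s t)⟩

theorem cut {x z : V} {p : V → Bool} (h : Rc G (fun v => p v = false) z x)
    (hzx : z ≠ x) (hz : p z = false) :
    ∃ n, G.Adj x n ∧ p n = false ∧ Rc G (fun v => fl x p v = false) z n := by
  have : (∃ n, G.Adj x n ∧ p n = false ∧ Rc G (fun v => fl x p v = false) z n) ∨
      (x ≠ x ∧ Rc G (fun v => fl x p v = false) z x) := by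
    refine Rc.closed (S := fun v =>
      (∃ n, G.Adj x n ∧ p n = false ∧ Rc G (fun v => fl x p v = false) z n) ∨
      (v ≠ x ∧ Rc G (fun v => fl x p v = false) z v)) h (Or.inr ⟨hzx, Rc.refl'⟩) ?_
    rintro a b (h1 | h1) hab ha hb
    · exact Or.inl h1
    · by_cases hbx : b = x
      · subst hbx
        exact Or.inl ⟨a, hab.symm, ha, h1.2⟩
      · exact Or.inr ⟨hbx, h1.2.step hab (by rwa [fl_ne h1.1])
          (by rwa [fl_ne hbx])⟩
  rcases this with h1 | h1
  · exact h1
  · exact absurd rfl h1.1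

section walk
variable {a b : ℕ → V} {q : ℕ → V → Bool}

/-- the intermediate partition -/
noncomputable def PP (a : ℕ → V) (q : ℕ → V → Bool) (t : ℕ) : V → Bool := fl (a t) (q t)

/-- the clique component -/
def DD (G : SimpleGraph V) (a : ℕ → V) (q : ℕ → V → Bool) (t : ℕ) (v : V) : Prop :=
  Rc G (fun v => PP a q t v = true) (a t) v

/-- the cycle component -/
def CC (G : SimpleGraph V) (b : ℕ → V) (q : ℕ → V → Bool) (t : ℕ) (v : V) : Prop :=
  Rc G (fun v => q (t + 1) v = false) (b t) v

theorem Wk.Pa (W : Wk G k a b q) (t : ℕ) : PP a q t (a t) = true := by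
  unfold PP; rw [fl_self, W.qa]; rfl

theorem Wk.bD (W : Wk G k a b q) (t : ℕ) : DD G a q t (b t) := (W.stp t).2.2.1

theorem Wk.Pb (W : Wk G k a b q) (t : ℕ) : PP a q t (b t) = true := (W.bD t).memc (W.Pa t)

theorem Wk.ba (W : Wk G k a b q) (t : ℕ) : b t ≠ a t := (W.stp t).1

theorem Wk.q_succ (W : Wk G k a b q) (t : ℕ) : q (t + 1) = fl (b t) (PP a q t) :=
  (W.stp t).2.2.2.1

theorem Wk.qb (W : Wk G k a b q) (t : ℕ) : q (t + 1) (b t) = false := by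
  rw [W.q_succ, fl_self, W.Pb]; rfl

theorem Wk.aC (W : Wk G k a b q) (t : ℕ) : CC G b q t (a (t + 1)) := (W.stp t).2.2.2.2.1

theorem Wk.ab (W : Wk G k a b q) (t : ℕ) : a (t + 1) ≠ b t := (W.stp t).2.2.2.2.2.1

theorem Wk.P_true (W : Wk G k a b q) {t : ℕ} {v : V} (h : q t v = true) : PP a q t v = true :=
  fl_true (W.qa t) h

theorem Wk.of_P_false (W : Wk G k a b q) {t : ℕ} {v : V} (h : PP a q t v = false) :
    q t v = false ∧ v ≠ a t := of_fl_false (W.qa t) h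

theorem Wk.q_false (W : Wk G k a b q) {t : ℕ} {v : V} (h : PP a q t v = false) :
    q (t + 1) v = false := by
  rw [W.q_succ]; exact fl_false (W.Pb t) h

theorem Wk.of_q_true (W : Wk G k a b q) {t : ℕ} {v : V} (h : q (t + 1) v = true) :
    PP a q t v = true ∧ v ≠ b t := by
  rw [W.q_succ] at h; exact of_fl_true (W.Pb t) h

theorem Wk.P_ne (_ : Wk G k a b q) {t : ℕ} {v : V} (h : v ≠ a t) : PP a q t v = q t v :=
  fl_ne h

theorem Wk.q_ne (W : Wk G k a b q) {t : ℕ} {v : V} (h : v ≠ b t) :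
    q (t + 1) v = PP a q t v := by
  rw [W.q_succ]; exact fl_ne h

theorem Wk.DP (W : Wk G k a b q) {t : ℕ} {v : V} (h : DD G a q t v) : PP a q t v = true :=
  h.memc (W.Pa t)

theorem Wk.Cq (W : Wk G k a b q) {t : ℕ} {v : V} (h : CC G b q t v) : q (t + 1) v = false :=
  h.memc (W.qb t)

theorem Wk.goodb (hC : Ctx G k) (W : Wk G k a b q) (t : ℕ) : Good G k (b t) (q (t + 1)) := by
  rw [W.q_succ]
  exact ((W.good t).flip.move hC (W.Pa t) (W.bD t) (W.stp t).2.1).flip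

theorem Wk.Dclq (hC : Ctx G k) (W : Wk G k a b q) {t : ℕ} {u v : V} (hu : DD G a q t u)
    (hv : DD G a q t v) (huv : u ≠ v) : G.Adj u v :=
  (W.good t).flip.clique hC (W.Pa t) hu hv huv

theorem Wk.T1 (W : Wk G k a b q) {s : ℕ} {v : V} (hs : q s v = false) {t : ℕ} (hst : s ≤ t)
    (ht : q t v = true) : ∃ u, s ≤ u ∧ u < t ∧ v = a u := by
  induction t, hst using Nat.le_induction with
  | base => rw [hs] at ht; cases ht
  | succ t hst ih =>
    by_cases hv : v = a t
    · exact ⟨t, hst, by omega, hv⟩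
    · have := (W.of_q_true ht).1
      rw [W.P_ne hv] at this
      obtain ⟨u, h1, h2, h3⟩ := ih this
      exact ⟨u, h1, by omega, h3⟩

theorem Wk.T2 (W : Wk G k a b q) {s : ℕ} {v : V} (hs : q s v = true) {t : ℕ} (hst : s ≤ t)
    (ht : q t v = false) : ∃ u, s ≤ u ∧ u < t ∧ v = b u := by
  induction t, hst using Nat.le_induction with
  | base => rw [hs] at ht; cases ht
  | succ t hst ih =>
    by_cases hv : v = b t
    · exact ⟨t, hst, by omega, hv⟩
    · rw [W.q_ne hv] at ht
      obtain ⟨u, h1, h2, h3⟩ := ih (W.of_P_false ht).1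
      exact ⟨u, h1, by omega, h3⟩

/-- disjointness of the first `m` members of a sequence of sets -/
def Dj (D : ℕ → V → Prop) (m : ℕ) : Prop :=
  ∀ i j, i < m → j < m → ∀ v, D i v → D j v → i = j

theorem Wk.ab_ne (W : Wk G k a b q) {m n : ℕ} (hD : Dj (DD G a q) m) (hCd : Dj (CC G b q) n)
    {s t : ℕ} (hs : s ≤ n) (ht : t < m) : a s ≠ b t := by
  intro h
  rcases Nat.lt_or_ge t s with h1 | h1
  · obtain ⟨s, rfl⟩ : ∃ s', s = s' + 1 := ⟨s - 1, by omega⟩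
    have := hCd s t (by omega) (by omega) _ (W.aC s) (by rw [h]; exact Rc.refl')
    subst this
    exact W.ab _ h
  · have := hD s t (by omega) (by omega) (a s) Rc.refl' (by rw [h]; exact W.bD t)
    subst this
    exact W.ba _ h.symm

theorem Wk.stepD (hC : Ctx G k) (W : Wk G k a b q) {m : ℕ} (hD : Dj (DD G a q) m)
    (hCd : Dj (CC G b q) m) {j : ℕ} (hj : j < m) {z : V} (hz : DD G a q m z)
    (hzj : DD G a q j z) : False := by
  have abn : ∀ s t, s ≤ m → t < m → a s ≠ b t := fun s t hs ht => W.ab_ne hD hCd hs ht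
  obtain ⟨m', rfl⟩ : ∃ m', m = m' + 1 := ⟨m - 1, by omega⟩
  have hPam : PP a q j (a (m' + 1)) = false := by
    by_contra hcon
    rw [Bool.not_eq_false] at hcon
    have h1 : q (j + 1) (a (m' + 1)) = true := by
      rw [W.q_ne (abn _ _ le_rfl hj)]; exact hcon
    obtain ⟨u, h2, h3, h4⟩ := W.T2 h1 (by omega) (W.qa (m' + 1))
    exact abn _ _ le_rfl h3 h4
  have hDa : ∀ v, DD G a q j v → v ≠ a (m' + 1) := fun v hv => ne_of_tf (W.DP hv) hPam
  have hstay : ∀ v, DD G a q j v → v ≠ b j → q (m' + 1) v = true := by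
    intro v hv hvb
    by_contra hcon
    rw [Bool.not_eq_true] at hcon
    have h1 : q (j + 1) v = true := by rw [W.q_ne hvb]; exact W.DP hv
    obtain ⟨u, h2, h3, h4⟩ := W.T2 h1 (by omega) hcon
    have := hD j u hj h3 v hv (by rw [h4]; exact W.bD u)
    omega
  have hqbj : q (m' + 1) (b j) = false := by
    by_contra hcon
    rw [Bool.not_eq_false] at hcon
    obtain ⟨u, h2, h3, h4⟩ := W.T1 (W.qb j) (by omega) hcon
    exact abn u j (by omega) hj h4.symm
  have hPbj : PP a q (m' + 1) (b j) = false := by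
    rw [W.P_ne (abn _ _ le_rfl hj).symm]; exact hqbj
  have hzb : z ≠ b j := ne_of_tf (W.DP hz) hPbj
  have hDm : ∀ v, DD G a q j v → v ≠ b j → DD G a q (m' + 1) v := by
    intro v hv hvb
    by_cases hvz : z = v
    · subst hvz; exact hz
    · exact Rc.step hz (W.Dclq hC hzj hv hvz) (W.DP hz) (W.P_true (hstay v hv hvb))
  have hadj : ∀ v, DD G a q j v → v ≠ b j → G.Adj (a (m' + 1)) v := fun v hv hvb =>
    W.Dclq hC Rc.refl' (hDm v hv hvb) (hDa v hv).symm
  by_cases hjm : j = m'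
  · subst hjm
    refine Claim1 hC (W.goodb hC j) (W.qb j) (W.aC j) (W.good _).2 (W.ab j) (z := z) ?_ hzb
      (hadj z hzj hzb)
    rw [W.q_succ, fl_fl]
    exact (W.bD j).symm'.trans' hzj
  · obtain ⟨b', hb'b, hb'a, hb'l, hb'D⟩ := (W.good j).flip.lowD hC (W.Pa j) (b j)
    have hb'D : DD G a q j b' := hb'D
    have hPb' := W.DP hb'D
    have hg : Good G k b' (fl b' (PP a q j)) := ((W.good j).flip.move hC (W.Pa j) hb'D hb'l).flip
    have hBb' : fl b' (PP a q j) b' = false := by rw [fl_self, hPb']; rfl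
    have hBa := fl_false hPb' hPam
    obtain ⟨e, hea, hb'e, hBe⟩ := hg.second hC hBb' Rc.refl' (a (m' + 1))
    have hk := hg.kempe hC hBb' (hadj b' hb'D hb'b).symm hb'e hBa hBe
    rw [fl_fl] at hk
    have heC : CC G b q m' e := by
      refine Rc.closed (S := fun w => CC G b q m' w) hk (W.aC m') ?_
      intro w w2 hw hww hPw hPw2
      by_cases hq : q (m' + 1) w2 = false
      · exact Rc.step hw hww (W.Cq hw) hq
      · exfalso
        rw [Bool.not_eq_false] at hq
        obtain ⟨s, h1, h2, h3⟩ := W.T1 (W.q_false hPw2) (by omega) hq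
        obtain ⟨s, rfl⟩ : ∃ s', s = s' + 1 := ⟨s - 1, by omega⟩
        by_cases hqw : q (s + 1) w = false
        · have := hCd s m' (by omega) (by omega) w
            (Rc.step (W.aC s) (by rw [← h3]; exact hww.symm) (W.qa _) hqw) hw
          omega
        · rw [Bool.not_eq_false] at hqw
          obtain ⟨u, g1, g2, g3⟩ := W.T1 (W.q_false hPw) h1 hqw
          obtain ⟨u, rfl⟩ : ∃ s', u = s' + 1 := ⟨u - 1, by omega⟩
          have := hCd u m' (by omega) (by omega) w (by rw [g3]; exact W.aC u) hw
          omega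
    have hPe : PP a q (m' + 1) e = false := by rw [W.P_ne hea]; exact W.Cq heC
    have hb'm := hDm b' hb'D hb'b
    have hPmb' := W.DP hb'm
    have hg2 : Good G k b' (fl b' (PP a q (m' + 1))) :=
      ((W.good (m' + 1)).flip.move hC (W.Pa (m' + 1)) hb'm hb'l).flip
    have hBb2 : fl b' (PP a q (m' + 1)) b' = false := by rw [fl_self, hPmb']; rfl
    have hk2 := hg2.kempe hC hBb2 hb'e (W.Dclq hC hb'D (W.bD j) hb'b) (fl_false hPmb' hPe)
      (fl_false hPmb' hPbj)
    rw [fl_fl] at hk2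
    have hk3 : Rc G (fun v => q (m' + 1) v = false) e (b j) :=
      hk2.mono (fun v hv => (W.of_P_false hv).1)
    exact hjm (hCd j m' hj (by omega) (b j) Rc.refl' (Rc.trans' heC hk3))

theorem Wk.stepC (hC : Ctx G k) (W : Wk G k a b q) {m : ℕ} (hD : Dj (DD G a q) (m + 1))
    (hCd : Dj (CC G b q) m) {j : ℕ} (hj : j < m) {z : V} (hz : CC G b q m z)
    (hzj : CC G b q j z) : False := by
  have abn : ∀ s t, s ≤ m → t ≤ m → a s ≠ b t :=
    fun s t hs ht => W.ab_ne hD hCd hs (by omega)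
  have LD : ∀ d, DD G a q m d → d ≠ a m → ∀ t ≤ m, q t d = true := by
    intro d hd hda t ht
    by_contra hcon
    rw [Bool.not_eq_true] at hcon
    have h1 : q m d = true := by rw [← W.P_ne hda]; exact W.DP hd
    obtain ⟨u, h2, h3, h4⟩ := W.T1 hcon ht h1
    have := hD m u (by omega) (by omega) d hd (by rw [h4]; exact Rc.refl')
    omega
  have hqbm := LD (b m) (W.bD m) (W.ba m)
  have hbC : ∀ v, CC G b q j v → v ≠ b m := fun v hv =>
    (ne_of_tf (hqbm (j + 1) (by omega)) (W.Cq hv)).symm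
  have hqa : q (m + 1) (a (j + 1)) = true := by
    by_contra hcon
    rw [Bool.not_eq_true] at hcon
    have h1 : q (j + 2) (a (j + 1)) = true := by
      rw [W.q_ne (t := j + 1) (abn _ _ (by omega) (by omega))]; exact W.Pa _
    obtain ⟨u, h2, h3, h4⟩ := W.T2 h1 (by omega) hcon
    exact abn _ _ (by omega) (by omega) h4
  have hza : z ≠ a (j + 1) := (ne_of_tf hqa (W.Cq hz)).symm
  have hstay : ∀ v, CC G b q j v → v ≠ a (j + 1) → ∀ t, j + 1 ≤ t → t ≤ m + 1 → q t v = false := by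
    intro v hv hva t h1 h2
    by_contra hcon
    rw [Bool.not_eq_false] at hcon
    obtain ⟨u, g1, g2, g3⟩ := W.T1 (W.Cq hv) h1 hcon
    obtain ⟨u, rfl⟩ : ∃ s', u = s' + 1 := ⟨u - 1, by omega⟩
    have := hCd u j (by omega) (by omega) v (by rw [g3]; exact W.aC u) hv
    subst this
    exact hva g3
  have hclosed : ∀ w w2, CC G b q j w → w ≠ a (j + 1) → G.Adj w w2 → PP a q m w2 = false →
      CC G b q j w2 ∧ w2 ≠ a (j + 1) := by
    intro w w2 hw hwa hww hP
    have hq2 : q (j + 1) w2 = false := by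
      by_contra hcon
      rw [Bool.not_eq_false] at hcon
      obtain ⟨s, h1, h2, h3⟩ := W.T2 hcon (by omega) (W.of_P_false hP).1
      have := hCd s j (by omega) (by omega) w (Rc.step (Rc.refl' (u := b s))
        (by rw [← h3]; exact hww.symm) (W.qb s) (hstay w hw hwa (s + 1) (by omega) (by omega))) hw
      omega
    exact ⟨Rc.step hw hww (W.Cq hw) hq2, (ne_of_tf (W.of_q_true hqa).1 hP).symm⟩
  obtain ⟨a', haa, hqa', hal⟩ := (W.stp j).2.2.2.2.2.2
  have ha'C : CC G b q j a' := Rc.step (W.aC j) haa (W.qa _) hqa'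
  have ha'a : a' ≠ a (j + 1) := haa.ne'
  have hgj : Good G k (a (j + 1)) (q (j + 1)) := W.good _
  have ha'm : CC G b q m a' := by
    obtain ⟨n, hn, hqn, hzn⟩ := cut (x := a (j + 1)) (p := q (j + 1)) (z := z)
      (hzj.symm'.trans' (W.aC j)) hza (W.Cq hzj)
    have hk := hgj.kempe hC (W.qa _) hn haa hqn hqa'
    have hza' := hzn.trans' hk
    have : Rc G (fun v => q (m + 1) v = false) z a' ∧ CC G b q j a' := by
      refine Rc.closed (S := fun v => Rc G (fun v => q (m + 1) v = false) z v ∧ CC G b q j v)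
        hza' ⟨Rc.refl', hzj⟩ ?_
      rintro v v2 ⟨h1, h2⟩ hvv hv hv2
      have g1 := of_fl_false (W.qa _) hv
      have g2 := of_fl_false (W.qa _) hv2
      have hC2 : CC G b q j v2 := Rc.step h2 hvv g1.1 g2.1
      exact ⟨h1.step hvv (hstay v h2 g1.2 _ (by omega) le_rfl)
        (hstay v2 hC2 g2.2 _ (by omega) le_rfl), hC2⟩
    exact Rc.trans' hz this.1
  have hab : G.Adj a' (b m) := by
    by_contra hn
    obtain ⟨n1, _, h1, h1'⟩ := (W.goodb hC m).second hC (W.qb m) ha'm (b m)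
    obtain ⟨n2, h12, h2, h2'⟩ := (W.goodb hC m).second hC (W.qb m) ha'm n1
    have key : ∀ n, G.Adj a' n → q (m + 1) n = false → CC G b q j n ∧ n ≠ a (j + 1) := by
      intro n hn1 hn2
      refine hclosed a' n ha'C ha'a hn1 ?_
      rw [← W.q_ne (by rintro rfl; exact hn hn1)]; exact hn2
    have k1 := key n1 h1 h1'
    have k2 := key n2 h2 h2'
    rcases (W.goodb hC j).two hC (W.qb j) ha'C haa.symm h1 h2 (W.qa _) (W.Cq k1.1) (W.Cq k2.1)
      with e | e | e
    · exact k1.2 e.symm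
    · exact k2.2 e.symm
    · exact h12 e.symm
  have hga' : Good G k a' (q (j + 1)) := (W.goodb hC j).move hC (W.qb j) ha'C hal
  by_cases hjm : j + 1 = m
  · subst hjm
    exact Claim1 hC (W.good (j + 1)) (W.qa _) (a := a') (z := b (j + 1))
      (Rc.refl'.step haa (W.qa _) hqa') hal ha'a (W.bD _) (W.ba _) hab
  · obtain ⟨d, hdb, hda, _, hdD⟩ := (W.good m).flip.lowD hC (W.Pa m) (b m)
    have hdD : DD G a q m d := hdD
    have hdj := LD d hdD hda (j + 1) (by omega)
    have had : G.Adj a' d := hga'.adj_all hC hqa' hab (hqbm (j + 1) (by omega))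
      (Rc.refl'.step (W.Dclq hC (W.bD m) hdD hdb.symm) (hqbm (j + 1) (by omega)) hdj)
    have hgm : Good G k a' (q (m + 1)) := (W.goodb hC m).move hC (W.qb m) ha'm hal
    have hqm := W.Cq ha'm
    have hfa : fl a' (q (m + 1)) a' = true := by rw [fl_self, hqm]; rfl
    have hdm : q (m + 1) d = true := by rw [W.q_ne hdb]; exact W.DP hdD
    have hne : a (j + 1) ≠ d := by
      intro e
      have := hD (j + 1) m (by omega) (by omega) d (by rw [← e]; exact Rc.refl') hdD
      omega
    have hadj : G.Adj (a (j + 1)) d := hgm.flip.clique hC hfa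
      (Rc.refl'.step haa.symm hfa (fl_true hqm hqa))
      (Rc.refl'.step had hfa (fl_true hqm hdm)) hne
    have := hD (j + 1) m (by omega) (by omega) d
      (Rc.step (Rc.refl' (u := a (j + 1))) hadj (W.Pa _) (W.P_true hdj)) hdD
    omega

theorem Dj.succ {D : ℕ → V → Prop} {m : ℕ} (h : Dj D m)
    (h2 : ∀ j < m, ∀ z, D m z → D j z → False) : Dj D (m + 1) := by
  intro i j hi hj v h1 h3
  rcases Nat.lt_or_ge i m with hi' | hi'
  · rcases Nat.lt_or_ge j m with hj' | hj'
    · exact h i j hi' hj' v h1 h3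
    · obtain rfl : j = m := by omega
      exact (h2 i hi' v h3 h1).elim
  · obtain rfl : i = m := by omega
    rcases Nat.lt_or_ge j i with hj' | hj'
    · exact (h2 j hj' v h1 h3).elim
    · omega

theorem Wk.disj (hC : Ctx G k) (W : Wk G k a b q) (m : ℕ) :
    Dj (DD G a q) m ∧ Dj (CC G b q) m := by
  induction m with
  | zero => exact ⟨fun i j hi => by omega, fun i j hi => by omega⟩
  | succ m ih =>
    have h1 := ih.1.succ (fun j hj z => W.stepD hC ih.1 ih.2 hj)
    exact ⟨h1, ih.2.succ (fun j hj z => W.stepC hC h1 ih.2 hj)⟩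

end walk

theorem Ctx.false (hC : Ctx G k) (x0 : V) : False := by
  obtain ⟨a, b, q, W⟩ := exists_walk hC x0
  have : Function.Injective a := by
    intro s t hst
    exact (W.disj hC (s + t + 1)).1 s t (by omega) (by omega) (a s) Rc.refl'
      (by rw [hst]; exact Rc.refl')
  exact not_injective_infinite_finite a this

end
end KK

namespace KK
section
variable {V : Type*} [Fintype V] {G : SimpleGraph V} {k : ℕ}

theorem col_iff {r : ℕ} : NoCol G r ↔ ¬ G.Colorable r := by
  unfold NoCol
  refine not_congr ⟨?_, ?_⟩
  · rintro ⟨c, h1, h2⟩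
    exact ⟨Coloring.mk (fun v => (⟨c v, h1 v⟩ : Fin r)) (fun {u v} huv h => h2 u v huv (by
      simpa using h))⟩
  · rintro ⟨c⟩
    exact ⟨fun v => (c v : ℕ), fun v => (c v).2, fun u v huv h => c.valid huv (Fin.ext h)⟩

theorem ok_of_col {r : ℕ} (hr : 0 < r) {x : V}
    (h : (G.induce ({x}ᶜ : Set V)).Colorable r) : ∃ c, Ok G r x c := by
  classical
  obtain ⟨c⟩ := h
  refine ⟨fun v => if h : v ∈ ({x}ᶜ : Set V) then (c ⟨v, h⟩ : ℕ) else 0, ?_, ?_⟩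
  · intro v
    dsimp only
    split_ifs
    · exact (c _).2
    · exact hr
  · intro u v huv hu hv
    have hu' : u ∈ ({x}ᶜ : Set V) := hu
    have hv' : v ∈ ({x}ᶜ : Set V) := hv
    simp only [dif_pos hu', dif_pos hv']
    intro h
    exact c.valid (v := ⟨u, hu'⟩) (w := ⟨v, hv'⟩) (by simpa using huv) (Fin.ext h)

theorem clique_iso (hcr : ∀ x, ∃ c, Ok G (k - 1) x c) (hk : 0 < k) (Q : Finset V) (hQ : Q.card = k)
    (hcl : ∀ u ∈ Q, ∀ v ∈ Q, u ≠ v → G.Adj u v) :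
    Nonempty (G ≃g (⊤ : SimpleGraph (Fin k))) := by
  classical
  have huniv : ∀ x, x ∈ Q := by
    intro x
    by_contra hx
    obtain ⟨c, h1, h2⟩ := hcr x
    obtain ⟨u, hu, v, hv, huv, hc⟩ := Finset.exists_ne_map_eq_of_card_lt_of_maps_to
      (s := Q) (t := Finset.range (k - 1)) (f := c) (by rw [Finset.card_range]; omega)
      (fun v _ => by simpa using h1 v)
    exact h2 u v (hcl u hu v hv huv) (by rintro rfl; exact hx hu) (by rintro rfl; exact hx hv) hc
  have hcard : Fintype.card V = k := by
    rw [← hQ, ← Finset.card_univ]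
    congr 1
    ext x; simp [huniv x]
  let e := Fintype.equivFinOfCardEq hcard
  refine ⟨⟨e, ?_⟩⟩
  intro u v
  rw [top_adj]
  constructor
  · intro h
    exact hcl u (huniv u) v (huniv v) (fun q => h (by rw [q]))
  · intro h q
    exact h.ne (e.injective q)

theorem main [DecidableRel G.Adj]
    (hk : G.chromaticNumber = k)
    (hcrit : ∀ v : V, (G.induce ({v}ᶜ : Set V)).chromaticNumber < G.chromaticNumber)
    (hχΔ : G.maxDegree ≤ k) (hΔ : 6 ≤ G.maxDegree)
    (hind : ∀ u v : V, k ≤ G.degree u → k ≤ G.degree v → ¬ G.Adj u v) :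
    Nonempty (G ≃g (⊤ : SimpleGraph (Fin k))) := by
  classical
  have hdg : ∀ v, dg G v = G.degree v := by
    intro v
    rw [dg, ← card_neighborFinset_eq_degree]
    congr 1
    ext w
    rw [mem_nb, mem_neighborFinset]
  have hno : NoCol G (k - 1) := by
    rw [col_iff]
    intro h
    have := chromaticNumber_le_iff_colorable.2 h
    rw [hk] at this
    have : k ≤ k - 1 := by exact_mod_cast this
    omega
  have hcr : ∀ x, ∃ c, Ok G (k - 1) x c := by
    intro x
    apply ok_of_col (by omega)
    apply chromaticNumber_le_iff_colorable.1
    have := hcrit x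
    rw [hk] at this
    have h2 : ((k : ℕ) : ℕ∞) = ((k - 1 : ℕ) : ℕ∞) + 1 := by
      have : k = k - 1 + 1 := by omega
      exact_mod_cast this
    rw [h2] at this
    exact Order.le_of_lt_add_one this
  have hlow : ∀ v, k - 1 ≤ dg G v := by
    intro v
    obtain ⟨c, hc⟩ := hcr v
    have := Finset.card_le_card_of_surjOn (s := nb G v) (t := Finset.range (k - 1)) c ?_
    · simpa [dg] using this
    · intro i hi
      obtain ⟨w, h1, h2⟩ := B1 hno hc (by simpa using hi : i < k - 1)
      exact ⟨w, by simpa [mem_nb] using h1, h2⟩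
  have hup : ∀ v, dg G v ≤ k := by
    intro v
    rw [hdg]
    exact (G.degree_le_maxDegree v).trans hχΔ
  have hne : Nonempty V := by
    by_contra hcon
    rw [not_nonempty_iff] at hcon
    have : G.maxDegree = 0 := by
      rw [← Nat.le_zero]
      exact G.maxDegree_le_of_forall_degree_le 0 (fun v => (hcon.false v).elim)
    omega
  obtain ⟨x⟩ := hne
  by_cases hq : ∃ Q : Finset V, Q.card = k ∧ ∀ u ∈ Q, ∀ v ∈ Q, u ≠ v → G.Adj u v
  · obtain ⟨Q, h1, h2⟩ := hq
    exact clique_iso hcr (by omega) Q h1 h2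
  · push Not at hq
    exfalso
    refine Ctx.false (G := G) (k := k) ⟨by omega, hno, hcr, fun v => ?_, fun u v huv => ?_, hq⟩ x
    · have := hlow v
      have := hup v
      omega
    · by_contra hcon
      push Not at hcon
      refine hind u v ?_ ?_ huv
      · rw [← hdg]; have := hlow u; omega
      · rw [← hdg]; have := hlow v; omega

end
end KK

/-- Corollary N: `K_{χ(G)}` is the only critical graph `G` with
`χ(G) ≥ Δ(G) ≥ 6` such that the set of vertices of degree at least
`χ(G)` is independent. -/
theorem stmt_1 {V : Type*} [Fintype V] [DecidableEq V] (G : SimpleGraph V)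
    [DecidableRel G.Adj] (k : ℕ)
    (hk : G.chromaticNumber = k)
    (hcrit : ∀ v : V, (G.induce ({v}ᶜ : Set V)).chromaticNumber < G.chromaticNumber)
    (hχΔ : G.maxDegree ≤ k) (hΔ : 6 ≤ G.maxDegree)
    (hind : ∀ u v : V, k ≤ G.degree u → k ≤ G.degree v → ¬ G.Adj u v) :
    Nonempty (G ≃g (⊤ : SimpleGraph (Fin k))) := by
  exact KK.main hk hcrit hχΔ hΔ hind
end
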